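/- There exists a constant C > 0 depending only on n and C₀ such that for all θ ∈ (0,1) and all r ≥ ε: ε^{n−2} r^{6−2n} ∫_{U_r} Σ_{a,b,c,d=1}^n Z_{abcd}² dx ≤ (C/θ) ∫_{B⁺_{2r}(0)∖B⁺_r(0)} Σ_{a,b,c=1}^n Q_{ab,c}² dx + θ ε^{n−2} Σ_{i,j=1}^{n−1} Σ_{1≤|α|≤d} h_{ij,α}² r^{2|α|+2−n}, where U_r = {x ∈ ℝⁿ : |x − (0,…,0,3r/2)| < r/4}. -/

import Mathlib

open MeasureTheory

/-!
The conformal Killing operator changes the linearized curvature only by Kulkarni–Nomizu products,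
so the linearized Weyl tensor of `H` equals that of `T = H - S`, and after multiplication by a power
of the distance to the pole of the bubble it is a first-order expression in `Q`. Integration by
parts therefore bounds it weakly by the energy `∫ ∑ Q²`. On the boundary, the conditions on `V`
turn `Q_{ij,n}` into a multiple of `∂ₙ H_{ij}` plus a pure trace, which `tr H = 0` eliminates, and
averaging over small half balls bounds `∂ₙ H_{ij}` there by the energy up to a small multiple of the
size of `H`.

A gauge-fixed `H` with vanishing linearized Weyl tensor and `∂ₙ H = 0` on the boundary is zero: its
restriction to the boundary is radial and conformally flat to first order, hence zero, and the
Gauss equation then determines all normal derivatives recursively. The functionals of `H` that the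
energy controls thus separate the points of a finite-dimensional space of polynomial tensors, so
they exhaust its dual and the energy controls all of `H`. A dilation reduces every radius to
`r = 1`, where `Z` is bounded by the coefficients of `H`.
-/

namespace ConformalGauge

open MvPolynomial
open scoped ContDiff

section EulerLaplace

lemma pderiv_pderiv_comm {σ R : Type*} [CommSemiring R] (i j : σ) (p : MvPolynomial σ R) :
    pderiv i (pderiv j p) = pderiv j (pderiv i p) := by
  classical
  ext m
  simp only [coeff_pderiv, Finsupp.add_apply, Finsupp.single_apply, add_right_comm m]
  rcases eq_or_ne i j with rfl | hij
  · rfl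
  · simp only [if_neg hij, if_neg hij.symm, add_zero, mul_right_comm]

lemma pderiv_X_mul {σ R : Type*} [DecidableEq σ] [CommSemiring R] (i j : σ) (p : MvPolynomial σ R) :
    pderiv j (X i * p) = (if i = j then p else 0) + X i * pderiv j p := by
  simp only [pderiv_mul, pderiv_X, Pi.single_apply, ite_mul, one_mul, zero_mul]

variable {σ : Type*}

/-- The Euler vector field `∑ xᵢ ∂ᵢ`, which acts on homogeneous polynomials as multiplication by
the degree. -/
noncomputable def euler : Derivation ℝ (MvPolynomial σ ℝ) (MvPolynomial σ ℝ) :=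
  mkDerivation ℝ X

lemma euler_X_mul (i : σ) (p : MvPolynomial σ ℝ) : euler (X i * p) = X i * euler p + X i * p := by
  rw [Derivation.leibniz, euler, mkDerivation_X, smul_eq_mul, smul_eq_mul, mul_comm p]

lemma coeff_euler (p : MvPolynomial σ ℝ) (m : σ →₀ ℕ) :
    coeff m (euler p) = (m.degree : ℝ) * coeff m p := by
  classical
  induction p using MvPolynomial.induction_on' with
  | monomial u a =>
    have euler_monomial : euler (monomial u a) = (u.degree : ℝ) • monomial u a := by
      rw [euler, mkDerivation_monomial, Finsupp.sum, Finsupp.degree_apply, Nat.cast_sum,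
        Finset.sum_smul, Finset.smul_sum]
      refine Finset.sum_congr rfl fun i hi ↦ ?_
      have one_le : 1 ≤ u i := Nat.one_le_iff_ne_zero.2 (Finsupp.mem_support_iff.1 hi)
      rw [X, smul_eq_mul, monomial_mul, mul_one, smul_monomial, smul_monomial, smul_eq_mul,
        smul_eq_mul, mul_comm, tsub_add_cancel_of_le (Finsupp.single_le_iff.2 one_le)]
    rw [euler_monomial, coeff_smul, smul_eq_mul, coeff_monomial]
    split_ifs with h <;> simp [h]
  | add p q hp hq => rw [map_add, coeff_add, hp, hq, coeff_add, mul_add]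

lemma eq_zero_of_euler_quadratic {a b c : ℝ} (ha : 0 ≤ a) (hb : 0 ≤ b) (hc : 0 < c)
    {p : MvPolynomial σ ℝ} (h : a • euler (euler p) + b • euler p + c • p = 0) : p = 0 := by
  ext m
  have coeff_eq := congrArg (coeff m) h
  simp only [coeff_add, coeff_smul, smul_eq_mul, coeff_euler, coeff_zero] at coeff_eq
  have factor_ne : a * (m.degree * m.degree) + b * m.degree + c ≠ 0 := by positivity
  refine (mul_eq_zero.1 ?_).resolve_left factor_ne
  linear_combination coeff_eq

lemma eq_zero_of_euler_add_self {p : MvPolynomial σ ℝ} (h : euler p + p = 0) : p = 0 :=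
  eq_zero_of_euler_quadratic le_rfl zero_le_one zero_lt_one
    (by rw [zero_smul, one_smul, one_smul, zero_add, h])

lemma pderiv_euler (j : σ) (p : MvPolynomial σ ℝ) :
    pderiv j (euler p) = euler (pderiv j p) + pderiv j p := by
  classical
  have bracket_eq : ⁅(pderiv j : Derivation ℝ (MvPolynomial σ ℝ) _), euler⁆ = pderiv j :=
    derivation_ext fun k ↦ by
      simp only [Derivation.commutator_apply, euler, mkDerivation_X, pderiv_X, Pi.single_apply,
        apply_ite (mkDerivation ℝ X), Derivation.map_one_eq_zero, map_zero, ite_self, sub_zero]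
  rw [← sub_eq_iff_eq_add', ← Derivation.commutator_apply, bracket_eq]

variable [Fintype σ]

lemma euler_eq_sum (p : MvPolynomial σ ℝ) : euler p = ∑ i, X i * pderiv i p := by
  classical
  induction p using MvPolynomial.induction_on with
  | C a => simp [euler]
  | add p q hp hq => simp only [map_add, hp, hq, mul_add, Finset.sum_add_distrib]
  | mul_X p j hp =>
    have X_mul_term (i : σ) : X i * pderiv i (p * X j)
        = X j * (X i * pderiv i p) + if j = i then X j * p else 0 := by
      rw [mul_comm p, pderiv_X_mul]
      split_ifs with h
      · rw [h]; ring
      · ring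
    have euler_X : euler (X j : MvPolynomial σ ℝ) = X j := mkDerivation_X _ _ _
    rw [Derivation.leibniz, euler_X, smul_eq_mul, smul_eq_mul, hp, Finset.mul_sum,
      Finset.sum_congr rfl fun i _ ↦ X_mul_term i, Finset.sum_add_distrib, Finset.sum_ite_eq,
      if_pos (Finset.mem_univ j)]
    ring

/-- The Laplacian `∑ ∂ᵢ∂ᵢ` on polynomials. -/
noncomputable def laplacian : MvPolynomial σ ℝ →ₗ[ℝ] MvPolynomial σ ℝ :=
  ∑ i, (pderiv i).toLinearMap ∘ₗ (pderiv i).toLinearMap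

lemma laplacian_apply (p : MvPolynomial σ ℝ) : laplacian p = ∑ i, pderiv i (pderiv i p) := by
  simp [laplacian]

variable (σ) in
/-- The polynomial `|x|² = ∑ xᵢ²`. -/
noncomputable def normSqPoly : MvPolynomial σ ℝ := ∑ i, X i * X i

lemma laplacian_euler (p : MvPolynomial σ ℝ) :
    laplacian (euler p) = euler (laplacian p) + 2 * laplacian p := by
  simp only [laplacian_apply, pderiv_euler, map_add, map_sum, Finset.sum_add_distrib]
  ring

lemma laplacian_X_mul (i : σ) (p : MvPolynomial σ ℝ) :
    laplacian (X i * p) = 2 * pderiv i p + X i * laplacian p := by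
  classical
  simp only [laplacian_apply, pderiv_X_mul, map_add, Finset.sum_add_distrib, Finset.mul_sum,
    apply_ite, map_zero]
  simp only [Finset.sum_ite_eq, Finset.mem_univ, if_true]
  ring

lemma laplacian_normSqPoly_mul (p : MvPolynomial σ ℝ) :
    laplacian (normSqPoly σ * p)
      = 2 * Fintype.card σ * p + 4 * euler p + normSqPoly σ * laplacian p := by
  classical
  have term (i : σ) : laplacian (X i * X i * p)
      = 2 * p + 4 * (X i * pderiv i p) + X i * X i * laplacian p := by
    rw [mul_assoc, laplacian_X_mul, laplacian_X_mul, pderiv_X_mul, if_pos rfl]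
    ring
  simp only [normSqPoly, Finset.sum_mul, map_sum, term, Finset.sum_add_distrib, euler_eq_sum,
    Finset.mul_sum, Finset.sum_const, Finset.card_univ, nsmul_eq_mul]
  ring

lemma coeff_laplacian_eq_zero {N : ℕ} {p : MvPolynomial σ ℝ}
    (hp : ∀ m : σ →₀ ℕ, N + 1 ≤ m.degree → coeff m p = 0) (m : σ →₀ ℕ) (hm : N ≤ m.degree) :
    coeff m (laplacian p) = 0 := by
  rw [laplacian_apply, coeff_sum]
  refine Finset.sum_eq_zero fun i _ ↦ ?_
  rw [coeff_pderiv, coeff_pderiv, hp, zero_mul, zero_mul]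
  simp only [map_add, Finsupp.degree_single]
  lia

/-- Applying the Laplacian to the equation yields an equation of the same form for `Δ s`, whose
degree is smaller. -/
lemma eq_zero_of_coeff_eq_zero_of_normSqPoly_mul_laplacian (N : ℕ) {a b c : ℝ} (ha : 0 ≤ a)
    (hb : 0 ≤ b) (hc : 0 < c) {s : MvPolynomial σ ℝ}
    (hs : ∀ m : σ →₀ ℕ, N ≤ m.degree → coeff m s = 0)
    (h : normSqPoly σ * laplacian s + (a • euler (euler s) + b • euler s + c • s) = 0) :
    s = 0 := by
  induction N generalizing a b c s with
  | zero => exact ext _ _ fun m ↦ by rw [hs m (Nat.zero_le _), coeff_zero]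
  | succ N ih =>
    have laplacian_eq_zero : laplacian s = 0 := by
      refine ih (b := 4 * a + b + 4) (c := 4 * a + 2 * b + c + 2 * Fintype.card σ) ha
        (by positivity) (by positivity) (coeff_laplacian_eq_zero hs) ?_
      have key := congrArg laplacian h
      simp only [map_add, map_smul, laplacian_normSqPoly_mul, laplacian_euler, map_zero] at key
      have euler_two_mul : euler (2 * laplacian s) = 2 * euler (laplacian s) := by
        rw [two_mul, map_add, two_mul]
      rw [euler_two_mul] at key
      simp only [smul_eq_C_mul, map_add, map_mul, map_ofNat, map_natCast] at key ⊢
      linear_combination key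
    rw [laplacian_eq_zero, mul_zero, zero_add] at h
    exact eq_zero_of_euler_quadratic ha hb hc h

lemma eq_zero_of_normSqPoly_mul_laplacian {a b c : ℝ} (ha : 0 ≤ a) (hb : 0 ≤ b) (hc : 0 < c)
    {s : MvPolynomial σ ℝ}
    (h : normSqPoly σ * laplacian s + (a • euler (euler s) + b • euler s + c • s) = 0) :
    s = 0 :=
  eq_zero_of_coeff_eq_zero_of_normSqPoly_mul_laplacian (s.totalDegree + 1) ha hb hc
    (fun m hm ↦ coeff_eq_zero_of_totalDegree_lt (by rw [← Finsupp.degree_apply]; lia)) h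

end EulerLaplace

section PolynomialTensors

variable {ι : Type*}

/-- Linearized Riemann tensor (up to a factor) of a polynomial perturbation `h` of the flat
metric. -/
noncomputable def linRiemann (h : ι → ι → MvPolynomial ι ℝ) (a b c d : ι) : MvPolynomial ι ℝ :=
  pderiv b (pderiv d (h a c)) - pderiv b (pderiv c (h a d))
    + pderiv a (pderiv c (h d b)) - pderiv a (pderiv d (h b c))

lemma pderiv_linRiemann_cyclic {h : ι → ι → MvPolynomial ι ℝ} (hsym : ∀ a b, h a b = h b a)
    (e a b c d : ι) :
    pderiv e (linRiemann h a b c d) + pderiv a (linRiemann h b e c d)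
      + pderiv b (linRiemann h e a c d) = 0 := by
  simp only [linRiemann, map_add, map_sub]
  rw [pderiv_pderiv_comm b a, pderiv_pderiv_comm b a, pderiv_pderiv_comm e a,
    pderiv_pderiv_comm e a, pderiv_pderiv_comm e b, pderiv_pderiv_comm e b, hsym d b, hsym d e,
    hsym d a]
  ring

lemma pderiv_mul_ite (e : ι) (p : MvPolynomial ι ℝ) (P : Prop) [Decidable P] :
    pderiv e (p * (if P then 1 else 0)) = pderiv e p * (if P then 1 else 0) := by
  split_ifs <;> simp

variable [DecidableEq ι]

/-- The Kulkarni–Nomizu product of `M` with the flat metric. -/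
def kulkarniNomizu {R : Type*} [CommRing R] (M : ι → ι → R) (a b c d : ι) : R :=
  M a c * (if b = d then 1 else 0) - M a d * (if b = c then 1 else 0)
    + M b d * (if a = c then 1 else 0) - M b c * (if a = d then 1 else 0)

lemma map_kulkarniNomizu_comp {κ R S F : Type*} [DecidableEq κ] [CommRing R] [CommRing S]
    [FunLike F R S] [AddMonoidHomClass F R S] (φ : F) {f : κ → ι} (hf : f.Injective)
    (M : ι → ι → R) (a b c d : κ) :
    φ (kulkarniNomizu M (f a) (f b) (f c) (f d))
      = kulkarniNomizu (fun i j ↦ φ (M (f i) (f j))) a b c d := by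
  simp only [kulkarniNomizu, map_add, map_sub, mul_ite, mul_one, mul_zero, apply_ite φ, map_zero,
    hf.eq_iff]

variable [Fintype ι]

lemma sum_kulkarniNomizu {R : Type*} [CommRing R] (M : ι → ι → R) (a c : ι) :
    ∑ b, kulkarniNomizu M a b c b
      = ((Fintype.card ι : R) - 2) * M a c + (∑ b, M b b) * (if a = c then 1 else 0) := by
  simp only [kulkarniNomizu, Finset.sum_sub_distrib, Finset.sum_add_distrib, ← Finset.sum_mul]
  simp only [mul_ite, mul_one, mul_zero, Finset.sum_ite_eq, Finset.sum_ite_eq', Finset.mem_univ,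
    if_true, Finset.sum_const, Finset.card_univ, nsmul_eq_mul]
  ring

lemma sum_sum_kulkarniNomizu {R : Type*} [CommRing R] (M : ι → ι → R) :
    ∑ a, ∑ b, kulkarniNomizu M a b a b = (2 * (Fintype.card ι : R) - 2) * ∑ b, M b b := by
  simp only [sum_kulkarniNomizu, Finset.sum_add_distrib, ← Finset.mul_sum, if_true, mul_one,
    Finset.sum_const, Finset.card_univ, nsmul_eq_mul]
  ring

section Mem

variable {R : Type*} [CommRing R] [Algebra ℝ R] {N : Submodule ℝ R} {M : ι → ι → R}

lemma mem_of_algebraMap_mul_mem {s : ℝ} (hs : s ≠ 0) {p : R} (h : algebraMap ℝ R s * p ∈ N) :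
    p ∈ N := by
  rwa [← Algebra.smul_def, Submodule.smul_mem_iff _ hs] at h

lemma trace_mem_of_kulkarniNomizu_mem (hι : 2 ≤ Fintype.card ι)
    (h : ∀ a b c d, kulkarniNomizu M a b c d ∈ N) : ∑ b, M b b ∈ N := by
  have two_le : (2 : ℝ) ≤ Fintype.card ι := mod_cast hι
  refine mem_of_algebraMap_mul_mem (s := 2 * Fintype.card ι - 2) (by linarith) ?_
  rw [map_sub, map_mul, map_ofNat, map_natCast, ← sum_sum_kulkarniNomizu]
  exact sum_mem fun a _ ↦ sum_mem fun b _ ↦ h a b a b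

lemma mem_of_kulkarniNomizu_mem (hι : 3 ≤ Fintype.card ι)
    (h : ∀ a b c d, kulkarniNomizu M a b c d ∈ N) (a c : ι) : M a c ∈ N := by
  have three_le : (3 : ℝ) ≤ Fintype.card ι := mod_cast hι
  have trace_mem : (∑ b, M b b) * (if a = c then 1 else 0) ∈ N := by
    split_ifs
    · simpa only [mul_one] using trace_mem_of_kulkarniNomizu_mem (by lia) h
    · simp only [mul_zero, zero_mem]
  refine mem_of_algebraMap_mul_mem (s := Fintype.card ι - 2) (by linarith) ?_
  rw [map_sub, map_ofNat, map_natCast, ← add_sub_cancel_right (_ * M a c), ← sum_kulkarniNomizu]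
  exact sub_mem (sum_mem fun b _ ↦ h a b c b) trace_mem

end Mem

lemma contracted_bianchi {h M : ι → ι → MvPolynomial ι ℝ} (hsym : ∀ a b, h a b = h b a)
    (hR : ∀ a b c d, linRiemann h a b c d = kulkarniNomizu M a b c d) (e a c : ι) :
    ((Fintype.card ι : MvPolynomial ι ℝ) - 3) * (pderiv e (M a c) - pderiv a (M e c))
      + (∑ b, (pderiv e (M b b) - pderiv b (M e b))) * (if a = c then 1 else 0)
      - (∑ b, (pderiv a (M b b) - pderiv b (M a b))) * (if e = c then 1 else 0) = 0 := by
  have bianchi : ∑ b, (pderiv e (linRiemann h a b c b) + pderiv a (linRiemann h b e c b)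
      + pderiv b (linRiemann h e a c b)) = 0 :=
    Finset.sum_eq_zero fun b _ ↦ pderiv_linRiemann_cyclic hsym e a b c b
  simp only [hR, kulkarniNomizu, map_add, map_sub, pderiv_mul_ite, Finset.sum_add_distrib,
    Finset.sum_sub_distrib, ← Finset.sum_mul] at bianchi
  simp only [mul_ite, mul_one, mul_zero, Finset.sum_ite_eq, Finset.sum_ite_eq', Finset.mem_univ,
    if_true, Finset.sum_const, Finset.card_univ, nsmul_eq_mul] at bianchi
  simp only [Finset.sum_sub_distrib, mul_ite, mul_one, mul_zero]
  by_cases hac : a = c <;> by_cases hec : e = c <;>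
    simp only [hac, hec, if_true, if_false] at bianchi ⊢ <;> linear_combination bianchi

/-- In dimension at least four, vanishing of the linearized Weyl tensor forces vanishing of the
linearized Cotton tensor. -/
lemma pderiv_comm_of_linRiemann_eq_kulkarniNomizu (hι : 4 ≤ Fintype.card ι)
    {h M : ι → ι → MvPolynomial ι ℝ} (hsym : ∀ a b, h a b = h b a)
    (hR : ∀ a b c d, linRiemann h a b c d = kulkarniNomizu M a b c d) (e a c : ι) :
    pderiv e (M a c) = pderiv a (M e c) := by
  have four_le : (4 : ℝ) ≤ Fintype.card ι := mod_cast hι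
  have bianchi := contracted_bianchi hsym hR
  have trace_part_eq_zero (e : ι) : ∑ b, (pderiv e (M b b) - pderiv b (M e b)) = 0 := by
    have trace := Finset.sum_congr rfl fun a (_ : a ∈ Finset.univ) ↦ bianchi e a a
    simp only [Finset.sum_add_distrib, Finset.sum_sub_distrib, ← Finset.mul_sum] at trace ⊢
    simp only [mul_ite, mul_one, mul_zero, Finset.sum_ite_eq, Finset.mem_univ, if_true,
      Finset.sum_const, Finset.card_univ, nsmul_eq_mul, smul_zero] at trace
    refine (Submodule.mem_bot ℝ).1
      (mem_of_algebraMap_mul_mem (s := 2 * Fintype.card ι - 4) (by linarith) ?_)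
    rw [map_sub, map_mul, map_natCast, map_ofNat, map_ofNat, Submodule.mem_bot]
    linear_combination trace
  refine sub_eq_zero.1 ((Submodule.mem_bot ℝ).1
    (mem_of_algebraMap_mul_mem (s := Fintype.card ι - 3) (by linarith) ?_))
  rw [map_sub, map_natCast, map_ofNat, Submodule.mem_bot]
  have := bianchi e a c
  rw [trace_part_eq_zero, trace_part_eq_zero] at this
  linear_combination this

end PolynomialTensors

section RadialFields

variable {ι : Type*} [Fintype ι] {v : ι → MvPolynomial ι ℝ}

lemma pderiv_sum_X_mul (v : ι → MvPolynomial ι ℝ) (k : ι) :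
    pderiv k (∑ b, X b * v b) = v k + ∑ b, X b * pderiv k (v b) := by
  classical
  simp only [map_sum, pderiv_X_mul, Finset.sum_add_distrib, Finset.sum_ite_eq', Finset.mem_univ,
    if_true]

lemma sum_X_mul_pderiv_of_radial (hv : ∑ b, X b * v b = 0) (k : ι) :
    ∑ b, X b * pderiv k (v b) = -v k := by
  have := pderiv_sum_X_mul v k
  rw [hv, map_zero] at this
  linear_combination -this

lemma sum_X_mul_pderiv_pderiv_of_radial (hv : ∑ b, X b * v b = 0) (k l : ι) :
    ∑ b, X b * pderiv l (pderiv k (v b)) = -pderiv l (v k) - pderiv k (v l) := by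
  have := pderiv_sum_X_mul (fun b ↦ pderiv k (v b)) l
  rw [sum_X_mul_pderiv_of_radial hv, map_neg] at this
  linear_combination -this

lemma sum_X_mul_laplacian_of_radial (hv : ∑ b, X b * v b = 0) :
    ∑ b, X b * laplacian (v b) = -2 * ∑ b, pderiv b (v b) := by
  have := congrArg laplacian hv
  simp only [map_sum, laplacian_X_mul, Finset.sum_add_distrib, ← Finset.mul_sum, map_zero] at this
  linear_combination this

lemma sum_X_mul_euler_of_radial (hv : ∑ b, X b * v b = 0) : ∑ b, X b * euler (v b) = 0 := by
  have euler_eq := congrArg euler hv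
  rwa [map_sum, Finset.sum_congr rfl fun b _ ↦ euler_X_mul b (v b), Finset.sum_add_distrib, hv,
    add_zero, map_zero] at euler_eq

lemma euler_add_self_of_closed (hv : ∀ j k, pderiv j (v k) = pderiv k (v j)) (j : ι) :
    euler (v j) + v j = pderiv j (∑ k, X k * v k) := by
  rw [pderiv_sum_X_mul, euler_eq_sum, add_comm]
  simp only [hv j]

lemma eq_zero_of_closed_of_radial (hv : ∀ j k, pderiv j (v k) = pderiv k (v j))
    (hx : ∑ k, X k * v k = 0) (j : ι) : v j = 0 :=
  eq_zero_of_euler_add_self (by rw [euler_add_self_of_closed hv, hx, map_zero])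

lemma laplacian_sum_X_mul_of_closed (hv : ∀ j k, pderiv j (v k) = pderiv k (v j)) :
    laplacian (∑ k, X k * v k) = euler (∑ j, pderiv j (v j)) + 2 * ∑ j, pderiv j (v j) := by
  rw [laplacian_apply]
  simp only [← euler_add_self_of_closed hv, map_add, pderiv_euler, Finset.sum_add_distrib,
    ← map_sum]
  ring

end RadialFields

section RadialTensors

variable {ι : Type*} [Fintype ι] {h B : ι → ι → MvPolynomial ι ℝ}

/-- The divergence of a polynomial `2`-tensor in its second slot. -/
noncomputable def tensorDiv (h : ι → ι → MvPolynomial ι ℝ) (a : ι) : MvPolynomial ι ℝ :=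
  ∑ b, pderiv b (h a b)

lemma sum_X_mul_tensorDiv_of_radial (hsym : ∀ a b, h a b = h b a) (htr : ∑ a, h a a = 0)
    (hx : ∀ a, ∑ b, X b * h a b = 0) : ∑ a, X a * tensorDiv h a = 0 := by
  simp only [tensorDiv, Finset.mul_sum]
  rw [Finset.sum_comm]
  calc ∑ b, ∑ a, X a * pderiv b (h a b) = ∑ b, -h b b :=
        Finset.sum_congr rfl fun b _ ↦ by
          simp only [hsym _ b, sum_X_mul_pderiv_of_radial (hx b)]
    _ = 0 := by rw [Finset.sum_neg_distrib, htr, neg_zero]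

lemma sum_linRiemann (hsym : ∀ a b, h a b = h b a) (htr : ∑ a, h a a = 0) (a c : ι) :
    ∑ b, linRiemann h a b c b
      = laplacian (h a c) - pderiv c (tensorDiv h a) - pderiv a (tensorDiv h c) := by
  have trace_term : ∑ b, pderiv a (pderiv c (h b b)) = 0 := by
    rw [← map_sum, ← map_sum, htr, map_zero, map_zero]
  simp only [linRiemann, Finset.sum_sub_distrib, Finset.sum_add_distrib, trace_term, add_zero,
    laplacian_apply, tensorDiv, map_sum, hsym c]
  simp only [pderiv_pderiv_comm _ c]

lemma sum_sum_X_mul_X_mul_linRiemann_of_radial (hsym : ∀ a b, h a b = h b a)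
    (htr : ∑ a, h a a = 0) (hx : ∀ a, ∑ b, X b * h a b = 0) :
    ∑ a, X a * ∑ c, X c * ∑ b, linRiemann h a b c b = 0 := by
  have div_radial := sum_X_mul_tensorDiv_of_radial hsym htr hx
  have inner_sum (a : ι) : ∑ c, X c * ∑ b, linRiemann h a b c b
      = -(tensorDiv h a + euler (tensorDiv h a)) := by
    have laplacian_term := sum_X_mul_laplacian_of_radial (hx a)
    simp only [sum_linRiemann hsym htr, mul_sub, Finset.sum_sub_distrib, laplacian_term,
      ← euler_eq_sum, sum_X_mul_pderiv_of_radial div_radial]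
    rw [tensorDiv]
    ring
  simp only [inner_sum, mul_neg, mul_add, Finset.sum_neg_distrib, Finset.sum_add_distrib,
    div_radial, sum_X_mul_euler_of_radial div_radial, add_zero, neg_zero]

lemma eq_zero_of_radial_of_linRiemann_eq_zero (hsym : ∀ a b, h a b = h b a)
    (hx : ∀ a, ∑ b, X b * h a b = 0) (hR : ∀ a b c d, linRiemann h a b c d = 0) (a b : ι) :
    h a b = 0 := by
  refine eq_zero_of_closed_of_radial (fun c d ↦ ?_) (hx a) b
  refine sub_eq_zero.1 (eq_zero_of_euler_add_self ?_)
  have contracted : ∑ e, X e * linRiemann h e a c d = 0 := by simp only [hR, mul_zero,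
    Finset.sum_const_zero]
  have second_order (p q r : ι) : ∑ e, X e * pderiv p (pderiv q (h e r))
      = -pderiv p (h r q) - pderiv q (h r p) := by
    simp only [hsym _ r, sum_X_mul_pderiv_pderiv_of_radial (hx r)]
  simp only [linRiemann, mul_sub, mul_add, Finset.sum_sub_distrib, Finset.sum_add_distrib,
    second_order, ← euler_eq_sum] at contracted
  rw [map_sub]
  rw [hsym d a, hsym c d] at contracted
  rw [hsym c a] at contracted
  linear_combination contracted

lemma pderiv_radial_contraction_of_codazzi (hB : ∀ a b, B a b = B b a)
    (hC : ∀ a b c, pderiv a (B b c) = pderiv b (B a c)) (j k : ι) :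
    pderiv j (∑ b, X b * B k b) = euler (B k j) + B k j :=
  (euler_add_self_of_closed (fun j l ↦ by rw [hB k l, hB k j, hC]) j).symm

/-- Eliminating the radial component from `(card ι - 2) B(x, x) + |x|² tr B = 0` by means of
`Δ (B(x, x)) = (E + 2) (E + 1) tr B`, with `E` the Euler field, leaves an equation for `tr B`
alone. -/
lemma trace_eq_zero_of_codazzi (hι : 3 ≤ Fintype.card ι) (hB : ∀ a b, B a b = B b a)
    (hC : ∀ a b c, pderiv a (B b c) = pderiv b (B a c))
    (hψ : ((Fintype.card ι : MvPolynomial ι ℝ) - 2) * (∑ a, X a * ∑ b, X b * B a b)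
      + (∑ b, B b b) * normSqPoly ι = 0) : ∑ b, B b b = 0 := by
  have three_le : (3 : ℝ) ≤ Fintype.card ι := mod_cast hι
  have contraction := pderiv_radial_contraction_of_codazzi hB hC
  have laplacian_eq := laplacian_sum_X_mul_of_closed (v := fun a ↦ ∑ b, X b * B a b)
    fun j k ↦ by rw [contraction, contraction, hB]
  simp only [contraction, Finset.sum_add_distrib, ← map_sum] at laplacian_eq
  have laplacian_hψ := congrArg laplacian hψ
  have cast_eq : ((Fintype.card ι : MvPolynomial ι ℝ) - 2) = C ((Fintype.card ι : ℝ) - 2) := by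
    rw [map_sub, map_natCast, map_ofNat]
  rw [cast_eq, ← smul_eq_C_mul, map_add, map_smul, map_zero, mul_comm _ (normSqPoly ι),
    laplacian_normSqPoly_mul, laplacian_eq] at laplacian_hψ
  set m : ℝ := (Fintype.card ι : ℝ)
  refine eq_zero_of_normSqPoly_mul_laplacian (a := m - 2) (b := 3 * (m - 2) + 4)
    (c := 2 * (m - 2) + 2 * m) (by linarith) (by linarith) (by linarith) ?_
  have cast_card : (Fintype.card ι : MvPolynomial ι ℝ) = C m := (map_natCast C _).symm
  simp only [smul_eq_C_mul, cast_card, map_add, map_sub, map_mul, map_ofNat] at laplacian_hψ ⊢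
  linear_combination laplacian_hψ

variable [DecidableEq ι]

lemma eq_zero_of_radial_of_linRiemann_eq_kulkarniNomizu (hι : 3 ≤ Fintype.card ι)
    (hsym : ∀ a b, h a b = h b a) (htr : ∑ a, h a a = 0) (hx : ∀ a, ∑ b, X b * h a b = 0)
    (hB : ∀ a b, B a b = B b a) (hC : ∀ a b c, pderiv a (B b c) = pderiv b (B a c))
    (hR : ∀ a b c d, linRiemann h a b c d = kulkarniNomizu B a b c d) (a b : ι) : h a b = 0 := by
  have three_le : (3 : ℝ) ≤ Fintype.card ι := mod_cast hι
  have hψ : ((Fintype.card ι : MvPolynomial ι ℝ) - 2) * (∑ a, X a * ∑ b, X b * B a b)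
      + (∑ b, B b b) * normSqPoly ι = 0 := by
    rw [← sum_sum_X_mul_X_mul_linRiemann_of_radial hsym htr hx]
    simp only [hR, sum_kulkarniNomizu, normSqPoly, Finset.mul_sum, mul_add,
      Finset.sum_add_distrib, mul_ite, mul_one, mul_zero, Finset.sum_ite_eq, Finset.mem_univ,
      if_true]
    refine congrArg₂ (· + ·) (Finset.sum_congr rfl fun a _ ↦ Finset.sum_congr rfl fun b _ ↦ ?_)
      (Finset.sum_congr rfl fun a _ ↦ ?_)
    · ring
    · rw [← Finset.mul_sum, ← Finset.mul_sum]; ring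
  have trace_eq_zero := trace_eq_zero_of_codazzi hι hB hC hψ
  have radial_radial : ∑ a, X a * ∑ b, X b * B a b = 0 := by
    rw [trace_eq_zero, zero_mul, add_zero] at hψ
    refine (Submodule.mem_bot ℝ).1
      (mem_of_algebraMap_mul_mem (s := Fintype.card ι - 2) (by linarith) ?_)
    rw [map_sub, map_natCast, map_ofNat, hψ, Submodule.mem_bot]
  have contraction := pderiv_radial_contraction_of_codazzi hB hC
  have radial (a : ι) : ∑ b, X b * B a b = 0 :=
    eq_zero_of_closed_of_radial (v := fun a ↦ ∑ b, X b * B a b)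
      (fun j k ↦ by rw [contraction, contraction, hB]) radial_radial a
  have hB_zero (a b : ι) : B a b = 0 :=
    eq_zero_of_closed_of_radial (v := B a) (fun j k ↦ by rw [hB a k, hB a j, hC]) (radial a) b
  exact eq_zero_of_radial_of_linRiemann_eq_zero hsym hx
    (fun a b c d ↦ by simp only [hR, kulkarniNomizu, hB_zero, zero_mul, sub_zero, add_zero]) a b

end RadialTensors

section BoundaryRestriction

variable {m : ℕ}

/-- Restriction of a polynomial on the half space to the boundary hyperplane, on which the last
coordinate vanishes. -/
noncomputable def restrictBoundary (m : ℕ) :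
    MvPolynomial (Fin (m + 1)) ℝ →ₐ[ℝ] MvPolynomial (Fin m) ℝ :=
  aeval (Fin.snoc (α := fun _ ↦ MvPolynomial (Fin m) ℝ) X 0)

lemma restrictBoundary_C (a : ℝ) : restrictBoundary m (C a) = C a := algHom_C _ a

lemma restrictBoundary_X_castSucc (i : Fin m) : restrictBoundary m (X i.castSucc) = X i := by
  simp [restrictBoundary]

lemma restrictBoundary_X_last : restrictBoundary m (X (Fin.last m)) = 0 := by
  simp [restrictBoundary]

lemma restrictBoundary_pderiv (i : Fin m) (p : MvPolynomial (Fin (m + 1)) ℝ) :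
    restrictBoundary m (pderiv i.castSucc p) = pderiv i (restrictBoundary m p) := by
  induction p using MvPolynomial.induction_on with
  | C a => rw [restrictBoundary_C, pderiv_C, pderiv_C, map_zero]
  | add p q hp hq => simp only [map_add, hp, hq]
  | mul_X p j hp =>
    rw [mul_comm p, pderiv_X_mul, map_add, map_mul, hp, map_mul]
    cases j using Fin.lastCases with
    | last =>
      rw [restrictBoundary_X_last, if_neg (Fin.castSucc_lt_last i).ne', map_zero, zero_mul,
        zero_mul, add_zero, map_zero]
    | cast j =>
      rw [restrictBoundary_X_castSucc, pderiv_X_mul, apply_ite (restrictBoundary m), map_zero]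
      simp only [Fin.castSucc_inj]

lemma eval_restrictBoundary (x : Fin m → ℝ) (p : MvPolynomial (Fin (m + 1)) ℝ) :
    eval x (restrictBoundary m p) = eval (Fin.snoc (α := fun _ ↦ ℝ) x 0) p := by
  induction p using MvPolynomial.induction_on with
  | C a => simp only [restrictBoundary_C, eval_C]
  | add p q hp hq => simp only [map_add, hp, hq]
  | mul_X p j hp =>
    rw [map_mul, map_mul, map_mul, hp]
    cases j using Fin.lastCases with
    | last => rw [restrictBoundary_X_last, map_zero, eval_X, Fin.snoc_last]
    | cast j => rw [restrictBoundary_X_castSucc, eval_X, eval_X, Fin.snoc_castSucc]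

lemma exists_eq_rename_restrictBoundary_add (p : MvPolynomial (Fin (m + 1)) ℝ) :
    ∃ q, p = rename Fin.castSucc (restrictBoundary m p) + X (Fin.last m) * q := by
  induction p using MvPolynomial.induction_on with
  | C a => exact ⟨0, by rw [restrictBoundary_C, rename_C, mul_zero, add_zero]⟩
  | add p q hp hq =>
    obtain ⟨p', hp⟩ := hp
    obtain ⟨q', hq⟩ := hq
    refine ⟨p' + q', ?_⟩
    simp only [map_add]
    linear_combination hp + hq
  | mul_X p j hp =>
    obtain ⟨p', hp⟩ := hp
    cases j using Fin.lastCases with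
    | last =>
      exact ⟨p, by rw [map_mul, restrictBoundary_X_last, mul_zero, map_zero, zero_add, mul_comm]⟩
    | cast j =>
      refine ⟨p' * X j.castSucc, ?_⟩
      rw [map_mul, restrictBoundary_X_castSucc, map_mul, rename_X]
      linear_combination X j.castSucc * hp

/-- The polynomials without monomials of degree exactly `k` in the last (normal) variable. -/
def normalOrderKer (m k : ℕ) : Submodule ℝ (MvPolynomial (Fin (m + 1)) ℝ) where
  carrier := {p | ∀ d : Fin (m + 1) →₀ ℕ, d (Fin.last m) = k → coeff d p = 0}
  zero_mem' _ _ := coeff_zero _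
  add_mem' hp hq d hd := by rw [coeff_add, hp d hd, hq d hd, add_zero]
  smul_mem' c p hp d hd := by rw [coeff_smul, hp d hd, smul_zero]

variable {k : ℕ} {p : MvPolynomial (Fin (m + 1)) ℝ}

lemma mem_normalOrderKer_zero (h : restrictBoundary m p = 0) : p ∈ normalOrderKer m 0 := by
  obtain ⟨q, hq⟩ := exists_eq_rename_restrictBoundary_add p
  intro d hd
  rw [hq, h, map_zero, zero_add, coeff_X_mul', if_neg (by simpa using hd)]

lemma mem_normalOrderKer_succ (h : pderiv (Fin.last m) p ∈ normalOrderKer m k) :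
    p ∈ normalOrderKer m (k + 1) := by
  intro d hd
  have sub_add : d - Finsupp.single (Fin.last m) 1 + Finsupp.single (Fin.last m) 1 = d :=
    tsub_add_cancel_of_le (by simp [hd])
  have coeff_eq := h (d - Finsupp.single (Fin.last m) 1) (by simp [hd])
  rw [coeff_pderiv, sub_add] at coeff_eq
  exact (mul_eq_zero.1 coeff_eq).resolve_right (by positivity)

lemma pderiv_mem_normalOrderKer (i : Fin m) (hp : p ∈ normalOrderKer m k) :
    pderiv i.castSucc p ∈ normalOrderKer m k := by
  intro d hd
  rw [coeff_pderiv, hp, zero_mul]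
  simp [hd, (Fin.castSucc_lt_last i).ne]

end BoundaryRestriction

section Gauge

variable {m : ℕ} {H M : Fin (m + 1) → Fin (m + 1) → MvPolynomial (Fin (m + 1)) ℝ}

/-- Gauge-fixed tensors on the half space: symmetric, trace-free, without normal components, and
radial on the boundary. -/
structure IsGaugeFixed (H : Fin (m + 1) → Fin (m + 1) → MvPolynomial (Fin (m + 1)) ℝ) : Prop where
  symm (a b : Fin (m + 1)) : H a b = H b a
  trace : ∑ a, H a a = 0
  normal (a : Fin (m + 1)) : H a (Fin.last m) = 0
  radial (i : Fin m) : ∑ j : Fin m, X j * restrictBoundary m (H i.castSucc j.castSucc) = 0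

namespace IsGaugeFixed

lemma normal_left (hH : IsGaugeFixed H) (a : Fin (m + 1)) : H (Fin.last m) a = 0 := by
  rw [hH.symm, hH.normal]

lemma tangential_trace (hH : IsGaugeFixed H) : ∑ i : Fin m, H i.castSucc i.castSucc = 0 := by
  simpa only [Fin.sum_univ_castSucc, hH.normal, add_zero] using hH.trace

lemma restrictBoundary_eq_zero (hH : IsGaugeFixed H) (hm : 3 ≤ m) (hM : ∀ a b, M a b = M b a)
    (hR : ∀ a b c d, linRiemann H a b c d = kulkarniNomizu M a b c d) (i j : Fin m) :
    restrictBoundary m (H i.castSucc j.castSucc) = 0 := by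
  have cotton := pderiv_comm_of_linRiemann_eq_kulkarniNomizu
    (by rw [Fintype.card_fin]; lia) hH.symm hR
  refine eq_zero_of_radial_of_linRiemann_eq_kulkarniNomizu
    (h := fun i j ↦ restrictBoundary m (H i.castSucc j.castSucc))
    (B := fun i j ↦ restrictBoundary m (M i.castSucc j.castSucc)) (by rwa [Fintype.card_fin])
    (fun a b ↦ by rw [hH.symm]) ?_ hH.radial (fun a b ↦ by rw [hM]) (fun a b c ↦ ?_)
    (fun a b c d ↦ ?_) i j
  · rw [← map_sum, hH.tangential_trace, map_zero]
  · rw [← restrictBoundary_pderiv, cotton, restrictBoundary_pderiv]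
  · rw [← map_kulkarniNomizu_comp (restrictBoundary m) (Fin.castSucc_injective m) M, ← hR]
    simp only [linRiemann, map_add, map_sub, restrictBoundary_pderiv]

/-- The Gauss equation: the tangential curvature determines `M` on tangential indices, and the
trace-free condition then determines its normal component, hence `∂ₙ∂ₙ H`. -/
lemma pderiv_pderiv_last_mem_normalOrderKer (hH : IsGaugeFixed H) (hm : 3 ≤ m)
    (hR : ∀ a b c d, linRiemann H a b c d = kulkarniNomizu M a b c d) {k : ℕ}
    (hk : ∀ a b, H a b ∈ normalOrderKer m k) (i j : Fin m) :
    pderiv (Fin.last m) (pderiv (Fin.last m) (H i.castSucc j.castSucc)) ∈ normalOrderKer m k := by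
  have second_mem (p q : Fin m) (a b : Fin (m + 1)) :
      pderiv p.castSucc (pderiv q.castSucc (H a b)) ∈ normalOrderKer m k :=
    pderiv_mem_normalOrderKer p (pderiv_mem_normalOrderKer q (hk a b))
  have M_mem (i j : Fin m) : M i.castSucc j.castSucc ∈ normalOrderKer m k := by
    refine mem_of_kulkarniNomizu_mem (M := fun i j : Fin m ↦ M i.castSucc j.castSucc)
      (by rwa [Fintype.card_fin]) (fun a b c d ↦ ?_) i j
    have tangential_eq :=
      map_kulkarniNomizu_comp (AddMonoidHom.id _) (Fin.castSucc_injective m) M a b c d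
    simp only [AddMonoidHom.id_apply] at tangential_eq
    rw [← tangential_eq, ← hR]
    exact sub_mem (add_mem (sub_mem (second_mem _ _ _ _) (second_mem _ _ _ _))
      (second_mem _ _ _ _)) (second_mem _ _ _ _)
  have normal_eq (i j : Fin m) :
      pderiv (Fin.last m) (pderiv (Fin.last m) (H i.castSucc j.castSucc))
        = M i.castSucc j.castSucc + M (Fin.last m) (Fin.last m) * (if i = j then 1 else 0) := by
    simpa [linRiemann, kulkarniNomizu, hH.normal, hH.normal_left, (Fin.castSucc_lt_last i).ne,
      (Fin.castSucc_lt_last j).ne'] using hR i.castSucc (Fin.last m) j.castSucc (Fin.last m)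
  have normal_mem : M (Fin.last m) (Fin.last m) ∈ normalOrderKer m k := by
    refine mem_of_algebraMap_mul_mem (s := m) (by positivity) ?_
    have trace_eq := Finset.sum_congr rfl fun i (_ : i ∈ Finset.univ) ↦ normal_eq i i
    rw [← map_sum, ← map_sum, hH.tangential_trace, map_zero, map_zero,
      Finset.sum_add_distrib] at trace_eq
    simp only [if_true, mul_one, Finset.sum_const, Finset.card_univ, Fintype.card_fin,
      nsmul_eq_mul] at trace_eq
    rw [map_natCast, ← neg_eq_of_add_eq_zero_right trace_eq.symm]
    exact neg_mem (sum_mem fun i _ ↦ M_mem i i)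
  rw [normal_eq]
  refine add_mem (M_mem i j) ?_
  split_ifs
  · rwa [mul_one]
  · rw [mul_zero]; exact zero_mem _

/-- The curvature equation is a second-order recursion in the normal direction, with vanishing
initial data `H` and `∂ₙ H` on the boundary. -/
lemma eq_zero_of_linRiemann_eq_kulkarniNomizu (hH : IsGaugeFixed H) (hm : 3 ≤ m)
    (hM : ∀ a b, M a b = M b a)
    (hR : ∀ a b c d, linRiemann H a b c d = kulkarniNomizu M a b c d)
    (hn : ∀ a b, restrictBoundary m (pderiv (Fin.last m) (H a b)) = 0) (a b : Fin (m + 1)) :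
    H a b = 0 := by
  have mem_of_tangential {k : ℕ}
      (h : ∀ i j : Fin m, H i.castSucc j.castSucc ∈ normalOrderKer m k) (a b : Fin (m + 1)) :
      H a b ∈ normalOrderKer m k := by
    cases a using Fin.lastCases with
    | last => rw [hH.normal_left]; exact zero_mem _
    | cast i =>
      cases b using Fin.lastCases with
      | last => rw [hH.normal]; exact zero_mem _
      | cast j => exact h i j
  have mem_pair (k : ℕ) :
      (∀ a b, H a b ∈ normalOrderKer m k) ∧ ∀ a b, H a b ∈ normalOrderKer m (k + 1) := by
    induction k with
    | zero =>
      exact ⟨mem_of_tangential fun i j ↦ mem_normalOrderKer_zero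
          (hH.restrictBoundary_eq_zero hm hM hR i j),
        fun a b ↦ mem_normalOrderKer_succ (mem_normalOrderKer_zero (hn a b))⟩
    | succ k ih =>
      exact ⟨ih.2, mem_of_tangential fun i j ↦ mem_normalOrderKer_succ (mem_normalOrderKer_succ
        (hH.pderiv_pderiv_last_mem_normalOrderKer hm hR ih.1 i j))⟩
  ext d
  exact (mem_pair (d (Fin.last m))).1 a b d rfl

end IsGaugeFixed

end Gauge

section PartialDerivatives

section Basic

variable {ι : Type*} [DecidableEq ι]

/-- The partial derivative of a function on `ι → ℝ` in the coordinate direction `c`. -/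
noncomputable def partialDeriv (c : ι) (f : (ι → ℝ) → ℝ) (x : ι → ℝ) : ℝ :=
  fderiv ℝ f x (Pi.single c 1)

lemma partialDeriv_const (c : ι) (k : ℝ) (x : ι → ℝ) : partialDeriv c (fun _ ↦ k) x = 0 := by
  simp [partialDeriv]

lemma hasCompactSupport_partialDeriv {f : (ι → ℝ) → ℝ} (hf : HasCompactSupport f) (c : ι) :
    HasCompactSupport (partialDeriv c f) :=
  hf.fderiv_apply (𝕜 := ℝ) (Pi.single c 1)

variable [Finite ι]

lemma partialDeriv_coord (a c : ι) (x : ι → ℝ) :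
    partialDeriv c (fun y ↦ y a) x = if a = c then 1 else 0 := by
  have := Fintype.ofFinite ι
  have fderiv_coord : fderiv ℝ (fun y : ι → ℝ ↦ y a) x = ContinuousLinearMap.proj a :=
    (ContinuousLinearMap.proj (R := ℝ) (φ := fun _ : ι ↦ ℝ) a).hasFDerivAt.fderiv
  rw [partialDeriv, fderiv_coord, ContinuousLinearMap.proj_apply, Pi.single_apply]

lemma partialDeriv_eq_zero_of_eq_zero_on_hyperplane {f : (ι → ℝ) → ℝ} {l i : ι} (hil : i ≠ l)
    {x : ι → ℝ} (hf : DifferentiableAt ℝ f x) (h : ∀ y : ι → ℝ, y l = 0 → f y = 0)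
    (hx : x l = 0) : partialDeriv i f x = 0 := by
  have := Fintype.ofFinite ι
  have along_line : (fun t : ℝ ↦ f (x + t • Pi.single i 1)) = fun _ ↦ 0 := by
    funext t
    apply h
    simp [hx, hil.symm]
  refine (hf.hasFDerivAt.hasLineDerivAt (Pi.single i 1)).unique ?_
  rw [HasLineDerivAt, along_line]
  exact hasDerivAt_const _ _

end Basic

@[fun_prop]
lemma contDiff_eval {ι : Type*} [Fintype ι] (p : MvPolynomial ι ℝ) :
    ContDiff ℝ ∞ fun x : ι → ℝ ↦ eval x p := by
  induction p using MvPolynomial.induction_on with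
  | C a => simp only [eval_C]; fun_prop
  | add p q hp hq => simp only [map_add]; fun_prop
  | mul_X p j hp => simp only [map_mul, eval_X]; fun_prop

variable {ι : Type*} [Fintype ι] [DecidableEq ι] {f g : (ι → ℝ) → ℝ}

@[fun_prop]
lemma contDiff_partialDeriv (c : ι) (hf : ContDiff ℝ ∞ f) : ContDiff ℝ ∞ (partialDeriv c f) :=
  (hf.fderiv_right (m := ∞) (by simp)).clm_apply contDiff_const

lemma partialDeriv_add (c : ι) (hf : ContDiff ℝ ∞ f) (hg : ContDiff ℝ ∞ g) (x : ι → ℝ) :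
    partialDeriv c (fun y ↦ f y + g y) x = partialDeriv c f x + partialDeriv c g x := by
  rw [partialDeriv,
    fderiv_fun_add (hf.differentiable (by simp) x) (hg.differentiable (by simp) x)]
  rfl

lemma partialDeriv_sub (c : ι) (hf : ContDiff ℝ ∞ f) (hg : ContDiff ℝ ∞ g) (x : ι → ℝ) :
    partialDeriv c (fun y ↦ f y - g y) x = partialDeriv c f x - partialDeriv c g x := by
  rw [partialDeriv,
    fderiv_fun_sub (hf.differentiable (by simp) x) (hg.differentiable (by simp) x)]
  rfl

lemma partialDeriv_mul (c : ι) (hf : ContDiff ℝ ∞ f) (hg : ContDiff ℝ ∞ g) (x : ι → ℝ) :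
    partialDeriv c (fun y ↦ f y * g y) x = partialDeriv c f x * g x + f x * partialDeriv c g x := by
  rw [partialDeriv,
    fderiv_fun_mul (hf.differentiable (by simp) x) (hg.differentiable (by simp) x)]
  simp only [partialDeriv, add_apply, smul_apply, smul_eq_mul]
  ring

lemma partialDeriv_sum {κ : Type*} (s : Finset κ) {f : κ → (ι → ℝ) → ℝ} (c : ι)
    (hf : ∀ i, ContDiff ℝ ∞ (f i)) (x : ι → ℝ) :
    partialDeriv c (fun y ↦ ∑ i ∈ s, f i y) x = ∑ i ∈ s, partialDeriv c (f i) x := by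
  simp [partialDeriv, fderiv_fun_sum fun i _ ↦ (hf i).differentiable (by simp) x]

lemma partialDeriv_comm (hf : ContDiff ℝ ∞ f) (a b : ι) (x : ι → ℝ) :
    partialDeriv a (partialDeriv b f) x = partialDeriv b (partialDeriv a f) x := by
  have symm : IsSymmSndFDerivAt ℝ f x := by
    refine hf.contDiffAt.isSymmSndFDerivAt ?_
    rw [minSmoothness_of_isRCLikeNormedField]
    exact WithTop.coe_le_coe.2 le_top
  have differentiableAt_fderiv : DifferentiableAt ℝ (fderiv ℝ f) x :=
    (hf.fderiv_right (m := ∞) (by simp)).differentiable (by simp) x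
  have second_eq (a b : ι) : partialDeriv a (partialDeriv b f) x
      = fderiv ℝ (fderiv ℝ f) x (Pi.single a 1) (Pi.single b 1) := by
    change fderiv ℝ (fun y ↦ fderiv ℝ f y (Pi.single b 1)) x (Pi.single a 1) = _
    rw [fderiv_clm_apply differentiableAt_fderiv (by fun_prop)]
    simp
  rw [second_eq, second_eq, symm.eq]

lemma partialDeriv_eval {ι : Type*} [Finite ι] [DecidableEq ι] (c : ι) (p : MvPolynomial ι ℝ)
    (x : ι → ℝ) : partialDeriv c (fun y ↦ eval y p) x = eval x (pderiv c p) := by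
  have := Fintype.ofFinite ι
  induction p using MvPolynomial.induction_on with
  | C a => simp only [eval_C, partialDeriv_const, pderiv_C, map_zero]
  | add p q hp hq =>
    simp only [map_add, partialDeriv_add c (contDiff_eval p) (contDiff_eval q), hp, hq]
  | mul_X p j hp =>
    simp only [map_mul, eval_X, mul_comm p, pderiv_X_mul, map_add, apply_ite (eval x), map_zero]
    rw [partialDeriv_mul c (by fun_prop) (contDiff_eval p), partialDeriv_coord, hp]
    split_ifs <;> ring

lemma norm_fderiv_le_sum_abs_partialDeriv (f : (ι → ℝ) → ℝ) (x : ι → ℝ) :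
    ‖fderiv ℝ f x‖ ≤ ∑ c, |partialDeriv c f x| := by
  refine ContinuousLinearMap.opNorm_le_bound _ (Finset.sum_nonneg fun _ _ ↦ abs_nonneg _)
    fun v ↦ ?_
  conv_lhs => rw [pi_eq_sum_univ' v]
  rw [map_sum, Finset.sum_mul]
  refine (norm_sum_le _ _).trans (Finset.sum_le_sum fun c _ ↦ ?_)
  rw [map_smul, norm_smul, mul_comm]
  gcongr
  · exact le_rfl
  · exact norm_le_pi_norm v c

lemma integral_partialDeriv_eq_zero (hf : ContDiff ℝ ∞ f) (hc : HasCompactSupport f) (c : ι) :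
    ∫ x, partialDeriv c f x = 0 := by
  have integrable_deriv : Integrable (partialDeriv c f) :=
    (contDiff_partialDeriv c hf).continuous.integrable_of_hasCompactSupport
      (hasCompactSupport_partialDeriv hc c)
  have by_parts := integral_mul_fderiv_eq_neg_fderiv_mul_of_integrable
    (μ := (volume : Measure (ι → ℝ))) (f := fun _ ↦ (1 : ℝ)) (g := f) (v := Pi.single c 1)
    (by simp) (by simpa only [one_mul, partialDeriv] using! integrable_deriv)
    (by simpa using hf.continuous.integrable_of_hasCompactSupport hc) (by simp)
    (fun x _ ↦ hf.differentiable (by simp) x)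
  simpa [partialDeriv] using by_parts

end PartialDerivatives

section BubbleGradient

variable {ι : Type*} [Fintype ι] (p : ι → ℝ) {T : ι → ι → (ι → ℝ) → ℝ}

/-- The squared Euclidean distance to the pole `-p`. -/
def poleDistSq (x : ι → ℝ) : ℝ := ∑ a, (x a + p a) ^ 2

/-- The contraction of a tensor field with the position vector relative to the pole `-p`. -/
def poleContract (T : ι → ι → (ι → ℝ) → ℝ) (a : ι) (x : ι → ℝ) : ℝ := ∑ d, (x d + p d) * T a d x

@[fun_prop]
lemma contDiff_poleDistSq : ContDiff ℝ ∞ (poleDistSq p) := by unfold poleDistSq; fun_prop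

lemma contDiff_poleContract (hT : ∀ a b, ContDiff ℝ ∞ (T a b)) (a : ι) :
    ContDiff ℝ ∞ (poleContract p T a) := by unfold poleContract; fun_prop

variable [DecidableEq ι]

/-- The third-order tensor `Q_{ab,c}` of the paper up to a scalar factor: for the bubble `U`
centered at `-p` one has `Q = U / poleDistSq p • bubbleGradient p T`. -/
noncomputable def bubbleGradient (T : ι → ι → (ι → ℝ) → ℝ) (a b c : ι) (x : ι → ℝ) : ℝ :=
  poleDistSq p x * partialDeriv c (T a b) x
    + 2 * ((x a + p a) * T b c x + (x b + p b) * T a c x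
      - poleContract p T a x * (if b = c then 1 else 0)
      - poleContract p T b x * (if a = c then 1 else 0))

lemma contDiff_bubbleGradient (hT : ∀ a b, ContDiff ℝ ∞ (T a b)) (a b c : ι) :
    ContDiff ℝ ∞ (bubbleGradient p T a b c) := by
  have := contDiff_poleContract p hT
  unfold bubbleGradient
  fun_prop

lemma partialDeriv_poleDistSq (e : ι) (x : ι → ℝ) :
    partialDeriv e (poleDistSq p) x = 2 * (x e + p e) := by
  unfold poleDistSq
  simp only [sq]
  simp (disch := fun_prop) only [partialDeriv_sum, partialDeriv_mul, partialDeriv_add,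
    partialDeriv_coord, partialDeriv_const]
  rw [Finset.sum_eq_single e (by simp +contextual) (by simp)]
  simp only [if_true, add_zero, one_mul, mul_one]
  ring

lemma partialDeriv_poleContract (hT : ∀ a b, ContDiff ℝ ∞ (T a b)) (a e : ι) (x : ι → ℝ) :
    partialDeriv e (poleContract p T a) x
      = T a e x + ∑ d, (x d + p d) * partialDeriv e (T a d) x := by
  unfold poleContract
  simp (disch := fun_prop) only [partialDeriv_sum, partialDeriv_mul, partialDeriv_add,
    partialDeriv_coord, partialDeriv_const]
  simp [Finset.sum_add_distrib]

lemma partialDeriv_bubbleGradient (hT : ∀ a b, ContDiff ℝ ∞ (T a b)) (a b c e : ι) (x : ι → ℝ) :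
    partialDeriv e (bubbleGradient p T a b c) x
      = 2 * (x e + p e) * partialDeriv c (T a b) x
        + poleDistSq p x * partialDeriv e (partialDeriv c (T a b)) x
        + 2 * ((if a = e then 1 else 0) * T b c x + (x a + p a) * partialDeriv e (T b c) x
          + (if b = e then 1 else 0) * T a c x + (x b + p b) * partialDeriv e (T a c) x
          - (T a e x + ∑ d, (x d + p d) * partialDeriv e (T a d) x) * (if b = c then 1 else 0)
          - (T b e x + ∑ d, (x d + p d) * partialDeriv e (T b d) x)
            * (if a = c then 1 else 0)) := by
  have := contDiff_poleContract p hT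
  unfold bubbleGradient
  simp (disch := fun_prop) only [partialDeriv_sub, partialDeriv_mul, partialDeriv_add,
    partialDeriv_coord, partialDeriv_const, partialDeriv_poleDistSq,
    partialDeriv_poleContract p hT]
  ring

lemma sum_mul_bubbleGradient (hsym : ∀ a b, T a b = T b a) (c b : ι) (x : ι → ℝ) :
    ∑ e, (x e + p e) * bubbleGradient p T c e b x
      = poleDistSq p x * ∑ e, (x e + p e) * partialDeriv b (T c e) x
        + 2 * ((x c + p c) * poleContract p T b x + poleDistSq p x * T c b x
          - poleContract p T c x * (x b + p b)
          - (∑ e, (x e + p e) * poleContract p T e x) * (if c = b then 1 else 0)) := by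
  have contract_delta : ∑ e, (x e + p e) * (if e = b then (1 : ℝ) else 0) = x b + p b := by simp
  have expand : ∑ e, (x e + p e) * bubbleGradient p T c e b x
      = poleDistSq p x * ∑ e, (x e + p e) * partialDeriv b (T c e) x
        + 2 * ((x c + p c) * ∑ e, (x e + p e) * T b e x + (∑ e, (x e + p e) ^ 2) * T c b x
          - poleContract p T c x * ∑ e, (x e + p e) * (if e = b then 1 else 0)
          - (∑ e, (x e + p e) * poleContract p T e x) * (if c = b then 1 else 0)) := by
    simp only [Finset.mul_sum, Finset.sum_mul, ← Finset.sum_sub_distrib, ← Finset.sum_add_distrib]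
    refine Finset.sum_congr rfl fun e _ ↦ ?_
    rw [bubbleGradient, hsym b e]
    ring
  rw [expand, contract_delta]
  rfl

/-- The linearized Riemann tensor (up to a factor) of a smooth perturbation of the flat metric. -/
noncomputable def smoothLinRiemann (T : ι → ι → (ι → ℝ) → ℝ) (a b c d : ι) (x : ι → ℝ) : ℝ :=
  partialDeriv b (partialDeriv d (T a c)) x - partialDeriv b (partialDeriv c (T a d)) x
    + partialDeriv a (partialDeriv c (T d b)) x - partialDeriv a (partialDeriv d (T b c)) x

/-- Antisymmetrization of a `4`-tensor in its first and in its last two indices. -/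
def antisymmetrize {ι : Type*} : (ι → ι → ι → ι → ℝ) →ₗ[ℝ] (ι → ι → ι → ι → ℝ) where
  toFun X a b c d := X a b c d - X b a c d - X a b d c + X b a d c
  map_add' X Y := by
    ext a b c d
    simp only [Pi.add_apply]
    ring
  map_smul' t X := by
    ext a b c d
    simp only [Pi.smul_apply, smul_eq_mul, RingHom.id_apply]
    ring

lemma antisymmetrize_apply {ι : Type*} (X : ι → ι → ι → ι → ℝ) (a b c d : ι) :
    antisymmetrize X a b c d = X a b c d - X b a c d - X a b d c + X b a d c := rfl

/-- Modulo Kulkarni–Nomizu products, the curvature of `T` is a first-order expression in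
`bubbleGradient p T`. -/
lemma poleDistSq_sq_mul_smoothLinRiemann (hT : ∀ a b, ContDiff ℝ ∞ (T a b))
    (hsym : ∀ a b, T a b = T b a) (a b c d : ι) (x : ι → ℝ) :
    poleDistSq p x ^ 2 * smoothLinRiemann T a b c d x
      = antisymmetrize (fun a b c d ↦ poleDistSq p x * partialDeriv b (bubbleGradient p T a c d) x
          - 2 * (x b + p b) * bubbleGradient p T a c d x
          - 2 * (x c + p c) * bubbleGradient p T a d b x
          + 2 * (∑ e, (x e + p e) * bubbleGradient p T c e b x) * (if a = d then 1 else 0))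
          a b c d
        + kulkarniNomizu (fun a c ↦ 4 * poleDistSq p x * T a c x
            - 4 * (∑ e, (x e + p e) * poleContract p T e x) * (if a = c then 1 else 0))
          a b c d := by
  simp only [antisymmetrize_apply, smoothLinRiemann, kulkarniNomizu, sum_mul_bubbleGradient p hsym,
    partialDeriv_bubbleGradient p hT]
  simp only [bubbleGradient, eq_comm (a := c) (b := b), eq_comm (a := d) (b := b),
    eq_comm (a := c) (b := a), eq_comm (a := d) (b := a), eq_comm (a := d) (b := c),
    eq_comm (a := b) (b := a)]
  rw [hsym c b, hsym d b, hsym c a, hsym d a, hsym d c, hsym b a]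
  ring

end BubbleGradient

section GaugeDefect

variable {ι : Type*} [Fintype ι] [DecidableEq ι] {H : ι → ι → MvPolynomial ι ℝ}
  {V : ι → (ι → ℝ) → ℝ}

/-- The conformal factor `(2 / n) div V` subtracted in the conformal Killing operator. -/
noncomputable def divFactor (V : ι → (ι → ℝ) → ℝ) (x : ι → ℝ) : ℝ :=
  2 / (Fintype.card ι : ℝ) * ∑ c, partialDeriv c (V c) x

/-- The tensor `T = H - S` of the paper, where `S` is the conformal Killing operator of `V`. -/
noncomputable def gaugeDefect (H : ι → ι → MvPolynomial ι ℝ) (V : ι → (ι → ℝ) → ℝ) (a b : ι)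
    (x : ι → ℝ) : ℝ :=
  eval x (H a b) - (partialDeriv a (V b) x + partialDeriv b (V a) x
    - divFactor V x * (if a = b then 1 else 0))

lemma contDiff_divFactor (hV : ∀ a, ContDiff ℝ ∞ (V a)) : ContDiff ℝ ∞ (divFactor V) := by
  unfold divFactor
  fun_prop

lemma contDiff_gaugeDefect (hV : ∀ a, ContDiff ℝ ∞ (V a)) (a b : ι) :
    ContDiff ℝ ∞ (gaugeDefect H V a b) := by
  have := contDiff_divFactor hV
  unfold gaugeDefect
  fun_prop

lemma gaugeDefect_symm (hH : ∀ a b, H a b = H b a) (a b : ι) :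
    gaugeDefect H V a b = gaugeDefect H V b a := by
  funext x
  simp only [gaugeDefect, hH a b, eq_comm (a := a) (b := b)]
  ring

lemma partialDeriv_gaugeDefect (hV : ∀ a, ContDiff ℝ ∞ (V a)) (a b d : ι) :
    partialDeriv d (gaugeDefect H V a b) = fun x ↦ eval x (pderiv d (H a b))
      - (partialDeriv d (partialDeriv a (V b)) x + partialDeriv d (partialDeriv b (V a)) x
        - partialDeriv d (divFactor V) x * (if a = b then 1 else 0)) := by
  have := contDiff_divFactor hV
  funext x
  unfold gaugeDefect
  simp (disch := fun_prop) only [partialDeriv_sub, partialDeriv_add, partialDeriv_mul,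
    partialDeriv_eval, partialDeriv_const]
  ring

lemma partialDeriv_partialDeriv_gaugeDefect (hV : ∀ a, ContDiff ℝ ∞ (V a)) (a b d e : ι)
    (x : ι → ℝ) :
    partialDeriv e (partialDeriv d (gaugeDefect H V a b)) x = eval x (pderiv e (pderiv d (H a b)))
      - (partialDeriv e (partialDeriv d (partialDeriv a (V b))) x
        + partialDeriv e (partialDeriv d (partialDeriv b (V a))) x
        - partialDeriv e (partialDeriv d (divFactor V)) x * (if a = b then 1 else 0)) := by
  have := contDiff_divFactor hV
  rw [partialDeriv_gaugeDefect hV]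
  simp (disch := fun_prop) only [partialDeriv_sub, partialDeriv_add, partialDeriv_mul,
    partialDeriv_eval, partialDeriv_const]
  ring

lemma smoothLinRiemann_gaugeDefect (hV : ∀ a, ContDiff ℝ ∞ (V a)) (a b c d : ι) (x : ι → ℝ) :
    smoothLinRiemann (gaugeDefect H V) a b c d x = eval x (linRiemann H a b c d)
      + kulkarniNomizu (fun p q ↦ partialDeriv p (partialDeriv q (divFactor V)) x) a b c d := by
  have swap_left (e p q r : ι) : partialDeriv p (partialDeriv q (partialDeriv r (V e))) x
      = partialDeriv q (partialDeriv p (partialDeriv r (V e))) x :=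
    partialDeriv_comm (contDiff_partialDeriv r (hV e)) p q x
  have swap_right (e p q r : ι) : partialDeriv p (partialDeriv q (partialDeriv r (V e))) x
      = partialDeriv p (partialDeriv r (partialDeriv q (V e))) x := by
    rw [funext (partialDeriv_comm (hV e) q r)]
  have swap_outer (e p q r : ι) : partialDeriv p (partialDeriv q (partialDeriv r (V e))) x
      = partialDeriv r (partialDeriv q (partialDeriv p (V e))) x := by
    rw [swap_right, swap_left, swap_right]
  simp only [smoothLinRiemann, partialDeriv_partialDeriv_gaugeDefect hV, linRiemann,
    kulkarniNomizu, map_add, map_sub, eq_comm (a := d) (b := b)]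
  linear_combination swap_outer d b c a - swap_outer c b d a - swap_right a b d c
    - swap_right b a c d

end GaugeDefect

section CauchySchwarz

variable {α : Type*} [MeasurableSpace α] {μ : Measure α} [IsFiniteMeasure μ] {g : α → ℝ}

lemma sq_integral_le_measureReal_mul_integral_sq (hg : Integrable g μ)
    (hg2 : Integrable (fun x ↦ g x ^ 2) μ) :
    (∫ x, g x ∂μ) ^ 2 ≤ μ.real Set.univ * ∫ x, g x ^ 2 ∂μ := by
  set v := μ.real Set.univ
  set I := ∫ x, g x ∂μ
  have expand : ∫ x, (v * g x - I) ^ 2 ∂μ = v * (v * ∫ x, g x ^ 2 ∂μ - I ^ 2) := by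
    have pointwise (x : α) : (v * g x - I) ^ 2 = v ^ 2 * g x ^ 2 - 2 * v * I * g x + I ^ 2 := by
      ring
    simp only [pointwise]
    rw [integral_add (by fun_prop) (by fun_prop), integral_sub (by fun_prop) (by fun_prop),
      integral_const_mul, integral_const_mul, integral_const, smul_eq_mul]
    ring
  have nonneg : 0 ≤ v * (v * ∫ x, g x ^ 2 ∂μ - I ^ 2) :=
    expand ▸ integral_nonneg fun x ↦ sq_nonneg _
  rcases (measureReal_nonneg : 0 ≤ v).eq_or_lt with hv | hv
  · have measure_eq_zero : μ = 0 := by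
      rw [← Measure.measure_univ_eq_zero]
      exact (measureReal_eq_zero_iff (measure_ne_top _ _)).1 hv.symm
    simp [I, measure_eq_zero]
  · exact sub_nonneg.1 (nonneg_of_mul_nonneg_right nonneg hv)

end CauchySchwarz

section HalfAnnulus

variable {ι : Type*} [Fintype ι] {l : ι} {x : ι → ℝ}

/-- The half annulus `B⁺₂ ∖ B⁺₁`, where `l` is the index of the normal coordinate. -/
def halfAnnulus (l : ι) : Set (ι → ℝ) := {x | 0 ≤ x l ∧ 1 ≤ ∑ a, x a ^ 2 ∧ ∑ a, x a ^ 2 < 4}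

/-- The interior of the half annulus. -/
def openHalfAnnulus (l : ι) : Set (ι → ℝ) := {x | 0 < x l ∧ 1 < ∑ a, x a ^ 2 ∧ ∑ a, x a ^ 2 < 4}

lemma isOpen_annulus : IsOpen {x : ι → ℝ | 1 < ∑ a, x a ^ 2 ∧ ∑ a, x a ^ 2 < 4} :=
  have continuous_normSq : Continuous fun x : ι → ℝ ↦ ∑ a, x a ^ 2 := by fun_prop
  (isOpen_lt continuous_const continuous_normSq).inter
    (isOpen_lt continuous_normSq continuous_const)

lemma isOpen_openHalfAnnulus (l : ι) : IsOpen (openHalfAnnulus l) :=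
  (isOpen_lt continuous_const (continuous_apply l)).inter isOpen_annulus

lemma openHalfAnnulus_subset (l : ι) : openHalfAnnulus l ⊆ halfAnnulus l :=
  fun _ hx ↦ ⟨hx.1.le, hx.2.1.le, hx.2.2⟩

lemma openHalfAnnulus_nonempty (l : ι) : (openHalfAnnulus l).Nonempty := by
  classical
  have sum_sq : ∑ a, (Pi.single l (3 / 2) : ι → ℝ) a ^ 2 = 9 / 4 := by
    simp only [Pi.single_apply, ite_pow, ne_eq, OfNat.ofNat_ne_zero, not_false_eq_true, zero_pow,
      Finset.sum_ite_eq', Finset.mem_univ, if_true]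
    norm_num
  refine ⟨Pi.single l (3 / 2), ?_, ?_, ?_⟩
  · simp
  · rw [sum_sq]; norm_num
  · rw [sum_sq]; norm_num

lemma measurableSet_halfAnnulus (l : ι) : MeasurableSet (halfAnnulus l) :=
  have measurable_normSq : Measurable fun x : ι → ℝ ↦ ∑ a, x a ^ 2 := by fun_prop
  (measurableSet_le measurable_const (measurable_pi_apply l)).inter
    ((measurableSet_le measurable_const measurable_normSq).inter
      (measurableSet_lt measurable_normSq measurable_const))

lemma abs_le_two_of_mem_halfAnnulus (hx : x ∈ halfAnnulus l) (a : ι) : |x a| ≤ 2 := by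
  refine abs_le_of_sq_le_sq ?_ zero_le_two
  have := Finset.single_le_sum (fun a _ ↦ sq_nonneg (x a)) (Finset.mem_univ a)
  linarith [hx.2.2]

lemma halfAnnulus_subset_closedBall (l : ι) : halfAnnulus l ⊆ Metric.closedBall 0 2 := by
  intro x hx
  rw [mem_closedBall_zero_iff, pi_norm_le_iff_of_nonneg zero_le_two]
  exact abs_le_two_of_mem_halfAnnulus hx

lemma integrableOn_halfAnnulus {f : (ι → ℝ) → ℝ} (hf : Continuous f) (l : ι) :
    IntegrableOn f (halfAnnulus l) :=
  (hf.continuousOn.integrableOn_compact (isCompact_closedBall 0 2)).mono_set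
    (halfAnnulus_subset_closedBall l)

lemma volume_halfAnnulus_ne_top (l : ι) : volume (halfAnnulus l) ≠ ⊤ :=
  measure_ne_top_of_subset (halfAnnulus_subset_closedBall l)
    (isCompact_closedBall (0 : ι → ℝ) 2).measure_lt_top.ne

variable [DecidableEq ι] {ε : ℝ}

lemma abs_add_pole_le_three (h0 : 0 ≤ ε) (h1 : ε ≤ 1) (hx : x ∈ halfAnnulus l) (a : ι) :
    |x a + Pi.single (M := fun _ ↦ ℝ) l ε a| ≤ 3 := by
  have pole_le : |Pi.single (M := fun _ ↦ ℝ) l ε a| ≤ 1 := by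
    rw [Pi.single_apply]
    split_ifs
    · rwa [abs_of_nonneg h0]
    · simp
  have := abs_add_le (x a) (Pi.single (M := fun _ ↦ ℝ) l ε a)
  linarith [abs_le_two_of_mem_halfAnnulus hx a]

lemma poleDistSq_single (x : ι → ℝ) :
    poleDistSq (Pi.single l ε) x = ∑ a, x a ^ 2 + 2 * ε * x l + ε ^ 2 := by
  have expand (a : ι) : (x a + Pi.single (M := fun _ ↦ ℝ) l ε a) ^ 2
      = x a ^ 2 + if a = l then 2 * ε * x a + ε ^ 2 else 0 := by
    rw [Pi.single_apply]
    split_ifs <;> ring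
  simp [poleDistSq, expand, Finset.sum_add_distrib, add_assoc]

lemma one_le_poleDistSq (h0 : 0 ≤ ε) (hx : x ∈ halfAnnulus l) :
    1 ≤ poleDistSq (Pi.single l ε) x := by
  rw [poleDistSq_single]
  have := mul_nonneg h0 hx.1
  nlinarith [hx.2.1]

lemma poleDistSq_le_nine (h0 : 0 ≤ ε) (h1 : ε ≤ 1) (hx : x ∈ halfAnnulus l) :
    poleDistSq (Pi.single l ε) x ≤ 9 := by
  rw [poleDistSq_single]
  have := (abs_le.1 (abs_le_two_of_mem_halfAnnulus hx l)).2
  have := mul_le_mul h1 this hx.1 zero_le_one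
  nlinarith [hx.2.2]

end HalfAnnulus

section BubbleEnergy

variable {ι : Type*} [Fintype ι] [DecidableEq ι] {p : ι → ℝ} {T : ι → ι → (ι → ℝ) → ℝ}

/-- The energy density `∑ Q_{ab,c}²`, up to the scalar factor relating `Q` to `bubbleGradient`. -/
noncomputable def bubbleDensity (p : ι → ℝ) (T : ι → ι → (ι → ℝ) → ℝ) (x : ι → ℝ) : ℝ :=
  ∑ a, ∑ b, ∑ c, bubbleGradient p T a b c x ^ 2

/-- The energy of `T` on the unit half annulus for a bubble centered at height `-ε`. -/
noncomputable def bubbleEnergy (l : ι) (ε : ℝ) (T : ι → ι → (ι → ℝ) → ℝ) : ℝ :=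
  ∫ x in halfAnnulus l, bubbleDensity (Pi.single l ε) T x

lemma bubbleDensity_nonneg (x : ι → ℝ) : 0 ≤ bubbleDensity p T x := by
  unfold bubbleDensity; positivity

lemma bubbleEnergy_nonneg (l : ι) (ε : ℝ) : 0 ≤ bubbleEnergy l ε T :=
  integral_nonneg bubbleDensity_nonneg

lemma continuous_bubbleDensity (hT : ∀ a b, ContDiff ℝ ∞ (T a b)) :
    Continuous (bubbleDensity p T) := by
  have continuous_gradient (a b c : ι) : Continuous (bubbleGradient p T a b c) :=
    (contDiff_bubbleGradient p hT a b c).continuous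
  unfold bubbleDensity
  fun_prop

lemma sq_bubbleGradient_le_bubbleDensity (a b c : ι) (x : ι → ℝ) :
    bubbleGradient p T a b c x ^ 2 ≤ bubbleDensity p T x :=
  calc bubbleGradient p T a b c x ^ 2
      ≤ ∑ c, bubbleGradient p T a b c x ^ 2 :=
        Finset.single_le_sum (f := fun c ↦ bubbleGradient p T a b c x ^ 2)
          (fun _ _ ↦ by positivity) (Finset.mem_univ c)
    _ ≤ ∑ b, ∑ c, bubbleGradient p T a b c x ^ 2 :=
        Finset.single_le_sum (f := fun b ↦ ∑ c, bubbleGradient p T a b c x ^ 2)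
          (fun _ _ ↦ by positivity) (Finset.mem_univ b)
    _ ≤ bubbleDensity p T x :=
        Finset.single_le_sum (f := fun a ↦ ∑ b, ∑ c, bubbleGradient p T a b c x ^ 2)
          (fun _ _ ↦ by positivity) (Finset.mem_univ a)

lemma abs_bubbleGradient_le_sqrt_bubbleDensity (a b c : ι) (x : ι → ℝ) :
    |bubbleGradient p T a b c x| ≤ √(bubbleDensity p T x) :=
  Real.abs_le_sqrt (sq_bubbleGradient_le_bubbleDensity a b c x)

end BubbleEnergy

section InteriorEstimate

lemma contDiff_div_of_ne_zero_on_tsupport {E : Type*} [NormedAddCommGroup E] [NormedSpace ℝ E]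
    {φ g : E → ℝ} (hφ : ContDiff ℝ ∞ φ) (hg : ContDiff ℝ ∞ g) (h : ∀ x ∈ tsupport φ, g x ≠ 0) :
    ContDiff ℝ ∞ fun x ↦ φ x / g x := by
  refine contDiff_iff_contDiffAt.2 fun x ↦ ?_
  by_cases hx : x ∈ tsupport φ
  · exact hφ.contDiffAt.div hg.contDiffAt (h x hx)
  · refine (contDiffAt_const (c := 0)).congr_of_eventuallyEq ?_
    filter_upwards [notMem_tsupport_iff_eventuallyEq.1 hx] with y hy
    simp [hy]

variable {ι : Type*} [Fintype ι] [DecidableEq ι] {l : ι} {ε M : ℝ} {φ : (ι → ℝ) → ℝ}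
  {T : ι → ι → (ι → ℝ) → ℝ} {w : (ι → ι → ι → ι → ℝ) →ₗ[ℝ] ℝ}

lemma abs_partialDeriv_le_norm_fderiv (c : ι) (f : (ι → ℝ) → ℝ) (x : ι → ℝ) :
    |partialDeriv c f x| ≤ ‖fderiv ℝ f x‖ := by
  simpa [partialDeriv, Pi.norm_single] using (fderiv ℝ f x).le_opNorm (Pi.single c 1)

/-- The terms of order zero in `bubbleGradient p T` that remain when the derivative in
`φ * smoothLinRiemann T` is moved to the test function `φ`. -/
noncomputable def localizationError (p : ι → ℝ) (T : ι → ι → (ι → ℝ) → ℝ) (φ : (ι → ℝ) → ℝ)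
    (x : ι → ℝ) (a b c d : ι) : ℝ :=
  2 * (φ x / poleDistSq p x ^ 2)
      * ((∑ e, (x e + p e) * bubbleGradient p T c e b x) * (if a = d then 1 else 0)
        - (x c + p c) * bubbleGradient p T a d b x)
    - partialDeriv b φ x / poleDistSq p x * bubbleGradient p T a c d x

lemma localizationError_eq_zero_of_notMem_tsupport {p x : ι → ℝ} (hx : x ∉ tsupport φ) :
    localizationError p T φ x = 0 := by
  funext a b c d
  have fderiv_eq_zero : fderiv ℝ φ x = 0 :=
    image_eq_zero_of_notMem_tsupport (mt (tsupport_fderiv_subset ℝ ·) hx)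
  simp [localizationError, image_eq_zero_of_notMem_tsupport hx, partialDeriv, fderiv_eq_zero]

lemma mul_smoothLinRiemann_eq (p : ι → ℝ) (hT : ∀ a b, ContDiff ℝ ∞ (T a b))
    (hsym : ∀ a b, T a b = T b a) (hφ : ContDiff ℝ ∞ φ)
    (hφp : ∀ x ∈ tsupport φ, poleDistSq p x ≠ 0) {x : ι → ℝ} (hx : x ∈ tsupport φ)
    (a b c d : ι) :
    φ x * smoothLinRiemann T a b c d x
      = antisymmetrize (fun a b c d ↦
          partialDeriv b (fun y ↦ φ y / poleDistSq p y * bubbleGradient p T a c d y) x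
            + localizationError p T φ x a b c d) a b c d
        + kulkarniNomizu (fun a c ↦ φ x / poleDistSq p x ^ 2 * (4 * poleDistSq p x * T a c x
            - 4 * (∑ e, (x e + p e) * poleContract p T e x) * (if a = c then 1 else 0)))
          a b c d := by
  have hN := hφp x hx
  have smooth_quotient := contDiff_div_of_ne_zero_on_tsupport hφ (contDiff_poleDistSq p) hφp
  have quotient_rule (b : ι) : partialDeriv b (fun y ↦ φ y / poleDistSq p y) x
      = partialDeriv b φ x / poleDistSq p x
        - 2 * (x b + p b) * (φ x / poleDistSq p x ^ 2) := by
    have mul_cancel : (fun y ↦ φ y / poleDistSq p y * poleDistSq p y) = φ := by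
      funext y
      by_cases hy : y ∈ tsupport φ
      · exact div_mul_cancel₀ _ (hφp y hy)
      · simp [image_eq_zero_of_notMem_tsupport hy]
    have product_rule := partialDeriv_mul b smooth_quotient (contDiff_poleDistSq p) x
    rw [mul_cancel, partialDeriv_poleDistSq] at product_rule
    rw [product_rule]
    field_simp
    ring
  have rescaled := congrArg (φ x / poleDistSq p x ^ 2 * ·)
    (poleDistSq_sq_mul_smoothLinRiemann p hT hsym a b c d x)
  beta_reduce at rescaled
  rw [← mul_assoc, div_mul_cancel₀ _ (pow_ne_zero 2 hN)] at rescaled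
  rw [rescaled]
  simp only [localizationError, antisymmetrize_apply, kulkarniNomizu,
    partialDeriv_mul _ smooth_quotient (contDiff_bubbleGradient p hT _ _ _), quotient_rule]
  field_simp
  ring

lemma mul_functional_smoothLinRiemann_eq (p : ι → ℝ) (hT : ∀ a b, ContDiff ℝ ∞ (T a b))
    (hsym : ∀ a b, T a b = T b a) (hφ : ContDiff ℝ ∞ φ)
    (hφp : ∀ x ∈ tsupport φ, poleDistSq p x ≠ 0)
    (hw : ∀ M : ι → ι → ℝ, (∀ a b, M a b = M b a) → w (kulkarniNomizu M) = 0) (x : ι → ℝ) :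
    φ x * w (fun a b c d ↦ smoothLinRiemann T a b c d x)
      = w (antisymmetrize fun a b c d ↦
          partialDeriv b (fun y ↦ φ y / poleDistSq p y * bubbleGradient p T a c d y) x)
        + w (antisymmetrize (localizationError p T φ x)) := by
  by_cases hx : x ∈ tsupport φ
  · have tensor_eq := funext fun a ↦ funext fun b ↦ funext fun c ↦ funext fun d ↦
      mul_smoothLinRiemann_eq p hT hsym hφ hφp hx a b c d
    have apply_functional := congrArg w tensor_eq
    rw [← smul_eq_mul, ← map_smul, ← map_add, ← map_add]
    refine apply_functional.trans ((map_add w _ _).trans ?_)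
    rw [hw _ fun a b ↦ by rw [hsym a b]; simp only [eq_comm], add_zero]
    rfl
  · have quotient_zero : (fun y ↦ φ y / poleDistSq p y) =ᶠ[nhds x] 0 := by
      filter_upwards [notMem_tsupport_iff_eventuallyEq.1 hx] with y hy
      simp [hy]
    have deriv_zero (a b c d : ι) : partialDeriv b
        (fun y ↦ φ y / poleDistSq p y * bubbleGradient p T a c d y) x = 0 := by
      have product_zero : (fun y ↦ φ y / poleDistSq p y * bubbleGradient p T a c d y)
          =ᶠ[nhds x] fun _ ↦ 0 := quotient_zero.mono fun y hy ↦ by simp [hy]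
      simp [partialDeriv, product_zero.fderiv_eq]
    have zero_tensor : (fun _ _ _ _ ↦ 0 : ι → ι → ι → ι → ℝ) = 0 := rfl
    simp only [deriv_zero, localizationError_eq_zero_of_notMem_tsupport hx, zero_tensor,
      image_eq_zero_of_notMem_tsupport hx, map_zero, zero_mul, add_zero]

lemma abs_localizationError_le (h0 : 0 ≤ ε) (h1 : ε ≤ 1) {x : ι → ℝ} (hx : x ∈ halfAnnulus l)
    (hφM : |φ x| ≤ M) (hdφM : ∀ b, |partialDeriv b φ x| ≤ M) (a b c d : ι) :
    |localizationError (Pi.single l ε) T φ x a b c d|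
      ≤ (7 + 6 * Fintype.card ι) * M * √(bubbleDensity (Pi.single l ε) T x) := by
  set N := poleDistSq (Pi.single l ε) x
  set D := √(bubbleDensity (Pi.single l ε) T x)
  have hN : 1 ≤ N := one_le_poleDistSq h0 hx
  have hM : 0 ≤ M := (abs_nonneg _).trans hφM
  have hΦ := fun a b c ↦ abs_bubbleGradient_le_sqrt_bubbleDensity (p := Pi.single l ε) (T := T)
    a b c x
  have hY := abs_add_pole_le_three h0 h1 hx
  have hYΦ (e a b c : ι) : |(x e + Pi.single (M := fun _ ↦ ℝ) l ε e)
      * bubbleGradient (Pi.single l ε) T a b c x| ≤ 3 * D := by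
    rw [abs_mul]
    exact mul_le_mul (hY e) (hΦ a b c) (abs_nonneg _) (by norm_num)
  have quotient_le {t k : ℝ} (ht : |t| ≤ M) (hk : 1 ≤ k) : |t / k| ≤ M := by
    rw [abs_div, abs_of_pos (one_pos.trans_le hk)]
    exact (div_le_self (abs_nonneg t) hk).trans ht
  have contraction_le : |(∑ e, (x e + Pi.single (M := fun _ ↦ ℝ) l ε e)
      * bubbleGradient (Pi.single l ε) T c e b x) * (if a = d then 1 else 0)|
        ≤ Fintype.card ι * (3 * D) := by
    refine (?_ : _ ≤ |∑ e, (x e + Pi.single (M := fun _ ↦ ℝ) l ε e)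
      * bubbleGradient (Pi.single l ε) T c e b x|).trans ?_
    · split_ifs <;> simp
    · exact (Finset.abs_sum_le_sum_abs _ _).trans
        ((Finset.sum_le_card_nsmul _ _ _ fun e _ ↦ hYΦ e c e b).trans_eq (by simp))
  calc |localizationError (Pi.single l ε) T φ x a b c d|
      ≤ 2 * M * (Fintype.card ι * (3 * D) + 3 * D) + M * D := by
        refine (abs_sub _ _).trans (add_le_add ?_ ?_)
        · rw [abs_mul, abs_mul, abs_two]
          gcongr
          · exact quotient_le hφM (one_le_pow₀ hN)
          · exact (abs_sub _ _).trans (add_le_add contraction_le (hYΦ c a d b))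
        · rw [abs_mul]
          exact mul_le_mul (quotient_le (hdφM b) hN) (hΦ a c d) (abs_nonneg _) hM
    _ = (7 + 6 * Fintype.card ι) * M * D := by ring

lemma norm_antisymmetrize_le {ι : Type*} [Fintype ι] {X : ι → ι → ι → ι → ℝ} {B : ℝ} (hB : 0 ≤ B)
    (hX : ∀ a b c d, |X a b c d| ≤ B) : ‖antisymmetrize X‖ ≤ 4 * B := by
  have h4B : 0 ≤ 4 * B := by positivity
  refine (pi_norm_le_iff_of_nonneg h4B).2 fun a ↦ (pi_norm_le_iff_of_nonneg h4B).2 fun b ↦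
    (pi_norm_le_iff_of_nonneg h4B).2 fun c ↦ (pi_norm_le_iff_of_nonneg h4B).2 fun d ↦ ?_
  rw [antisymmetrize_apply, Real.norm_eq_abs, abs_le]
  constructor <;> linarith [abs_le.1 (hX a b c d), abs_le.1 (hX b a c d), abs_le.1 (hX a b d c),
    abs_le.1 (hX b a d c)]

lemma integral_functional_antisymmetrize_partialDeriv_eq_zero
    (w : (ι → ι → ι → ι → ℝ) →ₗ[ℝ] ℝ) {g : ι → ι → ι → (ι → ℝ) → ℝ}
    (hg : ∀ a c d, ContDiff ℝ ∞ (g a c d)) (hgc : ∀ a c d, HasCompactSupport (g a c d)) :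
    Integrable (fun x ↦ w (antisymmetrize fun a b c d ↦ partialDeriv b (g a c d) x))
      ∧ ∫ x, w (antisymmetrize fun a b c d ↦ partialDeriv b (g a c d) x) = 0 := by
  have integrable_deriv (a b c d : ι) : Integrable (partialDeriv b (g a c d)) :=
    (contDiff_partialDeriv b (hg a c d)).continuous.integrable_of_hasCompactSupport
      (hasCompactSupport_partialDeriv (hgc a c d) b)
  have integrable_tensor : Integrable fun x a b c d ↦ partialDeriv b (g a c d) x :=
    .of_eval fun a ↦ .of_eval fun b ↦ .of_eval fun c ↦ .of_eval fun d ↦ integrable_deriv a b c d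
  let w' := (w ∘ₗ antisymmetrize).toContinuousLinearMap
  refine ⟨w'.integrable_comp integrable_tensor, ?_⟩
  have integral_tensor : ∫ x, (fun a b c d ↦ partialDeriv b (g a c d) x) = 0 := by
    funext a b c d
    rw [eval_integral fun a ↦ .of_eval fun b ↦ .of_eval fun c ↦ .of_eval fun d ↦
        integrable_deriv a b c d,
      eval_integral fun b ↦ .of_eval fun c ↦ .of_eval fun d ↦ integrable_deriv a b c d,
      eval_integral fun c ↦ .of_eval fun d ↦ integrable_deriv a b c d,
      eval_integral fun d ↦ integrable_deriv a b c d]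
    exact integral_partialDeriv_eq_zero (hg a c d) (hgc a c d) b
  calc ∫ x, w (antisymmetrize fun a b c d ↦ partialDeriv b (g a c d) x)
      = w' (∫ x, fun a b c d ↦ partialDeriv b (g a c d) x) :=
        w'.integral_comp_comm integrable_tensor
    _ = 0 := by rw [integral_tensor, map_zero]

lemma integral_mul_functional_smoothLinRiemann (p : ι → ℝ) (hT : ∀ a b, ContDiff ℝ ∞ (T a b))
    (hsym : ∀ a b, T a b = T b a) (hφ : ContDiff ℝ ∞ φ) (hφc : HasCompactSupport φ)
    (hφp : ∀ x ∈ tsupport φ, poleDistSq p x ≠ 0)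
    (hw : ∀ M : ι → ι → ℝ, (∀ a b, M a b = M b a) → w (kulkarniNomizu M) = 0) :
    ∫ x, φ x * w (fun a b c d ↦ smoothLinRiemann T a b c d x)
      = ∫ x, w (antisymmetrize (localizationError p T φ x)) := by
  have compact_quotient : HasCompactSupport fun x ↦ φ x / poleDistSq p x :=
    hφc.mono fun x hx h ↦ hx (by simp [h])
  obtain ⟨integrable_div, integral_div⟩ := integral_functional_antisymmetrize_partialDeriv_eq_zero
    w (fun a c d ↦ (contDiff_div_of_ne_zero_on_tsupport hφ (contDiff_poleDistSq p) hφp).mul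
      (contDiff_bubbleGradient p hT a c d)) (fun _ _ _ ↦ compact_quotient.mul_right)
  have smooth_entry (a b c d : ι) : ContDiff ℝ ∞ (smoothLinRiemann T a b c d) := by
    unfold smoothLinRiemann
    fun_prop
  have continuous_curvature : Continuous fun x ↦ w fun a b c d ↦ smoothLinRiemann T a b c d x :=
    w.toContinuousLinearMap.continuous.comp (continuous_pi fun a ↦ continuous_pi fun b ↦
      continuous_pi fun c ↦ continuous_pi fun d ↦ (smooth_entry a b c d).continuous)
  have integrable_curvature :
      Integrable fun x ↦ φ x * w fun a b c d ↦ smoothLinRiemann T a b c d x :=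
    (hφ.continuous.mul continuous_curvature).integrable_of_hasCompactSupport hφc.mul_right
  have error_eq (x : ι → ℝ) := eq_sub_of_add_eq'
    (mul_functional_smoothLinRiemann_eq p hT hsym hφ hφp hw x).symm
  simp only [error_eq]
  rw [integral_sub integrable_curvature integrable_div, integral_div, sub_zero]

lemma abs_functional_antisymmetrize_localizationError_le (h0 : 0 ≤ ε) (h1 : ε ≤ 1) {x : ι → ℝ}
    (hx : x ∈ halfAnnulus l) (hφM : |φ x| ≤ M) (hdφM : ∀ b, |partialDeriv b φ x| ≤ M) :
    |w (antisymmetrize (localizationError (Pi.single l ε) T φ x))|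
      ≤ 4 * ‖w.toContinuousLinearMap‖ * (7 + 6 * Fintype.card ι) * M
        * √(bubbleDensity (Pi.single l ε) T x) := by
  have hM : 0 ≤ M := (abs_nonneg _).trans hφM
  calc |w (antisymmetrize (localizationError (Pi.single l ε) T φ x))|
      ≤ ‖w.toContinuousLinearMap‖ * ‖antisymmetrize (localizationError (Pi.single l ε) T φ x)‖ :=
        w.toContinuousLinearMap.le_opNorm _
    _ ≤ ‖w.toContinuousLinearMap‖ * (4 * ((7 + 6 * Fintype.card ι) * M
          * √(bubbleDensity (Pi.single l ε) T x))) := by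
        gcongr
        exact norm_antisymmetrize_le (by positivity) (abs_localizationError_le h0 h1 hx hφM hdφM)
    _ = _ := by ring

lemma sq_integral_functional_smoothLinRiemann_le (h0 : 0 ≤ ε) (h1 : ε ≤ 1)
    (hT : ∀ a b, ContDiff ℝ ∞ (T a b)) (hsym : ∀ a b, T a b = T b a) (hφ : ContDiff ℝ ∞ φ)
    (hφc : HasCompactSupport φ) (hφl : tsupport φ ⊆ halfAnnulus l) (hφM : ∀ x, |φ x| ≤ M)
    (hdφM : ∀ x b, |partialDeriv b φ x| ≤ M)
    (hw : ∀ M : ι → ι → ℝ, (∀ a b, M a b = M b a) → w (kulkarniNomizu M) = 0) :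
    (∫ x, φ x * w (fun a b c d ↦ smoothLinRiemann T a b c d x)) ^ 2
      ≤ (4 * ‖w.toContinuousLinearMap‖ * (7 + 6 * Fintype.card ι) * M) ^ 2
        * (volume.real (halfAnnulus l) * bubbleEnergy l ε T) := by
  set K := 4 * ‖w.toContinuousLinearMap‖ * (7 + 6 * Fintype.card ι) * M
  set D := bubbleDensity (Pi.single l ε) T
  have hφp (x) (hx : x ∈ tsupport φ) : poleDistSq (Pi.single l ε) x ≠ 0 :=
    (one_pos.trans_le (one_le_poleDistSq h0 (hφl hx))).ne'
  have finite_volume : Fact (volume (halfAnnulus l) < ⊤) := ⟨(volume_halfAnnulus_ne_top l).lt_top⟩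
  have continuous_density : Continuous D := continuous_bubbleDensity hT
  have supported : ∀ x ∉ halfAnnulus l,
      w (antisymmetrize (localizationError (Pi.single l ε) T φ x)) = 0 := fun x hx ↦ by
    rw [localizationError_eq_zero_of_notMem_tsupport (mt (@hφl x) hx), map_zero, map_zero]
  have integral_le : |∫ x, φ x * w (fun a b c d ↦ smoothLinRiemann T a b c d x)|
      ≤ K * ∫ x in halfAnnulus l, √(D x) := by
    rw [integral_mul_functional_smoothLinRiemann (Pi.single l ε) hT hsym hφ hφc hφp hw,
      ← setIntegral_eq_integral_of_forall_compl_eq_zero supported, ← integral_const_mul,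
      ← Real.norm_eq_abs]
    have integrable_bound := (integrableOn_halfAnnulus continuous_density.sqrt l).const_mul K
    refine norm_integral_le_of_norm_le integrable_bound ?_
    filter_upwards [ae_restrict_mem (measurableSet_halfAnnulus l)] with x hx
    exact abs_functional_antisymmetrize_localizationError_le h0 h1 hx (hφM x) (hdφM x)
  have cauchy_schwarz : (∫ x in halfAnnulus l, √(D x)) ^ 2
      ≤ volume.real (halfAnnulus l) * bubbleEnergy l ε T := by
    have sq_sqrt (x : ι → ℝ) : √(D x) ^ 2 = D x := Real.sq_sqrt (bubbleDensity_nonneg x)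
    have := sq_integral_le_measureReal_mul_integral_sq
      (integrableOn_halfAnnulus continuous_density.sqrt l)
      (by simpa only [sq_sqrt] using! integrableOn_halfAnnulus continuous_density l)
    simpa only [sq_sqrt, measureReal_restrict_apply_univ] using! this
  calc _ ≤ (K * ∫ x in halfAnnulus l, √(D x)) ^ 2 := sq_le_sq' (abs_le.1 integral_le).1
        (abs_le.1 integral_le).2
    _ ≤ K ^ 2 * (volume.real (halfAnnulus l) * bubbleEnergy l ε T) := by
        rw [mul_pow]
        gcongr

/-- The interior estimate: the trace-free part of the curvature of `H` is controlled weakly by the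
energy of `H - S`, because `S` only contributes Kulkarni–Nomizu products. -/
lemma exists_sq_integral_functional_linRiemann_le (l : ι) (hφ : ContDiff ℝ ∞ φ)
    (hφc : HasCompactSupport φ) (hφl : tsupport φ ⊆ halfAnnulus l)
    (hw : ∀ M : ι → ι → ℝ, (∀ a b, M a b = M b a) → w (kulkarniNomizu M) = 0) :
    ∃ C, ∀ (ε : ℝ), 0 ≤ ε → ε ≤ 1 → ∀ (H : ι → ι → MvPolynomial ι ℝ) (V : ι → (ι → ℝ) → ℝ),
      (∀ a b, H a b = H b a) → (∀ a, ContDiff ℝ ∞ (V a)) →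
      (∫ x, φ x * w fun a b c d ↦ eval x (linRiemann H a b c d)) ^ 2
        ≤ C * bubbleEnergy l ε (gaugeDefect H V) := by
  obtain ⟨M₀, hM₀⟩ := hφ.continuous.bounded_above_of_compact_support hφc
  obtain ⟨M₁, hM₁⟩ := (hφ.continuous_fderiv (by simp)).bounded_above_of_compact_support
    (hφc.fderiv (𝕜 := ℝ))
  refine ⟨(4 * ‖w.toContinuousLinearMap‖ * (7 + 6 * Fintype.card ι) * max M₀ M₁) ^ 2
    * volume.real (halfAnnulus l), fun ε h0 h1 H V hH hV ↦ ?_⟩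
  have estimate := sq_integral_functional_smoothLinRiemann_le (l := l) (M := max M₀ M₁) h0 h1
    (contDiff_gaugeDefect (H := H) hV) (gaugeDefect_symm hH) hφ hφc hφl
    (fun x ↦ (hM₀ x).trans (le_max_left _ _))
    (fun x b ↦ (abs_partialDeriv_le_norm_fderiv b φ x).trans ((hM₁ x).trans (le_max_right _ _))) hw
  have functional_eq (x : ι → ℝ) :
      w (fun a b c d ↦ smoothLinRiemann (gaugeDefect H V) a b c d x)
        = w fun a b c d ↦ eval x (linRiemann H a b c d) := by
    simp only [smoothLinRiemann_gaugeDefect hV]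
    refine (map_add w _ _).trans ?_
    rw [hw _ fun a b ↦ partialDeriv_comm (contDiff_divFactor hV) a b x, add_zero]
  simpa only [functional_eq, mul_assoc] using! estimate

end InteriorEstimate

section BoundaryIdentity

variable {ι : Type*} [Fintype ι] [DecidableEq ι] {l : ι} {H : ι → ι → MvPolynomial ι ℝ}
  {V : ι → (ι → ℝ) → ℝ}

/-- The boundary conditions `V_l = 0` and `∂_l V_i = 0` for `i ≠ l` on the hyperplane `x_l = 0`. -/
structure IsBoundaryAdapted (l : ι) (V : ι → (ι → ℝ) → ℝ) : Prop where
  normal : ∀ x : ι → ℝ, x l = 0 → V l x = 0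
  tangential : ∀ i ≠ l, ∀ x : ι → ℝ, x l = 0 → partialDeriv l (V i) x = 0

lemma bubbleGradient_gaugeDefect_of_boundary (hV : ∀ a, ContDiff ℝ ∞ (V a))
    (hbd : IsBoundaryAdapted l V) (hHl : ∀ a, H a l = 0) (p : ι → ℝ) {x : ι → ℝ} (hx : x l = 0)
    {a b : ι} (ha : a ≠ l) (hb : b ≠ l) :
    bubbleGradient p (gaugeDefect H V) a b l x = poleDistSq p x
      * (eval x (pderiv l (H a b)) + partialDeriv l (divFactor V) x * if a = b then 1 else 0) := by
  have differentiable (f : (ι → ℝ) → ℝ) (hf : ContDiff ℝ ∞ f) : DifferentiableAt ℝ f x :=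
    hf.differentiable (by simp) x
  have normal_defect {i : ι} (hi : i ≠ l) : gaugeDefect H V i l x = 0 := by
    have tangential_deriv : partialDeriv i (V l) x = 0 :=
      partialDeriv_eq_zero_of_eq_zero_on_hyperplane hi (differentiable _ (hV l)) hbd.normal hx
    simp [gaugeDefect, hHl, tangential_deriv, hbd.tangential i hi x hx, hi]
  have mixed_deriv {i j : ι} (hi : i ≠ l) (hj : j ≠ l) :
      partialDeriv l (partialDeriv i (V j)) x = 0 := by
    rw [partialDeriv_comm (hV j)]
    exact partialDeriv_eq_zero_of_eq_zero_on_hyperplane hi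
      (differentiable _ (contDiff_partialDeriv l (hV j))) (hbd.tangential j hj) hx
  simp only [bubbleGradient, partialDeriv_gaugeDefect hV, normal_defect ha, normal_defect hb,
    mixed_deriv ha hb, mixed_deriv hb ha, if_neg ha, if_neg hb]
  ring

lemma abs_poleDistSq_mul_partialDeriv_divFactor_le_of_boundary (hV : ∀ a, ContDiff ℝ ∞ (V a))
    (hbd : IsBoundaryAdapted l V) (hHl : ∀ a, H a l = 0) (htr : ∑ a, H a a = 0) [Nontrivial ι]
    (p : ι → ℝ) {x : ι → ℝ} (hx : x l = 0) :
    |poleDistSq p x * partialDeriv l (divFactor V) x|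
      ≤ √(bubbleDensity p (gaugeDefect H V) x) := by
  set D := √(bubbleDensity p (gaugeDefect H V) x)
  obtain ⟨i, hi⟩ := exists_ne l
  set s := Finset.univ.erase l
  have card_pos : 0 < (s.card : ℝ) := by exact_mod_cast Finset.card_pos.2 ⟨i, by simp [s, hi]⟩
  have tangential (c : ι) (hc : c ∈ s) : c ≠ l := Finset.ne_of_mem_erase hc
  have tangential_trace : ∑ c ∈ s, eval x (pderiv l (H c c)) = 0 := by
    have H_ll : eval x (pderiv l (H l l)) = 0 := by rw [hHl, map_zero, map_zero]
    rw [Finset.sum_erase (f := fun c ↦ eval x (pderiv l (H c c))) _ H_ll, ← map_sum, ← map_sum,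
      htr, map_zero, map_zero]
  have trace_gradient : ∑ c ∈ s, bubbleGradient p (gaugeDefect H V) c c l x
      = s.card * (poleDistSq p x * partialDeriv l (divFactor V) x) := by
    rw [Finset.sum_congr rfl fun c hc ↦ bubbleGradient_gaugeDefect_of_boundary hV hbd hHl p hx
      (tangential c hc) (tangential c hc)]
    simp only [if_true, mul_one, ← Finset.mul_sum, Finset.sum_add_distrib, tangential_trace,
      Finset.sum_const, nsmul_eq_mul, zero_add]
    ring
  have sum_le : |∑ c ∈ s, bubbleGradient p (gaugeDefect H V) c c l x| ≤ s.card * D :=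
    (Finset.abs_sum_le_sum_abs _ _).trans ((Finset.sum_le_card_nsmul _ _ D fun c _ ↦
      abs_bubbleGradient_le_sqrt_bubbleDensity c c l x).trans_eq (nsmul_eq_mul _ _))
  rw [trace_gradient, abs_mul, abs_of_pos card_pos] at sum_le
  exact le_of_mul_le_mul_left sum_le card_pos

lemma sq_eval_pderiv_le_bubbleDensity_of_boundary (hV : ∀ a, ContDiff ℝ ∞ (V a))
    (hbd : IsBoundaryAdapted l V) (hHl : ∀ a, H a l = 0) (htr : ∑ a, H a a = 0) {p x : ι → ℝ}
    (hp : 1 ≤ poleDistSq p x) (hx : x l = 0) {a b : ι} (ha : a ≠ l) (hb : b ≠ l) :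
    eval x (pderiv l (H a b)) ^ 2 ≤ 4 * bubbleDensity p (gaugeDefect H V) x := by
  have : Nontrivial ι := ⟨a, l, ha⟩
  set D := √(bubbleDensity p (gaugeDefect H V) x) with hD
  have normal_deriv_eq : poleDistSq p x * eval x (pderiv l (H a b))
      = bubbleGradient p (gaugeDefect H V) a b l x
        - poleDistSq p x * partialDeriv l (divFactor V) x * (if a = b then 1 else 0) := by
    rw [bubbleGradient_gaugeDefect_of_boundary hV hbd hHl p hx ha hb]
    ring
  have normal_deriv_le : |poleDistSq p x * eval x (pderiv l (H a b))| ≤ D + D := by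
    rw [normal_deriv_eq]
    refine (abs_sub _ _).trans
      (add_le_add (abs_bubbleGradient_le_sqrt_bubbleDensity a b l x) ?_)
    split_ifs
    · rw [mul_one]
      exact abs_poleDistSq_mul_partialDeriv_divFactor_le_of_boundary hV hbd hHl htr p hx
    · simp [hD]
  have eval_le : |eval x (pderiv l (H a b))| ≤ D + D := by
    refine le_trans ?_ normal_deriv_le
    rw [abs_mul, abs_of_pos (one_pos.trans_le hp)]
    exact le_mul_of_one_le_left (abs_nonneg _) hp
  calc eval x (pderiv l (H a b)) ^ 2 ≤ (D + D) ^ 2 := sq_le_sq.2 (eval_le.trans (le_abs_self _))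
    _ = 4 * D ^ 2 := by ring
    _ = 4 * bubbleDensity p (gaugeDefect H V) x := by rw [Real.sq_sqrt (bubbleDensity_nonneg x)]

end BoundaryIdentity

section PointwiseBounds

variable {ι : Type*} [Fintype ι] [DecidableEq ι] {l : ι} {H : ι → ι → MvPolynomial ι ℝ}
  {V : ι → (ι → ℝ) → ℝ} {B : ℝ} {x : ι → ℝ}

/-- `B` bounds, at the point `x`, the derivatives of `H` up to order two and those of `V` of
orders one to three. -/
structure IsDerivBound (H : ι → ι → MvPolynomial ι ℝ) (V : ι → (ι → ℝ) → ℝ) (B : ℝ)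
    (x : ι → ℝ) : Prop where
  tensor : ∀ a b, |eval x (H a b)| ≤ B
  tensor_one : ∀ c a b, |eval x (pderiv c (H a b))| ≤ B
  tensor_two : ∀ d c a b, |eval x (pderiv d (pderiv c (H a b)))| ≤ B
  field_one : ∀ b a, |partialDeriv b (V a) x| ≤ B
  field_two : ∀ c b a, |partialDeriv c (partialDeriv b (V a)) x| ≤ B
  field_three : ∀ d c b a, |partialDeriv d (partialDeriv c (partialDeriv b (V a))) x| ≤ B

lemma partialDeriv_divFactor (hV : ∀ a, ContDiff ℝ ∞ (V a)) (c : ι) :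
    partialDeriv c (divFactor V)
      = fun x ↦ 2 / (Fintype.card ι : ℝ) * ∑ e, partialDeriv c (partialDeriv e (V e)) x := by
  funext x
  unfold divFactor
  simp (disch := fun_prop) only [partialDeriv_mul, partialDeriv_sum, partialDeriv_const, zero_mul,
    zero_add]

lemma abs_sub_conformalKilling_le {h s t q : ℝ} {P : Prop} [Decidable P] (hh : |h| ≤ B)
    (hs : |s| ≤ B) (ht : |t| ≤ B) (hq : |q| ≤ 2 * B) :
    |h - (s + t - q * if P then 1 else 0)| ≤ 5 * B := by
  have hB : 0 ≤ B := (abs_nonneg h).trans hh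
  rw [abs_le] at *
  split_ifs <;> constructor <;> linarith

lemma abs_two_div_card_mul_sum_le {ι : Type*} [Fintype ι] {f : ι → ℝ} (hB : 0 ≤ B)
    (hf : ∀ i, |f i| ≤ B) :
    |2 / (Fintype.card ι : ℝ) * ∑ i, f i| ≤ 2 * B := by
  have sum_le : |∑ i, f i| ≤ Fintype.card ι * B :=
    (Finset.abs_sum_le_sum_abs _ _).trans
      ((Finset.sum_le_card_nsmul _ _ B fun i _ ↦ hf i).trans_eq (by simp))
  rw [abs_mul, abs_div, abs_two, Nat.abs_cast]
  calc 2 / (Fintype.card ι : ℝ) * |∑ i, f i|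
      ≤ 2 / (Fintype.card ι : ℝ) * (Fintype.card ι * B) := by gcongr
    _ = 2 * B * (Fintype.card ι / Fintype.card ι) := by ring
    _ ≤ 2 * B := mul_le_of_le_one_right (by positivity) (div_self_le_one _)

namespace IsDerivBound

lemma abs_gaugeDefect_le (h : IsDerivBound H V B x) (a b : ι) :
    |gaugeDefect H V a b x| ≤ 5 * B :=
  abs_sub_conformalKilling_le (h.tensor a b) (h.field_one a b) (h.field_one b a)
    (abs_two_div_card_mul_sum_le ((abs_nonneg _).trans (h.tensor a b)) fun c ↦ h.field_one c c)

lemma abs_partialDeriv_gaugeDefect_le (h : IsDerivBound H V B x) (hV : ∀ a, ContDiff ℝ ∞ (V a))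
    (c a b : ι) : |partialDeriv c (gaugeDefect H V a b) x| ≤ 5 * B := by
  rw [partialDeriv_gaugeDefect hV]
  refine abs_sub_conformalKilling_le (h.tensor_one c a b) (h.field_two c a b)
    (h.field_two c b a) ?_
  rw [partialDeriv_divFactor hV]
  exact abs_two_div_card_mul_sum_le ((abs_nonneg _).trans (h.tensor a b))
    fun e ↦ h.field_two c e e

lemma abs_partialDeriv_partialDeriv_gaugeDefect_le (h : IsDerivBound H V B x)
    (hV : ∀ a, ContDiff ℝ ∞ (V a)) (d c a b : ι) :
    |partialDeriv d (partialDeriv c (gaugeDefect H V a b)) x| ≤ 5 * B := by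
  rw [partialDeriv_partialDeriv_gaugeDefect hV]
  refine abs_sub_conformalKilling_le (h.tensor_two d c a b) (h.field_three d c a b)
    (h.field_three d c b a) ?_
  rw [partialDeriv_divFactor hV]
  simp (disch := fun_prop) only [partialDeriv_mul, partialDeriv_sum, partialDeriv_const, zero_mul,
    zero_add]
  exact abs_two_div_card_mul_sum_le ((abs_nonneg _).trans (h.tensor a b))
    fun e ↦ h.field_three d c e e

end IsDerivBound

variable {T : ι → ι → (ι → ℝ) → ℝ}

lemma abs_partialDeriv_bubbleGradient_le (hT : ∀ a b, ContDiff ℝ ∞ (T a b)) {ε : ℝ} (h0 : 0 ≤ ε)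
    (h1 : ε ≤ 1) (hx : x ∈ halfAnnulus l) (hTB : ∀ a b, |T a b x| ≤ B)
    (hT₁ : ∀ c a b, |partialDeriv c (T a b) x| ≤ B)
    (hT₂ : ∀ d c a b, |partialDeriv d (partialDeriv c (T a b)) x| ≤ B) (a b c e : ι) :
    |partialDeriv e (bubbleGradient (Pi.single l ε) T a b c) x|
      ≤ (35 + 12 * Fintype.card ι) * B := by
  have hB : 0 ≤ B := (abs_nonneg _).trans (hTB a b)
  have hY := abs_add_pole_le_three h0 h1 hx
  have mul_le_three {y t : ℝ} (hy : |y| ≤ 3) (ht : |t| ≤ B) : |y * t| ≤ 3 * B := by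
    rw [abs_mul]
    exact mul_le_mul hy ht (abs_nonneg _) (by norm_num)
  have contraction_le (i j : ι) : |(T i e x + ∑ d, (x d + Pi.single (M := fun _ ↦ ℝ) l ε d)
      * partialDeriv e (T i d) x) * (if j = c then 1 else 0)|
        ≤ B + Fintype.card ι * (3 * B) := by
    have sum_le : |∑ d, (x d + Pi.single (M := fun _ ↦ ℝ) l ε d) * partialDeriv e (T i d) x|
        ≤ Fintype.card ι * (3 * B) :=
      (Finset.abs_sum_le_sum_abs _ _).trans ((Finset.sum_le_card_nsmul _ _ _ fun d _ ↦
        mul_le_three (hY d) (hT₁ e i d)).trans_eq (by simp))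
    split_ifs
    · rw [mul_one]
      exact (abs_add_le _ _).trans (add_le_add (hTB i e) sum_le)
    · rw [mul_zero, abs_zero]
      positivity
  have delta_le (i j k : ι) : |(if i = e then 1 else 0) * T j k x| ≤ B := by
    split_ifs
    · simpa using hTB j k
    · simpa using hB
  have leading_le : |poleDistSq (Pi.single l ε) x * partialDeriv e (partialDeriv c (T a b)) x|
      ≤ 9 * B := by
    have pole_nonneg := zero_le_one.trans (one_le_poleDistSq h0 hx)
    rw [abs_mul, abs_of_nonneg pole_nonneg]
    exact mul_le_mul (poleDistSq_le_nine h0 h1 hx) (hT₂ e c a b) (abs_nonneg _) (by norm_num)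
  rw [partialDeriv_bubbleGradient _ hT, mul_assoc 2]
  have position_le := mul_le_three (hY e) (hT₁ c a b)
  have left_le := mul_le_three (hY a) (hT₁ e b c)
  have right_le := mul_le_three (hY b) (hT₁ e a c)
  have contract_left := contraction_le a b
  have contract_right := contraction_le b a
  have delta_left := delta_le a b c
  have delta_right := delta_le b a c
  rw [abs_le] at *
  constructor <;> linarith

lemma IsDerivBound.norm_fderiv_bubbleGradient_le (h : IsDerivBound H V B x)
    (hV : ∀ a, ContDiff ℝ ∞ (V a)) {ε : ℝ} (h0 : 0 ≤ ε) (h1 : ε ≤ 1) (hx : x ∈ halfAnnulus l)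
    (a b c : ι) :
    ‖fderiv ℝ (bubbleGradient (Pi.single l ε) (gaugeDefect H V) a b c) x‖
      ≤ Fintype.card ι * ((35 + 12 * Fintype.card ι) * (5 * B)) :=
  (norm_fderiv_le_sum_abs_partialDeriv _ x).trans
    ((Finset.sum_le_card_nsmul _ _ _ fun e _ ↦
      abs_partialDeriv_bubbleGradient_le (contDiff_gaugeDefect hV) h0 h1 hx h.abs_gaugeDefect_le
        (h.abs_partialDeriv_gaugeDefect_le hV) (h.abs_partialDeriv_partialDeriv_gaugeDefect_le hV)
        a b c e).trans_eq (by simp))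

end PointwiseBounds

section HalfBall

variable {ι : Type*} [Fintype ι] {l : ι} {x : ι → ℝ} {ρ : ℝ}

lemma measureReal_mul_sq_le {E : Type*} [NormedAddCommGroup E] [NormedSpace ℝ E]
    [MeasurableSpace E] {μ : Measure E} {s : Set E} (hs : Convex ℝ s) (hsm : MeasurableSet s)
    (hμ : μ s ≠ ⊤) {x : E} (hx : x ∈ s) (hρ : s ⊆ Metric.closedBall x ρ) {f : E → ℝ} {K : ℝ}
    (hf : ∀ y ∈ s, DifferentiableAt ℝ f y) (hK : ∀ y ∈ s, ‖fderiv ℝ f y‖ ≤ K)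
    (hf2 : IntegrableOn (fun y ↦ f y ^ 2) s μ) :
    μ.real s * f x ^ 2 ≤ 2 * ∫ y in s, f y ^ 2 ∂μ + 2 * (K * ρ) ^ 2 * μ.real s := by
  have : Fact (μ s < ⊤) := ⟨hμ.lt_top⟩
  have hK0 : 0 ≤ K := (norm_nonneg _).trans (hK x hx)
  have integrable_twice : IntegrableOn (fun y ↦ 2 * f y ^ 2) s μ := hf2.const_mul 2
  have pointwise : ∀ y ∈ s, f x ^ 2 ≤ 2 * f y ^ 2 + 2 * (K * ρ) ^ 2 := fun y hy ↦ by
    have oscillation : |f x - f y| ≤ K * ρ :=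
      (hs.norm_image_sub_le_of_norm_fderiv_le hf hK hy hx).trans (by
        rw [← dist_eq_norm, dist_comm]
        gcongr
        exact hρ hy)
    have := sq_le_sq' (abs_le.1 oscillation).1 (abs_le.1 oscillation).2
    nlinarith [sq_nonneg (f x - 2 * f y)]
  calc μ.real s * f x ^ 2 = ∫ _ in s, f x ^ 2 ∂μ := by simp
    _ ≤ ∫ y in s, (2 * f y ^ 2 + 2 * (K * ρ) ^ 2) ∂μ :=
        setIntegral_mono_on integrableOn_const (integrable_twice.add integrableOn_const) hsm
          pointwise
    _ = 2 * ∫ y in s, f y ^ 2 ∂μ + 2 * (K * ρ) ^ 2 * μ.real s := by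
        rw [integral_add integrable_twice integrableOn_const, integral_const_mul]
        simp [mul_comm]

/-- The closed half ball around `x` in the half space `0 ≤ y l`, for the sup norm. -/
def halfBall (l : ι) (x : ι → ℝ) (ρ : ℝ) : Set (ι → ℝ) := {y | 0 ≤ y l} ∩ Metric.closedBall x ρ

lemma convex_halfBall : Convex ℝ (halfBall l x ρ) :=
  (convex_halfSpace_ge (IsLinearMap.mk (fun _ _ ↦ rfl) fun _ _ ↦ rfl) 0).inter
    (convex_closedBall x ρ)

lemma isCompact_halfBall : IsCompact (halfBall l x ρ) :=
  (isCompact_closedBall x ρ).inter_left (isClosed_le continuous_const (continuous_apply l))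

lemma measureReal_halfBall_pos (hx : x l = 0) (hρ : 0 < ρ) :
    0 < volume.real (halfBall l x ρ) := by
  classical
  have isOpen_interior : IsOpen ({y : ι → ℝ | 0 < y l} ∩ Metric.ball x ρ) :=
    (isOpen_lt continuous_const (continuous_apply l)).inter Metric.isOpen_ball
  have nonempty_interior : ({y : ι → ℝ | 0 < y l} ∩ Metric.ball x ρ).Nonempty := by
    refine ⟨x + Pi.single l (ρ / 2), ?_, ?_⟩
    · simp [hx, hρ]
    · simp [Pi.norm_single, abs_of_pos hρ, hρ]
  have interior_subset : {y : ι → ℝ | 0 < y l} ∩ Metric.ball x ρ ⊆ halfBall l x ρ :=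
    Set.inter_subset_inter (fun y (hy : 0 < y l) ↦ hy.le) Metric.ball_subset_closedBall
  exact ENNReal.toReal_pos
    ((isOpen_interior.measure_pos volume nonempty_interior).trans_le (measure_mono
      interior_subset)).ne' isCompact_halfBall.measure_lt_top.ne

lemma exists_halfBall_subset_halfAnnulus (l : ι) (hx1 : 1 < ∑ a, x a ^ 2)
    (hx4 : ∑ a, x a ^ 2 < 4) : ∃ ρ₀ > 0, ∀ ρ < ρ₀, halfBall l x ρ ⊆ halfAnnulus l := by
  obtain ⟨ρ₀, hρ₀, hball⟩ := Metric.isOpen_iff.1 (isOpen_annulus (ι := ι)) x ⟨hx1, hx4⟩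
  refine ⟨ρ₀, hρ₀, fun ρ hρ y hy ↦ ?_⟩
  have := hball (Metric.closedBall_subset_ball hρ hy.2)
  exact ⟨hy.1, this.1.le, this.2⟩

variable [DecidableEq ι] {H : ι → ι → MvPolynomial ι ℝ} {V : ι → (ι → ℝ) → ℝ} {ε B : ℝ}

lemma setIntegral_bubbleDensity {p : ι → ℝ} {T : ι → ι → (ι → ℝ) → ℝ}
    (hT : ∀ a b, ContDiff ℝ ∞ (T a b)) {s : Set (ι → ℝ)} (hs : IsCompact s) :
    ∫ y in s, bubbleDensity p T y = ∑ a, ∑ b, ∑ c, ∫ y in s, bubbleGradient p T a b c y ^ 2 := by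
  have integrable_sq (a b c : ι) : IntegrableOn (fun y ↦ bubbleGradient p T a b c y ^ 2) s :=
    ((contDiff_bubbleGradient p hT a b c).continuous.pow 2).continuousOn.integrableOn_compact hs
  unfold bubbleDensity
  rw [integral_finsetSum _ fun a _ ↦ integrable_finsetSum _ fun b _ ↦
    integrable_finsetSum _ fun c _ ↦ integrable_sq a b c]
  refine Finset.sum_congr rfl fun a _ ↦ ?_
  rw [integral_finsetSum _ fun b _ ↦ integrable_finsetSum _ fun c _ ↦ integrable_sq a b c]
  exact Finset.sum_congr rfl fun b _ ↦ integral_finsetSum _ fun c _ ↦ integrable_sq a b c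

lemma measureReal_mul_bubbleDensity_le (hV : ∀ a, ContDiff ℝ ∞ (V a)) (h0 : 0 ≤ ε) (h1 : ε ≤ 1)
    (hB : ∀ y ∈ halfAnnulus l, IsDerivBound H V B y) (hx : x l = 0) (hρ : 0 ≤ ρ)
    (hsub : halfBall l x ρ ⊆ halfAnnulus l) :
    volume.real (halfBall l x ρ) * bubbleDensity (Pi.single l ε) (gaugeDefect H V) x
      ≤ 2 * bubbleEnergy l ε (gaugeDefect H V)
        + 2 * Fintype.card ι ^ 3
          * (Fintype.card ι * ((35 + 12 * Fintype.card ι) * (5 * B)) * ρ) ^ 2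
          * volume.real (halfBall l x ρ) := by
  set T := gaugeDefect H V
  set s := halfBall l x ρ
  set K := Fintype.card ι * ((35 + 12 * Fintype.card ι) * (5 * B))
  have hT : ∀ a b, ContDiff ℝ ∞ (T a b) := contDiff_gaugeDefect hV
  have compact : IsCompact s := isCompact_halfBall
  have component_le (a b c : ι) : volume.real s * bubbleGradient (Pi.single l ε) T a b c x ^ 2
      ≤ 2 * (∫ y in s, bubbleGradient (Pi.single l ε) T a b c y ^ 2)
        + 2 * (K * ρ) ^ 2 * volume.real s := by
    have smooth := contDiff_bubbleGradient (Pi.single l ε) hT a b c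
    exact measureReal_mul_sq_le convex_halfBall compact.measurableSet compact.measure_lt_top.ne
      ⟨hx.ge, Metric.mem_closedBall_self hρ⟩ Set.inter_subset_right
      (fun y _ ↦ smooth.differentiable (by simp) y)
      (fun y hy ↦ (hB y (hsub hy)).norm_fderiv_bubbleGradient_le hV h0 h1 (hsub hy) a b c)
      ((smooth.continuous.pow 2).continuousOn.integrableOn_compact compact)
  calc volume.real s * bubbleDensity (Pi.single l ε) T x
      ≤ ∑ a, ∑ b, ∑ c, (2 * (∫ y in s, bubbleGradient (Pi.single l ε) T a b c y ^ 2)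
        + 2 * (K * ρ) ^ 2 * volume.real s) := by
        simp only [bubbleDensity, Finset.mul_sum]
        exact Finset.sum_le_sum fun a _ ↦ Finset.sum_le_sum fun b _ ↦
          Finset.sum_le_sum fun c _ ↦ component_le a b c
    _ = 2 * (∫ y in s, bubbleDensity (Pi.single l ε) T y)
        + 2 * Fintype.card ι ^ 3 * (K * ρ) ^ 2 * volume.real s := by
        rw [setIntegral_bubbleDensity hT compact]
        simp only [Finset.sum_add_distrib, ← Finset.mul_sum, Finset.sum_const, Finset.card_univ,
          nsmul_eq_mul]
        ring
    _ ≤ 2 * bubbleEnergy l ε T + 2 * Fintype.card ι ^ 3 * (K * ρ) ^ 2 * volume.real s := by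
        have integrable_density := integrableOn_halfAnnulus
          (continuous_bubbleDensity (p := Pi.single l ε) hT) l
        gcongr
        exact setIntegral_mono_set integrable_density (.of_forall bubbleDensity_nonneg)
          hsub.eventuallyLE

/-- The boundary estimate: up to an error proportional to the size of `H` and `V`, with an
arbitrarily small factor, the normal derivative of `H` on the flat boundary is controlled by the
energy of `H - S`. -/
lemma exists_sq_eval_pderiv_le (hx : x l = 0) (hx1 : 1 < ∑ a, x a ^ 2) (hx4 : ∑ a, x a ^ 2 < 4)
    {δ : ℝ} (hδ : 0 < δ) :
    ∃ C, ∀ (ε B : ℝ) (H : ι → ι → MvPolynomial ι ℝ) (V : ι → (ι → ℝ) → ℝ), 0 ≤ ε → ε ≤ 1 →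
      (∀ a, ContDiff ℝ ∞ (V a)) → IsBoundaryAdapted l V → (∀ a, H a l = 0) → ∑ a, H a a = 0 →
      (∀ y ∈ halfAnnulus l, IsDerivBound H V B y) → ∀ a b, a ≠ l → b ≠ l →
      eval x (pderiv l (H a b)) ^ 2 ≤ δ * B ^ 2 + C * bubbleEnergy l ε (gaugeDefect H V) := by
  obtain ⟨ρ₀, hρ₀, hsub⟩ := exists_halfBall_subset_halfAnnulus l hx1 hx4
  set n := (Fintype.card ι : ℝ)
  set A := 8 * n ^ 3 * (n * ((35 + 12 * n) * 5)) ^ 2 with hA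
  obtain ⟨ρ, hρ, hρA⟩ : ∃ ρ ∈ Set.Ioo 0 ρ₀, A * ρ ^ 2 ≤ δ := by
    have tendsto_zero : Filter.Tendsto (fun ρ ↦ A * ρ ^ 2) (nhdsWithin 0 (Set.Ioi 0))
        (nhds (A * 0 ^ 2)) :=
      (Continuous.tendsto (by fun_prop) 0).mono_left nhdsWithin_le_nhds
    have eventually_le := tendsto_zero.eventually_le_const (u := δ) (by simpa using hδ)
    exact (Filter.Eventually.and (Ioo_mem_nhdsGT hρ₀) eventually_le).exists
  set v := volume.real (halfBall l x ρ)
  have hv : 0 < v := measureReal_halfBall_pos hx hρ.1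
  refine ⟨8 / v, fun ε B H V h0 h1 hV hbd hHl htr hB a b ha hb ↦ ?_⟩
  set D := bubbleDensity (Pi.single l ε) (gaugeDefect H V) x
  have boundary_point : x ∈ halfAnnulus l := ⟨hx.ge, hx1.le, hx4⟩
  have averaged : v * D ≤ 2 * bubbleEnergy l ε (gaugeDefect H V)
      + 2 * n ^ 3 * (n * ((35 + 12 * n) * (5 * B)) * ρ) ^ 2 * v :=
    measureReal_mul_bubbleDensity_le hV h0 h1 hB hx hρ.1.le (hsub ρ hρ.2)
  calc eval x (pderiv l (H a b)) ^ 2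
      ≤ 4 * D := sq_eval_pderiv_le_bubbleDensity_of_boundary hV hbd hHl htr
        (one_le_poleDistSq h0 boundary_point) hx ha hb
    _ ≤ A * ρ ^ 2 * B ^ 2 + 8 / v * bubbleEnergy l ε (gaugeDefect H V) := by
        refine le_of_mul_le_mul_left ?_ hv
        calc v * (4 * D) = 4 * (v * D) := by ring
          _ ≤ 4 * (2 * bubbleEnergy l ε (gaugeDefect H V)
              + 2 * n ^ 3 * (n * ((35 + 12 * n) * (5 * B)) * ρ) ^ 2 * v) := by gcongr
          _ = v * (A * ρ ^ 2 * B ^ 2 + 8 / v * bubbleEnergy l ε (gaugeDefect H V)) := by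
            rw [hA]
            field_simp
            ring
    _ ≤ δ * B ^ 2 + 8 / v * bubbleEnergy l ε (gaugeDefect H V) := by gcongr

end HalfBall

section Estimable

variable {α E : Type*} [NormedAddCommGroup E] [NormedSpace ℝ E]

/-- The functionals on `E` whose square, along the family `κ`, is controlled by the energy `J` up
to an arbitrarily small multiple of the squared norm. -/
def estimable (κ : α → E) (J : α → ℝ) : Submodule ℝ (Module.Dual ℝ E) where
  carrier := {f | ∀ δ > 0, ∃ C, ∀ a, f (κ a) ^ 2 ≤ δ * ‖κ a‖ ^ 2 + C * J a}
  zero_mem' δ hδ := ⟨0, fun a ↦ by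
    rw [LinearMap.zero_apply, zero_pow two_ne_zero, zero_mul, add_zero]; positivity⟩
  add_mem' {f g} hf hg δ hδ := by
    obtain ⟨C, hC⟩ := hf (δ / 4) (by positivity)
    obtain ⟨D, hD⟩ := hg (δ / 4) (by positivity)
    refine ⟨2 * (C + D), fun a ↦ ?_⟩
    rw [LinearMap.add_apply]
    nlinarith [hC a, hD a, sq_nonneg (f (κ a) - g (κ a))]
  smul_mem' c f hf δ hδ := by
    obtain ⟨C, hC⟩ := hf (δ / (c ^ 2 + 1)) (by positivity)
    refine ⟨c ^ 2 * C, fun a ↦ ?_⟩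
    calc (c • f) (κ a) ^ 2 = c ^ 2 * f (κ a) ^ 2 := by
          rw [LinearMap.smul_apply, smul_eq_mul, mul_pow]
      _ ≤ c ^ 2 * (δ / (c ^ 2 + 1) * ‖κ a‖ ^ 2 + C * J a) := by gcongr; exact hC a
      _ = c ^ 2 / (c ^ 2 + 1) * (δ * ‖κ a‖ ^ 2) + c ^ 2 * C * J a := by ring
      _ ≤ δ * ‖κ a‖ ^ 2 + c ^ 2 * C * J a := by
        have factor_le : c ^ 2 / (c ^ 2 + 1) ≤ 1 :=
          div_le_one_of_le₀ (by linarith) (by positivity)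
        linarith [mul_le_of_le_one_left (show 0 ≤ δ * ‖κ a‖ ^ 2 by positivity) factor_le]

lemma exists_sq_norm_le_sum_sq_coord {ι : Type*} [Fintype ι] (b : Module.Basis ι ℝ E) :
    ∃ M, 0 < M ∧ ∀ k, ‖k‖ ^ 2 ≤ M * ∑ i, b.coord i k ^ 2 := by
  obtain ⟨M, hM, hbound⟩ := b.equivFunL.symm.toContinuousLinearMap.bound
  refine ⟨M ^ 2, by positivity, fun k ↦ ?_⟩
  have norm_le : ‖k‖ ≤ M * ‖b.equivFunL k‖ := by simpa using hbound (b.equivFunL k)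
  have sup_le : ‖b.equivFunL k‖ ≤ √(∑ i, b.coord i k ^ 2) := by
    refine (pi_norm_le_iff_of_nonneg (Real.sqrt_nonneg _)).2 fun i ↦ Real.abs_le_sqrt ?_
    exact Finset.single_le_sum (f := fun i ↦ b.coord i k ^ 2) (fun i _ ↦ sq_nonneg _)
      (Finset.mem_univ i)
  calc ‖k‖ ^ 2 ≤ (M * √(∑ i, b.coord i k ^ 2)) ^ 2 := by gcongr; exact norm_le.trans (by gcongr)
    _ = M ^ 2 * ∑ i, b.coord i k ^ 2 := by
      rw [mul_pow, Real.sq_sqrt (Finset.sum_nonneg fun i _ ↦ sq_nonneg _)]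

/-- When the estimable functionals separate points they exhaust the dual, and summing the estimates
of the coordinates lets the small multiples of the norm be absorbed. -/
lemma exists_sq_norm_le_of_estimable_separating [FiniteDimensional ℝ E] {κ : α → E}
    {J : α → ℝ} (hsep : ∀ k, (∀ f ∈ estimable κ J, f k = 0) → k = 0) :
    ∃ C, ∀ a, ‖κ a‖ ^ 2 ≤ C * J a := by
  have coannihilator_eq_bot : (estimable κ J).dualCoannihilator = ⊥ :=
    eq_bot_iff.2 fun k hk ↦ hsep k ((Submodule.mem_dualCoannihilator k).1 hk)
  have estimable_eq_top : estimable κ J = ⊤ := by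
    rw [← Subspace.dualCoannihilator_dualAnnihilator_eq (W := estimable κ J), coannihilator_eq_bot,
      Submodule.dualAnnihilator_bot]
  let b := Module.finBasis ℝ E
  set n := Module.finrank ℝ E
  obtain ⟨M, hM, hb⟩ := exists_sq_norm_le_sum_sq_coord b
  have coord_estimable (i : Fin n) : b.coord i ∈ estimable κ J :=
    estimable_eq_top ▸ Submodule.mem_top
  choose C hC using fun i ↦ coord_estimable i (1 / (2 * M * (n + 1))) (by positivity)
  refine ⟨2 * M * ∑ i, C i, fun a ↦ ?_⟩
  have norm_le : ‖κ a‖ ^ 2 ≤ n / (2 * (n + 1)) * ‖κ a‖ ^ 2 + M * (∑ i, C i) * J a :=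
    calc ‖κ a‖ ^ 2 ≤ M * ∑ i, (1 / (2 * M * (n + 1)) * ‖κ a‖ ^ 2 + C i * J a) :=
          (hb _).trans (by gcongr with i; exact hC i a)
      _ = n / (2 * (n + 1)) * ‖κ a‖ ^ 2 + M * (∑ i, C i) * J a := by
        rw [Finset.sum_add_distrib, Finset.sum_const, Finset.card_univ, Fintype.card_fin,
          nsmul_eq_mul, ← Finset.sum_mul]
        field_simp
  have factor_le : (n : ℝ) / (2 * (n + 1)) ≤ 1 / 2 := by
    rw [div_le_iff₀ (by positivity)]
    linarith
  linarith [mul_le_mul_of_nonneg_right factor_le (sq_nonneg ‖κ a‖)]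

end Estimable

section Weyl

variable {ι : Type*} [Fintype ι] [DecidableEq ι]

/-- The Schouten tensor of an algebraic curvature tensor: the unique candidate `M` for which the
tensor can be the Kulkarni–Nomizu product of `M` with the metric. -/
noncomputable def schouten {R : Type*} [CommRing R] [Algebra ℝ R] (X : ι → ι → ι → ι → R)
    (a c : ι) : R :=
  ((Fintype.card ι : ℝ) - 2)⁻¹ • (∑ b, X a b c b
    - (2 * (Fintype.card ι : ℝ) - 2)⁻¹ • ((∑ e, ∑ b, X e b e b) * if a = c then 1 else 0))

lemma schouten_kulkarniNomizu (hι : 3 ≤ Fintype.card ι) (M : ι → ι → ℝ) :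
    schouten (kulkarniNomizu M) = M := by
  have three_le : (3 : ℝ) ≤ Fintype.card ι := mod_cast hι
  have card_sub_two : (Fintype.card ι : ℝ) - 2 ≠ 0 := by linarith
  have two_card_sub_two : 2 * (Fintype.card ι : ℝ) - 2 ≠ 0 := by linarith
  ext a c
  rw [schouten, sum_kulkarniNomizu, sum_sum_kulkarniNomizu, smul_eq_mul, smul_eq_mul, mul_assoc,
    inv_mul_cancel_left₀ two_card_sub_two, add_sub_cancel_right,
    inv_mul_cancel_left₀ card_sub_two]

lemma eval_schouten (x : ι → ℝ) (X : ι → ι → ι → ι → MvPolynomial ι ℝ) (a c : ι) :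
    eval x (schouten X a c) = schouten (fun a b c d ↦ eval x (X a b c d)) a c := by
  simp only [schouten, smul_eval, smul_eq_mul, map_sub, map_mul, map_sum,
    apply_ite (eval x), map_one, map_zero]

lemma schouten_linRiemann_comm {H : ι → ι → MvPolynomial ι ℝ} (hsym : ∀ a b, H a b = H b a)
    (a c : ι) : schouten (linRiemann H) a c = schouten (linRiemann H) c a := by
  have ricci_comm (b : ι) : linRiemann H a b c b = linRiemann H c b a b := by
    simp only [linRiemann, hsym c a, hsym c b, hsym a b, pderiv_pderiv_comm b c,
      pderiv_pderiv_comm b a, pderiv_pderiv_comm a c]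
    ring
  simp only [schouten, ricci_comm, eq_comm (a := a) (b := c)]

/-- A component of the Weyl part of an algebraic curvature tensor. -/
noncomputable def weylComponent (a b c d : ι) : (ι → ι → ι → ι → ℝ) →ₗ[ℝ] ℝ where
  toFun X := X a b c d - kulkarniNomizu (schouten X) a b c d
  map_add' X Y := by
    simp only [kulkarniNomizu, schouten, Pi.add_apply, Finset.sum_add_distrib, smul_eq_mul]
    ring
  map_smul' t X := by
    simp only [kulkarniNomizu, schouten, Pi.smul_apply, smul_eq_mul, ← Finset.mul_sum,
      RingHom.id_apply]
    ring

lemma weylComponent_kulkarniNomizu (hι : 3 ≤ Fintype.card ι) (M : ι → ι → ℝ) (a b c d : ι) :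
    weylComponent a b c d (kulkarniNomizu M) = 0 := by
  simp only [weylComponent, LinearMap.coe_mk, AddHom.coe_mk, schouten_kulkarniNomizu hι, sub_self]

lemma weylComponent_eval (x : ι → ℝ) (X : ι → ι → ι → ι → MvPolynomial ι ℝ) (a b c d : ι) :
    weylComponent a b c d (fun a b c d ↦ eval x (X a b c d))
      = eval x (X a b c d - kulkarniNomizu (schouten X) a b c d) := by
  simp only [weylComponent, LinearMap.coe_mk, AddHom.coe_mk, kulkarniNomizu, map_sub, map_add,
    map_mul, apply_ite (eval x), map_one, map_zero, eval_schouten]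

end Weyl

section PolynomialVanishing

variable {ι : Type*} {p : MvPolynomial ι ℝ} {s : Set (ι → ℝ)}

lemma eq_zero_of_eval_eq_zero_on_isOpen [Finite ι] (hs : IsOpen s) (hne : s.Nonempty)
    (h : ∀ x ∈ s, eval x p = 0) : p = 0 := by
  have := Fintype.ofFinite ι
  obtain ⟨y, hy⟩ := hne
  obtain ⟨δ, hδ, hball⟩ := Metric.isOpen_iff.1 hs y hy
  refine funext_set (fun i ↦ Metric.ball (y i) δ) (fun i ↦ ?_) fun x hx ↦ ?_
  · rw [Real.ball_eq_Ioo]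
    exact Set.Ioo_infinite (by linarith)
  · rw [map_zero]
    exact h x (hball (by rwa [ball_pi y hδ]))

lemma eq_zero_of_integral_mul_eval_eq_zero [Fintype ι] (hs : IsOpen s) (hne : s.Nonempty)
    (h : ∀ φ : (ι → ℝ) → ℝ, ContDiff ℝ ∞ φ → HasCompactSupport φ → tsupport φ ⊆ s →
      ∫ x, φ x * eval x p = 0) : p = 0 := by
  have continuous_eval : Continuous fun x ↦ eval x p := p.continuous_eval
  have ae_zero := hs.ae_eq_zero_of_integral_contDiff_smul_eq_zero (μ := volume)
    (continuous_eval.locallyIntegrable.locallyIntegrableOn s) h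
  exact eq_zero_of_eval_eq_zero_on_isOpen hs hne <| Measure.eqOn_open_of_ae_eq
    ((ae_restrict_iff' hs.measurableSet).2 ae_zero) hs continuous_eval.continuousOn
    continuousOn_const

end PolynomialVanishing

section Core

variable {ι : Type*} [Fintype ι]

/-- Integration of a polynomial against a compactly supported continuous function. -/
noncomputable def testIntegral (φ : (ι → ℝ) → ℝ) (hφ : Continuous φ) (hφc : HasCompactSupport φ) :
    MvPolynomial ι ℝ →ₗ[ℝ] ℝ :=
  have integrable (p : MvPolynomial ι ℝ) : Integrable fun x ↦ φ x * eval x p :=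
    (hφ.mul p.continuous_eval).integrable_of_hasCompactSupport hφc.mul_right
  { toFun p := ∫ x, φ x * eval x p
    map_add' p q := by
      simp only [map_add, mul_add]
      exact integral_add (integrable p) (integrable q)
    map_smul' t p := by
      simp only [smul_eval, mul_left_comm _ t, integral_const_mul, RingHom.id_apply, smul_eq_mul] }

variable [DecidableEq ι]

/-- A component of the linearized Weyl tensor of a polynomial metric perturbation. -/
noncomputable def linWeyl (a b c d : ι) :
    (ι → ι → MvPolynomial ι ℝ) →ₗ[ℝ] MvPolynomial ι ℝ where
  toFun H := linRiemann H a b c d - kulkarniNomizu (schouten (linRiemann H)) a b c d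
  map_add' H G := by
    have linRiemann_add (a b c d : ι) :
        linRiemann (H + G) a b c d = linRiemann H a b c d + linRiemann G a b c d := by
      simp only [linRiemann, Pi.add_apply, map_add]
      ring
    simp only [kulkarniNomizu, schouten, linRiemann_add, Finset.sum_add_distrib, smul_eq_C_mul]
    ring
  map_smul' t H := by
    have linRiemann_smul (a b c d : ι) :
        linRiemann (t • H) a b c d = C t * linRiemann H a b c d := by
      simp only [linRiemann, Pi.smul_apply, smul_eq_C_mul, pderiv_C_mul]
      ring
    simp only [kulkarniNomizu, schouten, linRiemann_smul, ← Finset.mul_sum, smul_eq_C_mul,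
      RingHom.id_apply]
    ring

lemma eval_linWeyl (x : ι → ℝ) (H : ι → ι → MvPolynomial ι ℝ) (a b c d : ι) :
    eval x (linWeyl a b c d H)
      = weylComponent a b c d fun a b c d ↦ eval x (linRiemann H a b c d) := by
  rw [weylComponent_eval]
  rfl

variable {E : Type*} [NormedAddCommGroup E] [NormedSpace ℝ E]

/-- A bubble parameter, a tensor of the family `P` and a vector field meeting the hypotheses of the
interior and boundary estimates, with derivatives bounded by `K` times the size of the tensor. -/
structure AdmissibleTriple (P : E →ₗ[ℝ] ι → ι → MvPolynomial ι ℝ) (l : ι) (K : ℝ) where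
  ε : ℝ
  tensor : E
  field : ι → (ι → ℝ) → ℝ
  ε_nonneg : 0 ≤ ε
  ε_le_one : ε ≤ 1
  contDiff_field : ∀ a, ContDiff ℝ ∞ (field a)
  isBoundaryAdapted : IsBoundaryAdapted l field
  isDerivBound : ∀ y ∈ halfAnnulus l, IsDerivBound (P tensor) field (K * ‖tensor‖) y

namespace AdmissibleTriple

variable {P : E →ₗ[ℝ] ι → ι → MvPolynomial ι ℝ} {l : ι} {K : ℝ}

/-- The energy of `H - S` on the unit half annulus. -/
noncomputable def energy (q : AdmissibleTriple P l K) : ℝ :=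
  bubbleEnergy l q.ε (gaugeDefect (P q.tensor) q.field)

lemma testIntegral_linWeyl_mem_estimable (hι : 3 ≤ Fintype.card ι)
    (hsym : ∀ k a b, P k a b = P k b a) {φ : (ι → ℝ) → ℝ} (hφ : ContDiff ℝ ∞ φ)
    (hφc : HasCompactSupport φ) (hφl : tsupport φ ⊆ halfAnnulus l) (a b c d : ι) :
    testIntegral φ hφ.continuous hφc ∘ₗ linWeyl a b c d ∘ₗ P
      ∈ estimable (tensor (P := P) (l := l) (K := K)) energy := by
  intro δ hδ
  obtain ⟨C, hC⟩ := exists_sq_integral_functional_linRiemann_le l hφ hφc hφl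
    fun M _ ↦ weylComponent_kulkarniNomizu hι M a b c d
  refine ⟨C, fun q ↦ ?_⟩
  have integral_le := hC q.ε q.ε_nonneg q.ε_le_one _ _ (hsym q.tensor) q.contDiff_field
  simp only [← eval_linWeyl] at integral_le
  exact integral_le.trans (le_add_of_nonneg_left (by positivity))

lemma eval_pderiv_mem_estimable (hnormal : ∀ k a, P k a l = 0)
    (htrace : ∀ k, ∑ a, P k a a = 0) {x : ι → ℝ} (hx : x l = 0) (hx1 : 1 < ∑ a, x a ^ 2)
    (hx4 : ∑ a, x a ^ 2 < 4) {a b : ι} (ha : a ≠ l) (hb : b ≠ l) :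
    (aeval x).toLinearMap ∘ₗ (pderiv l).toLinearMap ∘ₗ LinearMap.proj b ∘ₗ LinearMap.proj a ∘ₗ P
      ∈ estimable (tensor (P := P) (l := l) (K := K)) energy := by
  intro δ hδ
  obtain ⟨C, hC⟩ := exists_sq_eval_pderiv_le hx hx1 hx4 (δ := δ / (K ^ 2 + 1)) (by positivity)
  refine ⟨C, fun q ↦ ?_⟩
  have boundary_le := hC q.ε _ _ _ q.ε_nonneg q.ε_le_one q.contDiff_field q.isBoundaryAdapted
    (hnormal q.tensor) (htrace q.tensor) q.isDerivBound a b ha hb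
  refine boundary_le.trans (add_le_add_left ?_ _)
  calc δ / (K ^ 2 + 1) * (K * ‖q.tensor‖) ^ 2
      = K ^ 2 / (K ^ 2 + 1) * (δ * ‖q.tensor‖ ^ 2) := by ring
    _ ≤ δ * ‖q.tensor‖ ^ 2 :=
      mul_le_of_le_one_left (by positivity) (div_le_one_of_le₀ (by linarith) (by positivity))

end AdmissibleTriple

end Core

section Separation

variable {m : ℕ} {E : Type*} [NormedAddCommGroup E] [NormedSpace ℝ E]
  {P : E →ₗ[ℝ] Fin (m + 1) → Fin (m + 1) → MvPolynomial (Fin (m + 1)) ℝ} {K : ℝ}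

open AdmissibleTriple

lemma linWeyl_eq_zero_of_estimable_eq_zero (hm : 2 ≤ m) (hP : ∀ k, IsGaugeFixed (P k)) {k : E}
    (hk : ∀ f ∈ estimable (tensor (P := P) (l := Fin.last m) (K := K)) energy, f k = 0)
    (a b c d : Fin (m + 1)) : linWeyl a b c d (P k) = 0 := by
  have card_ge : 3 ≤ Fintype.card (Fin (m + 1)) := by rw [Fintype.card_fin]; lia
  refine eq_zero_of_integral_mul_eval_eq_zero (isOpen_openHalfAnnulus (Fin.last m))
    (openHalfAnnulus_nonempty _) fun φ hφ hφc hφl ↦ ?_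
  exact hk _ (testIntegral_linWeyl_mem_estimable card_ge (fun k ↦ (hP k).symm) hφ hφc
    (hφl.trans (openHalfAnnulus_subset _)) a b c d)

lemma restrictBoundary_pderiv_eq_zero_of_estimable_eq_zero (hm : 1 ≤ m)
    (hP : ∀ k, IsGaugeFixed (P k)) {k : E}
    (hk : ∀ f ∈ estimable (tensor (P := P) (l := Fin.last m) (K := K)) energy, f k = 0)
    (a b : Fin (m + 1)) : restrictBoundary m (pderiv (Fin.last m) (P k a b)) = 0 := by
  by_cases hb : b = Fin.last m
  · rw [hb, (hP k).normal, map_zero, map_zero]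
  by_cases ha : a = Fin.last m
  · rw [ha, (hP k).normal_left, map_zero, map_zero]
  have nonempty : {x : Fin m → ℝ | 1 < ∑ i, x i ^ 2 ∧ ∑ i, x i ^ 2 < 4}.Nonempty :=
    (openHalfAnnulus_nonempty (⟨0, hm⟩ : Fin m)).mono fun x hx ↦ hx.2
  refine eq_zero_of_eval_eq_zero_on_isOpen isOpen_annulus nonempty fun x hx ↦ ?_
  have sum_snoc : ∑ i, (Fin.snoc (α := fun _ ↦ ℝ) x 0 : Fin (m + 1) → ℝ) i ^ 2 = ∑ i, x i ^ 2 := by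
    simp [Fin.sum_univ_castSucc]
  rw [eval_restrictBoundary]
  exact hk _ (eval_pderiv_mem_estimable (fun k ↦ (hP k).normal) (fun k ↦ (hP k).trace)
    (Fin.snoc_last _ _) (sum_snoc ▸ hx.1) (sum_snoc ▸ hx.2) ha hb)

/-- Rigidity: a gauge-fixed tensor is controlled by the energy of `H - S`, uniformly in the gauge
field `V` and the bubble parameter. -/
theorem exists_sq_norm_le_bubbleEnergy [FiniteDimensional ℝ E] (hm : 3 ≤ m)
    (hinj : Function.Injective P) (hP : ∀ k, IsGaugeFixed (P k)) (K : ℝ) :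
    ∃ C, ∀ q : AdmissibleTriple P (Fin.last m) K, ‖q.tensor‖ ^ 2 ≤ C * q.energy := by
  refine exists_sq_norm_le_of_estimable_separating fun k hk ↦ hinj ?_
  rw [map_zero]
  have curvature_eq (a b c d : Fin (m + 1)) : linRiemann (P k) a b c d
      = kulkarniNomizu (schouten (linRiemann (P k))) a b c d :=
    sub_eq_zero.1 (linWeyl_eq_zero_of_estimable_eq_zero (by lia) hP hk a b c d)
  funext a b
  exact (hP k).eq_zero_of_linRiemann_eq_kulkarniNomizu hm (schouten_linRiemann_comm (hP k).symm)
    curvature_eq (restrictBoundary_pderiv_eq_zero_of_estimable_eq_zero (by lia) hP hk) a b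

end Separation

section Coefficients

/-- The exponents of the monomials of degree at most `D`. -/
noncomputable def exponents (ι : Type*) [Finite ι] (D : ℕ) : Finset (ι →₀ ℕ) :=
  (Finsupp.finite_of_degree_le D).toFinset

lemma mem_exponents {ι : Type*} [Finite ι] {D : ℕ} {s : ι →₀ ℕ} :
    s ∈ exponents ι D ↔ s.degree ≤ D := by
  simp [exponents]

variable {ι : Type*} [Fintype ι] {D : ℕ} {H : ι → ι → MvPolynomial ι ℝ}

/-- The coefficients of a tensor with polynomial components of degree at most `D`. -/
abbrev TensorCoeff (ι : Type*) [Fintype ι] (D : ℕ) : Type _ := ι → ι → exponents ι D → ℝ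

/-- The polynomial tensor with prescribed coefficients. -/
noncomputable def tensorOfCoeff (ι : Type*) [Fintype ι] (D : ℕ) :
    TensorCoeff ι D →ₗ[ℝ] ι → ι → MvPolynomial ι ℝ :=
  LinearMap.pi fun a ↦ LinearMap.pi fun b ↦ ∑ s : exponents ι D,
    monomial s.1 ∘ₗ LinearMap.proj s ∘ₗ LinearMap.proj b ∘ₗ LinearMap.proj a

lemma tensorOfCoeff_apply (k : TensorCoeff ι D) (a b : ι) :
    tensorOfCoeff ι D k a b = ∑ s : exponents ι D, monomial s.1 (k a b s) := by
  simp [tensorOfCoeff]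

lemma coeff_tensorOfCoeff (k : TensorCoeff ι D) (a b : ι) (s : exponents ι D) :
    coeff s.1 (tensorOfCoeff ι D k a b) = k a b s := by
  classical
  simp [tensorOfCoeff_apply, coeff_sum, coeff_monomial]

lemma tensorOfCoeff_injective : Function.Injective (tensorOfCoeff ι D) := fun k k' h ↦ by
  funext a b s
  rw [← coeff_tensorOfCoeff k, h, coeff_tensorOfCoeff]

lemma tensorOfCoeff_coeff (hD : ∀ a b, ∀ s ∈ (H a b).support, s.degree ≤ D) :
    tensorOfCoeff ι D (fun a b s ↦ coeff s.1 (H a b)) = H := by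
  funext a b
  rw [tensorOfCoeff_apply,
    Finset.sum_coe_sort (exponents ι D) fun s ↦ monomial s (coeff s (H a b))]
  conv_rhs => rw [(H a b).as_sum]
  refine (Finset.sum_subset (fun s hs ↦ mem_exponents.2 (hD a b s hs)) fun s _ hs ↦ ?_).symm
  rw [notMem_support_iff.1 hs, monomial_zero]

lemma abs_coeff_tensorOfCoeff_le_norm (k : TensorCoeff ι D) (a b : ι) (s : exponents ι D) :
    |coeff s.1 (tensorOfCoeff ι D k a b)| ≤ ‖k‖ := by
  rw [coeff_tensorOfCoeff]
  exact (norm_le_pi_norm (k a b) s).trans ((norm_le_pi_norm (k a) b).trans (norm_le_pi_norm k a))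

end Coefficients

section GaugeFixedSpace

variable {m D : ℕ}

lemma IsGaugeFixed.linearCombination
    {H G : Fin (m + 1) → Fin (m + 1) → MvPolynomial (Fin (m + 1)) ℝ} (hH : IsGaugeFixed H)
    (hG : IsGaugeFixed G) (t : ℝ) : IsGaugeFixed (H + t • G) where
  symm a b := by simp only [Pi.add_apply, Pi.smul_apply, hH.symm a b, hG.symm a b]
  trace := by
    simp only [Pi.add_apply, Pi.smul_apply, Finset.sum_add_distrib, ← Finset.smul_sum, hH.trace,
      hG.trace, smul_zero, add_zero]
  normal a := by simp only [Pi.add_apply, Pi.smul_apply, hH.normal, hG.normal, smul_zero, add_zero]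
  radial i := by
    simp only [Pi.add_apply, Pi.smul_apply, map_add, map_smul, mul_add, mul_smul_comm,
      Finset.sum_add_distrib, ← Finset.smul_sum, hH.radial, hG.radial, smul_zero, add_zero]

lemma isGaugeFixed_zero :
    IsGaugeFixed (0 : Fin (m + 1) → Fin (m + 1) → MvPolynomial (Fin (m + 1)) ℝ) := by
  constructor <;> simp

variable (m D) in
/-- The finite-dimensional space of (coefficients of) gauge-fixed tensors of degree at most `D`. -/
noncomputable def gaugeFixedSpace : Submodule ℝ (TensorCoeff (Fin (m + 1)) D) where
  carrier := {k | IsGaugeFixed (tensorOfCoeff _ D k)}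
  zero_mem' := by simpa only [Set.mem_ofPred_eq, map_zero] using isGaugeFixed_zero
  add_mem' hk hk' := by
    simpa only [Set.mem_ofPred_eq, map_add, one_smul] using hk.linearCombination hk' 1
  smul_mem' t k hk := by
    simpa only [Set.mem_ofPred_eq, map_smul, zero_add]
      using isGaugeFixed_zero.linearCombination hk t

variable (m D) in
/-- The gauge-fixed tensor with prescribed coefficients. -/
noncomputable def gaugeFixedTensor : gaugeFixedSpace m D →ₗ[ℝ]
    Fin (m + 1) → Fin (m + 1) → MvPolynomial (Fin (m + 1)) ℝ :=
  tensorOfCoeff _ D ∘ₗ (gaugeFixedSpace m D).subtype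

lemma gaugeFixedTensor_injective : Function.Injective (gaugeFixedTensor m D) :=
  tensorOfCoeff_injective.comp Subtype.coe_injective

lemma isGaugeFixed_gaugeFixedTensor (k : gaugeFixedSpace m D) :
    IsGaugeFixed (gaugeFixedTensor m D k) := k.2

lemma IsGaugeFixed.exists_eq_gaugeFixedTensor
    {H : Fin (m + 1) → Fin (m + 1) → MvPolynomial (Fin (m + 1)) ℝ} (hH : IsGaugeFixed H)
    (hD : ∀ a b, ∀ s ∈ (H a b).support, s.degree ≤ D) : ∃ k, gaugeFixedTensor m D k = H := by
  refine ⟨⟨fun a b s ↦ coeff s.1 (H a b), ?_⟩, tensorOfCoeff_coeff hD⟩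
  exact (congrArg IsGaugeFixed (tensorOfCoeff_coeff hD)).mpr hH

lemma abs_coeff_gaugeFixedTensor_le_norm (k : gaugeFixedSpace m D) (a b : Fin (m + 1))
    (s : exponents (Fin (m + 1)) D) : |coeff s.1 (gaugeFixedTensor m D k a b)| ≤ ‖k‖ :=
  abs_coeff_tensorOfCoeff_le_norm _ a b s

end GaugeFixedSpace

section UniformBound

variable {ι : Type*} {E : Type*} [NormedAddCommGroup E] [NormedSpace ℝ E] [FiniteDimensional ℝ E]
  {s : Set (ι → ℝ)}

lemma exists_abs_eval_le_mul_norm (hs : IsCompact s) (L : E →ₗ[ℝ] MvPolynomial ι ℝ) :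
    ∃ C, ∀ x ∈ s, ∀ k, |eval x (L k)| ≤ C * ‖k‖ := by
  have := FiniteDimensional.complete ℝ E
  let evalAt (x : s) : E →L[ℝ] ℝ := ((aeval x.1).toLinearMap ∘ₗ L).toContinuousLinearMap
  obtain ⟨C, hC⟩ := banach_steinhaus (g := evalAt) fun k ↦ by
    obtain ⟨C, hC⟩ := hs.exists_bound_of_continuousOn (L k).continuous_eval.continuousOn
    exact ⟨C, fun x ↦ hC x x.2⟩
  exact ⟨C, fun x hx k ↦ (evalAt ⟨x, hx⟩).le_of_opNorm_le (hC ⟨x, hx⟩) k⟩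

lemma exists_forall_abs_eval_le_mul_norm {κ : Type*} [Finite κ] (hs : IsCompact s)
    (L : κ → E →ₗ[ℝ] MvPolynomial ι ℝ) :
    ∃ C, ∀ i, ∀ x ∈ s, ∀ k, |eval x (L i k)| ≤ C * ‖k‖ := by
  choose C hC using fun i ↦ exists_abs_eval_le_mul_norm hs (L i)
  obtain ⟨B, hB⟩ := (Set.finite_range C).bddAbove
  exact ⟨B, fun i x hx k ↦ (hC i x hx k).trans
    (mul_le_mul_of_nonneg_right (hB ⟨i, rfl⟩) (norm_nonneg k))⟩

variable [Finite ι]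

lemma exists_tensor_deriv_bound (hs : IsCompact s) (P : E →ₗ[ℝ] ι → ι → MvPolynomial ι ℝ) :
    ∃ C, ∀ x ∈ s, ∀ k, (∀ a b, |eval x (P k a b)| ≤ C * ‖k‖) ∧
      (∀ c a b, |eval x (pderiv c (P k a b))| ≤ C * ‖k‖) ∧
      ∀ d c a b, |eval x (pderiv d (pderiv c (P k a b)))| ≤ C * ‖k‖ := by
  let component (i : ι × ι) : E →ₗ[ℝ] MvPolynomial ι ℝ :=
    LinearMap.proj i.2 ∘ₗ LinearMap.proj i.1 ∘ₗ P
  let deriv (c : ι) : MvPolynomial ι ℝ →ₗ[ℝ] MvPolynomial ι ℝ := (pderiv c).toLinearMap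
  obtain ⟨A, hA⟩ := exists_forall_abs_eval_le_mul_norm hs component
  obtain ⟨B, hB⟩ := exists_forall_abs_eval_le_mul_norm hs
    fun i : ι × ι × ι ↦ deriv i.1 ∘ₗ component i.2
  obtain ⟨C, hC⟩ := exists_forall_abs_eval_le_mul_norm hs
    fun i : ι × ι × ι × ι ↦ deriv i.1 ∘ₗ deriv i.2.1 ∘ₗ component i.2.2
  refine ⟨max A (max B C), fun x hx k ↦ ⟨fun a b ↦ ?_, fun c a b ↦ ?_, fun d c a b ↦ ?_⟩⟩
  · exact (hA (a, b) x hx k).trans (by gcongr; exact le_max_left A _)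
  · exact (hB (c, a, b) x hx k).trans
      (by gcongr; exact (le_max_left B C).trans (le_max_right A _))
  · exact (hC (d, c, a, b) x hx k).trans
      (by gcongr; exact (le_max_right B C).trans (le_max_right A _))

end UniformBound

section PolynomialDilation

variable {ι : Type*} {r : ℝ}

/-- The dilation `p ↦ p (r x)` of polynomials. -/
noncomputable def dilate (r : ℝ) : MvPolynomial ι ℝ →ₐ[ℝ] MvPolynomial ι ℝ :=
  aeval fun i ↦ C r * X i

lemma dilate_X (i : ι) : dilate r (X i) = C r * X i := by simp [dilate]

lemma eval_dilate (x : ι → ℝ) (p : MvPolynomial ι ℝ) : eval x (dilate r p) = eval (r • x) p := by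
  induction p using MvPolynomial.induction_on with
  | C a => simp [dilate]
  | add p q hp hq => simp only [map_add, hp, hq]
  | mul_X p j hp => simp [hp, dilate_X]

lemma pderiv_dilate (c : ι) (p : MvPolynomial ι ℝ) :
    pderiv c (dilate r p) = C r * dilate r (pderiv c p) := by
  classical
  induction p using MvPolynomial.induction_on with
  | C a => simp [dilate]
  | add p q hp hq => simp only [map_add, hp, hq, mul_add]
  | mul_X p j hp =>
    rw [mul_comm p, pderiv_X_mul, map_add, map_mul, dilate_X, mul_assoc, pderiv_C_mul,
      pderiv_X_mul, hp, map_mul, dilate_X, apply_ite (dilate r), map_zero]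
    ring

lemma coeff_dilate (s : ι →₀ ℕ) (p : MvPolynomial ι ℝ) :
    coeff s (dilate r p) = r ^ s.degree * coeff s p := by
  classical
  induction p using MvPolynomial.induction_on' with
  | add p q hp hq => simp only [map_add, coeff_add, hp, hq, mul_add]
  | monomial t a =>
    have dilate_monomial : dilate r (monomial t a) = C (r ^ t.degree) * monomial t a := by
      rw [dilate, aeval_monomial, monomial_eq, Finsupp.degree_apply, ← Finset.prod_pow_eq_pow_sum]
      simp only [mul_pow, Finsupp.prod_mul, map_prod, map_pow, algebraMap_eq]
      simp only [Finsupp.prod]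
      ring
    rw [dilate_monomial, coeff_C_mul, coeff_monomial]
    split_ifs with hts
    · rw [hts]
    · simp

lemma support_dilate_subset (p : MvPolynomial ι ℝ) : (dilate r p).support ⊆ p.support := by
  intro s hs
  rw [mem_support_iff, coeff_dilate] at hs
  exact mem_support_iff.2 (right_ne_zero_of_mul hs)

lemma restrictBoundary_dilate {m : ℕ} (p : MvPolynomial (Fin (m + 1)) ℝ) :
    restrictBoundary m (dilate r p) = dilate r (restrictBoundary m p) := by
  suffices (restrictBoundary m).comp (dilate r) = (dilate r).comp (restrictBoundary m) from
    DFunLike.congr_fun this p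
  refine MvPolynomial.algHom_ext fun i ↦ ?_
  cases i using Fin.lastCases with
  | last => simp [dilate_X, restrictBoundary_X_last]
  | cast i => simp [dilate_X, restrictBoundary_X_castSucc]

lemma IsGaugeFixed.dilate {m : ℕ} {H : Fin (m + 1) → Fin (m + 1) → MvPolynomial (Fin (m + 1)) ℝ}
    (hH : IsGaugeFixed H) (hr : r ≠ 0) : IsGaugeFixed fun a b ↦ dilate r (H a b) where
  symm a b := by rw [hH.symm]
  trace := by rw [← map_sum, hH.trace, map_zero]
  normal a := by rw [hH.normal, map_zero]
  radial i := by
    have dilate_radial := congrArg (ConformalGauge.dilate r) (hH.radial i)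
    simp only [map_sum, map_mul, dilate_X, map_zero, mul_assoc, ← Finset.mul_sum,
      ← restrictBoundary_dilate] at dilate_radial
    exact (mul_eq_zero.1 dilate_radial).resolve_left (C_ne_zero.2 hr)

end PolynomialDilation

section FieldDilation

variable {ι : Type*} [Fintype ι] {r : ℝ}

/-- The vector field `x ↦ r⁻¹ V (r x)`, the pullback of `V` under the dilation by `r`. -/
noncomputable def dilateField (r : ℝ) (V : ι → (ι → ℝ) → ℝ) (a : ι) (x : ι → ℝ) : ℝ :=
  r⁻¹ * V a (r • x)

lemma contDiff_dilateField {V : ι → (ι → ℝ) → ℝ} (hV : ∀ a, ContDiff ℝ ∞ (V a)) (a : ι) :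
    ContDiff ℝ ∞ (dilateField r V a) :=
  contDiff_const.mul ((hV a).comp (contDiff_const_smul r))

variable [DecidableEq ι] {V : ι → (ι → ℝ) → ℝ} {H : ι → ι → MvPolynomial ι ℝ}

lemma partialDeriv_comp_smul {f : (ι → ℝ) → ℝ} (hf : ContDiff ℝ ∞ f) (r : ℝ) (c : ι) (x : ι → ℝ) :
    partialDeriv c (fun y ↦ f (r • y)) x = r * partialDeriv c f (r • x) := by
  have hasFDerivAt_comp := (hf.differentiable (by simp) (r • x)).hasFDerivAt.comp x
    ((hasFDerivAt_id x).const_smul r)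
  have fderiv_comp : fderiv ℝ (fun y ↦ f (r • y)) x = _ := hasFDerivAt_comp.fderiv
  simp [partialDeriv, fderiv_comp]

lemma partialDeriv_const_mul_comp_smul {f : (ι → ℝ) → ℝ} (hf : ContDiff ℝ ∞ f) (t r : ℝ) (c : ι)
    (x : ι → ℝ) :
    partialDeriv c (fun y ↦ t * f (r • y)) x = t * (r * partialDeriv c f (r • x)) := by
  have contDiff_comp : ContDiff ℝ ∞ fun y ↦ f (r • y) := hf.comp (contDiff_const_smul r)
  rw [partialDeriv_mul c contDiff_const contDiff_comp, partialDeriv_const,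
    partialDeriv_comp_smul hf, zero_mul, zero_add]

lemma partialDeriv_dilateField (hV : ∀ a, ContDiff ℝ ∞ (V a)) (hr : r ≠ 0) (b a : ι) :
    partialDeriv b (dilateField r V a) = fun x ↦ partialDeriv b (V a) (r • x) := by
  funext x
  unfold dilateField
  rw [partialDeriv_const_mul_comp_smul (hV a), inv_mul_cancel_left₀ hr]

lemma partialDeriv_partialDeriv_dilateField (hV : ∀ a, ContDiff ℝ ∞ (V a)) (hr : r ≠ 0)
    (c b a : ι) : partialDeriv c (partialDeriv b (dilateField r V a))
      = fun x ↦ r * partialDeriv c (partialDeriv b (V a)) (r • x) := by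
  funext x
  rw [partialDeriv_dilateField hV hr, partialDeriv_comp_smul (contDiff_partialDeriv b (hV a))]

lemma partialDeriv_partialDeriv_partialDeriv_dilateField (hV : ∀ a, ContDiff ℝ ∞ (V a))
    (hr : r ≠ 0) (d c b a : ι) (x : ι → ℝ) :
    partialDeriv d (partialDeriv c (partialDeriv b (dilateField r V a))) x
      = r ^ 2 * partialDeriv d (partialDeriv c (partialDeriv b (V a))) (r • x) := by
  rw [partialDeriv_partialDeriv_dilateField hV hr, partialDeriv_const_mul_comp_smul
    (contDiff_partialDeriv c (contDiff_partialDeriv b (hV a))), sq, mul_assoc]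

lemma IsBoundaryAdapted.dilateField {l : ι} (hV : ∀ a, ContDiff ℝ ∞ (V a)) (hr : r ≠ 0)
    (h : IsBoundaryAdapted l V) : IsBoundaryAdapted l (dilateField r V) where
  normal x hx := by rw [ConformalGauge.dilateField, h.normal (r • x) (by simp [hx]), mul_zero]
  tangential i hi x hx := by
    rw [partialDeriv_dilateField hV hr]
    exact h.tangential i hi (r • x) (by simp [hx])

lemma gaugeDefect_dilate (hV : ∀ a, ContDiff ℝ ∞ (V a)) (hr : r ≠ 0) :
    gaugeDefect (fun a b ↦ dilate r (H a b)) (dilateField r V)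
      = fun a b x ↦ gaugeDefect H V a b (r • x) := by
  funext a b x
  simp only [gaugeDefect, divFactor, eval_dilate, partialDeriv_dilateField hV hr]

lemma bubbleGradient_comp_smul {T : ι → ι → (ι → ℝ) → ℝ} (hT : ∀ a b, ContDiff ℝ ∞ (T a b))
    (hr : r ≠ 0) (p : ι → ℝ) (a b c : ι) (x : ι → ℝ) :
    bubbleGradient (r⁻¹ • p) (fun a b x ↦ T a b (r • x)) a b c x
      = r⁻¹ * bubbleGradient p T a b c (r • x) := by
  have position (d : ι) : x d + (r⁻¹ • p) d = r⁻¹ * ((r • x) d + p d) := by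
    simp only [Pi.smul_apply, smul_eq_mul]
    field_simp
  have distSq : poleDistSq (r⁻¹ • p) x = r⁻¹ ^ 2 * poleDistSq p (r • x) := by
    simp only [poleDistSq, position, mul_pow, Finset.mul_sum]
  have contract (d : ι) : poleContract (r⁻¹ • p) (fun a b x ↦ T a b (r • x)) d x
      = r⁻¹ * poleContract p T d (r • x) := by
    simp only [poleContract, position, mul_assoc, Finset.mul_sum]
  simp only [bubbleGradient, distSq, contract, position, partialDeriv_comp_smul (hT a b)]
  field_simp

end FieldDilation

section ScaledHalfAnnulus

variable {ι : Type*} [Fintype ι] {l : ι} {r : ℝ}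

/-- The half annulus `B⁺_{2r} ∖ B⁺_r`. -/
def scaledHalfAnnulus (l : ι) (r : ℝ) : Set (ι → ℝ) :=
  {x | 0 ≤ x l ∧ r ≤ √(∑ a, x a ^ 2) ∧ √(∑ a, x a ^ 2) < 2 * r}

lemma sqrt_sum_smul_sq (hr : 0 ≤ r) (x : ι → ℝ) :
    √(∑ a, (r • x) a ^ 2) = r * √(∑ a, x a ^ 2) := by
  simp only [Pi.smul_apply, smul_eq_mul, mul_pow, ← Finset.mul_sum]
  rw [Real.sqrt_mul (sq_nonneg r), Real.sqrt_sq hr]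

lemma smul_mem_scaledHalfAnnulus_iff (hr : 0 < r) {x : ι → ℝ} :
    r • x ∈ scaledHalfAnnulus l r ↔ x ∈ halfAnnulus l := by
  simp only [scaledHalfAnnulus, halfAnnulus, Set.mem_ofPred_eq, sqrt_sum_smul_sq hr.le]
  refine and_congr ?_ (and_congr ?_ ?_)
  · simp [hr]
  · rw [le_mul_iff_one_le_right hr, Real.one_le_sqrt]
  · rw [mul_comm 2 r, mul_lt_mul_iff_right₀ hr, Real.sqrt_lt' zero_lt_two]
    norm_num

open Pointwise in
lemma smul_halfAnnulus (hr : 0 < r) : r • halfAnnulus l = scaledHalfAnnulus l r := by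
  ext x
  rw [Set.mem_smul_set_iff_inv_smul_mem₀ hr.ne', ← smul_mem_scaledHalfAnnulus_iff hr,
    smul_inv_smul₀ hr.ne']

variable [DecidableEq ι]

lemma bubbleEnergy_dilate {H : ι → ι → MvPolynomial ι ℝ} {V : ι → (ι → ℝ) → ℝ}
    (hV : ∀ a, ContDiff ℝ ∞ (V a)) (hr : 0 < r) (ε : ℝ) :
    r ^ (Fintype.card ι + 2) * bubbleEnergy l (ε / r)
        (gaugeDefect (fun a b ↦ dilate r (H a b)) (dilateField r V))
      = ∫ x in scaledHalfAnnulus l r, bubbleDensity (Pi.single l ε) (gaugeDefect H V) x := by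
  have pole : (Pi.single l (ε / r) : ι → ℝ) = r⁻¹ • Pi.single l ε := by
    rw [← Pi.single_smul, smul_eq_mul, inv_mul_eq_div]
  have density (x : ι → ℝ) : bubbleDensity (Pi.single l (ε / r))
      (gaugeDefect (fun a b ↦ dilate r (H a b)) (dilateField r V)) x
        = r⁻¹ ^ 2 * bubbleDensity (Pi.single l ε) (gaugeDefect H V) (r • x) := by
    simp only [bubbleDensity, gaugeDefect_dilate hV hr.ne', pole, mul_pow, Finset.mul_sum,
      bubbleGradient_comp_smul (contDiff_gaugeDefect hV) hr.ne']
  simp only [bubbleEnergy, density]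
  rw [integral_const_mul, Measure.setIntegral_comp_smul_of_pos volume _ _ hr, smul_halfAnnulus hr,
    Module.finrank_fintype_fun_eq_card, smul_eq_mul]
  field_simp
  ring

end ScaledHalfAnnulus

section IteratedDerivative

variable {ι κ : Type*} [Fintype ι] [DecidableEq ι] [Fintype κ] {V : (ι → ℝ) → κ → ℝ}

lemma iteratedFDeriv_succ_single_apply (hV : ContDiff ℝ ∞ V) {k : ℕ} (dirs : Fin (k + 1) → ι)
    (x : ι → ℝ) (a : κ) :
    iteratedFDeriv ℝ (k + 1) V x (fun i ↦ Pi.single (dirs i) 1) a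
      = partialDeriv (dirs 0)
          (fun y ↦ iteratedFDeriv ℝ k V y (fun i ↦ Pi.single (dirs i.succ) 1) a) x := by
  have differentiableAt : DifferentiableAt ℝ (iteratedFDeriv ℝ k V) x :=
    hV.differentiable_iteratedFDeriv (by exact_mod_cast WithTop.coe_lt_top k) x
  let component : ContinuousMultilinearMap ℝ (fun _ : Fin k ↦ ι → ℝ) (κ → ℝ) →L[ℝ] ℝ :=
    ContinuousLinearMap.proj (φ := fun _ : κ ↦ ℝ) a ∘L
      ContinuousMultilinearMap.apply ℝ (fun _ : Fin k ↦ ι → ℝ) (κ → ℝ)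
        fun i ↦ Pi.single (dirs i.succ) 1
  have fderiv_component : fderiv ℝ
      (fun y ↦ iteratedFDeriv ℝ k V y (fun i ↦ Pi.single (dirs i.succ) 1) a) x
        = component ∘L fderiv ℝ (iteratedFDeriv ℝ k V) x :=
    (component.hasFDerivAt.comp x differentiableAt.hasFDerivAt).fderiv
  rw [iteratedFDeriv_succ_apply_left, partialDeriv, fderiv_component]
  rfl

lemma iteratedFDeriv_one_single_apply (hV : ContDiff ℝ ∞ V) (dirs : Fin 1 → ι) (x : ι → ℝ)
    (a : κ) : iteratedFDeriv ℝ 1 V x (fun i ↦ Pi.single (dirs i) 1) a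
      = partialDeriv (dirs 0) (fun y ↦ V y a) x := by
  simp only [iteratedFDeriv_succ_single_apply hV, iteratedFDeriv_zero_apply]

lemma iteratedFDeriv_two_single_apply (hV : ContDiff ℝ ∞ V) (dirs : Fin 2 → ι) (x : ι → ℝ)
    (a : κ) : iteratedFDeriv ℝ 2 V x (fun i ↦ Pi.single (dirs i) 1) a
      = partialDeriv (dirs 0) (partialDeriv (dirs 1) fun y ↦ V y a) x := by
  rw [iteratedFDeriv_succ_single_apply hV]
  congr 1
  funext y
  exact iteratedFDeriv_one_single_apply hV (fun i ↦ dirs i.succ) y a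

lemma iteratedFDeriv_three_single_apply (hV : ContDiff ℝ ∞ V) (dirs : Fin 3 → ι) (x : ι → ℝ)
    (a : κ) : iteratedFDeriv ℝ 3 V x (fun i ↦ Pi.single (dirs i) 1) a
      = partialDeriv (dirs 0) (partialDeriv (dirs 1) (partialDeriv (dirs 2) fun y ↦ V y a)) x := by
  rw [iteratedFDeriv_succ_single_apply hV]
  congr 1
  funext y
  exact iteratedFDeriv_two_single_apply hV (fun i ↦ dirs i.succ) y a

end IteratedDerivative

section FieldGrowth

variable {ι : Type*} [Fintype ι] {H : ι → ι → MvPolynomial ι ℝ} {D : ℕ} {r t B : ℝ}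

/-- The sum `∑ |h_{ij,α}| t ^ (|α| + 1 - k)` bounding the derivatives of order `k` of the gauge
field at distance `t` from the origin. -/
noncomputable def fieldGrowth (H : ι → ι → MvPolynomial ι ℝ) (t : ℝ) (k : ℕ) : ℝ :=
  ∑ i, ∑ j, ∑ s ∈ (H i j).support, |coeff s (H i j)| * t ^ ((s.degree : ℤ) + 1 - k)

lemma zpow_le_of_le_three_mul {g : ℕ} (hr : 0 < r) (hrt : r ≤ t) (htr : t ≤ 3 * r) (hg : g ≤ D)
    (k : ℕ) : t ^ ((g : ℤ) + 1 - k) ≤ 3 ^ (D + 1) * (r / r ^ k) * r ^ g := by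
  have ht : 0 < t := hr.trans_le hrt
  calc t ^ ((g : ℤ) + 1 - k) = t ^ (g + 1) / t ^ k := by
        rw [zpow_sub₀ ht.ne', zpow_natCast]
        norm_cast
    _ ≤ (3 * r) ^ (g + 1) / r ^ k := by gcongr
    _ = 3 ^ (g + 1) * (r / r ^ k) * r ^ g := by ring
    _ ≤ 3 ^ (D + 1) * (r / r ^ k) * r ^ g := by
        gcongr
        norm_num

lemma fieldGrowth_le (hr : 0 < r) (hrt : r ≤ t) (htr : t ≤ 3 * r)
    (hD : ∀ a b, ∀ s ∈ (H a b).support, s.degree ≤ D)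
    (hB : ∀ a b, ∀ s ∈ exponents ι D, |coeff s (dilate r (H a b))| ≤ B) (k : ℕ) :
    fieldGrowth H t k
      ≤ 3 ^ (D + 1) * Fintype.card ι ^ 2 * (exponents ι D).card * B * (r / r ^ k) := by
  have term_le (i j : ι) (s : ι →₀ ℕ) (hs : s ∈ (H i j).support) :
      |coeff s (H i j)| * t ^ ((s.degree : ℤ) + 1 - k) ≤ 3 ^ (D + 1) * (r / r ^ k) * B :=
    calc |coeff s (H i j)| * t ^ ((s.degree : ℤ) + 1 - k)
        ≤ |coeff s (H i j)| * (3 ^ (D + 1) * (r / r ^ k) * r ^ s.degree) := by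
          gcongr
          exact zpow_le_of_le_three_mul hr hrt htr (hD i j s hs) k
      _ = 3 ^ (D + 1) * (r / r ^ k) * |coeff s (dilate r (H i j))| := by
          rw [coeff_dilate, abs_mul, abs_of_pos (pow_pos hr _)]
          ring
      _ ≤ 3 ^ (D + 1) * (r / r ^ k) * B := by
          gcongr
          exact hB i j s (mem_exponents.2 (hD i j s hs))
  have component_le (i j : ι) :
      ∑ s ∈ (H i j).support, |coeff s (H i j)| * t ^ ((s.degree : ℤ) + 1 - k)
        ≤ (exponents ι D).card * (3 ^ (D + 1) * (r / r ^ k) * B) := by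
    have hB0 : 0 ≤ B := (abs_nonneg _).trans (hB i j 0 (mem_exponents.2 (by simp)))
    have card_le : (H i j).support.card ≤ (exponents ι D).card :=
      Finset.card_le_card fun s hs ↦ mem_exponents.2 (hD i j s hs)
    refine (Finset.sum_le_card_nsmul _ _ _ (term_le i j)).trans ?_
    rw [nsmul_eq_mul]
    gcongr
  calc fieldGrowth H t k
      ≤ ∑ _i : ι, ∑ _j : ι, (exponents ι D).card * (3 ^ (D + 1) * (r / r ^ k) * B) :=
        Finset.sum_le_sum fun i _ ↦ Finset.sum_le_sum fun j _ ↦ component_le i j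
    _ = 3 ^ (D + 1) * Fintype.card ι ^ 2 * (exponents ι D).card * B * (r / r ^ k) := by
        simp only [Finset.sum_const, Finset.card_univ, nsmul_eq_mul]
        ring

end FieldGrowth

section GaugeField

variable {ι : Type*} [Fintype ι] [DecidableEq ι] {H : ι → ι → MvPolynomial ι ℝ}
  {V : ι → (ι → ℝ) → ℝ} {l : ι} {C₀ ε r B M : ℝ} {D : ℕ}

/-- The conditions (ii) and (iii) of the paper on the vector field `V`, the derivative bounds being
imposed for the orders one to three only. -/
structure IsGaugeField (l : ι) (C₀ ε : ℝ) (H : ι → ι → MvPolynomial ι ℝ)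
    (V : ι → (ι → ℝ) → ℝ) : Prop where
  contDiff : ∀ a, ContDiff ℝ ∞ (V a)
  isBoundaryAdapted : IsBoundaryAdapted l V
  deriv_one : ∀ x, 0 ≤ x l → ∀ b a,
    |partialDeriv b (V a) x| ≤ C₀ * fieldGrowth H (ε + √(∑ c, x c ^ 2)) 1
  deriv_two : ∀ x, 0 ≤ x l → ∀ c b a,
    |partialDeriv c (partialDeriv b (V a)) x| ≤ C₀ * fieldGrowth H (ε + √(∑ c, x c ^ 2)) 2
  deriv_three : ∀ x, 0 ≤ x l → ∀ d c b a,
    |partialDeriv d (partialDeriv c (partialDeriv b (V a))) x|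
      ≤ C₀ * fieldGrowth H (ε + √(∑ c, x c ^ 2)) 3

lemma isGaugeField_of_norm_iteratedFDeriv_le {V : (ι → ℝ) → ι → ℝ} (hV : ContDiff ℝ ∞ V)
    (hb : IsBoundaryAdapted l fun a x ↦ V x a)
    (hd : ∀ k ≤ 3, ∀ dirs : Fin k → ι, ∀ x : ι → ℝ, 0 ≤ x l →
      ‖iteratedFDeriv ℝ k V x fun i ↦ Pi.single (dirs i) 1‖
        ≤ C₀ * fieldGrowth H (ε + √(∑ c, x c ^ 2)) k) :
    IsGaugeField l C₀ ε H fun a x ↦ V x a where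
  contDiff := contDiff_pi.1 hV
  isBoundaryAdapted := hb
  deriv_one x hx b a := by
    have := (norm_le_pi_norm _ a).trans (hd 1 (by norm_num) ![b] x hx)
    rwa [iteratedFDeriv_one_single_apply hV] at this
  deriv_two x hx c b a := by
    have := (norm_le_pi_norm _ a).trans (hd 2 (by norm_num) ![c, b] x hx)
    rwa [iteratedFDeriv_two_single_apply hV] at this
  deriv_three x hx d c b a := by
    have := (norm_le_pi_norm _ a).trans (hd 3 (by norm_num) ![d, c, b] x hx)
    rwa [iteratedFDeriv_three_single_apply hV] at this

lemma IsGaugeField.isDerivBound_dilate (h : IsGaugeField l C₀ ε H V) (hε : 0 ≤ ε) (hεr : ε ≤ r)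
    (hr : 0 < r) (hD : ∀ a b, ∀ s ∈ (H a b).support, s.degree ≤ D)
    (hB : ∀ a b, ∀ s ∈ exponents ι D, |coeff s (dilate r (H a b))| ≤ B)
    (hM : |C₀| * (3 ^ (D + 1) * Fintype.card ι ^ 2 * (exponents ι D).card * B) ≤ M)
    {y : ι → ℝ} (hy : y ∈ halfAnnulus l)
    (h0 : ∀ a b, |eval y (dilate r (H a b))| ≤ M)
    (h1 : ∀ c a b, |eval y (pderiv c (dilate r (H a b)))| ≤ M)
    (h2 : ∀ d c a b, |eval y (pderiv d (pderiv c (dilate r (H a b))))| ≤ M) :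
    IsDerivBound (fun a b ↦ dilate r (H a b)) (dilateField r V) M y := by
  obtain ⟨normal_nonneg, le_norm, norm_lt⟩ := (smul_mem_scaledHalfAnnulus_iff hr).2 hy
  have growth_le (k : ℕ) :
      C₀ * fieldGrowth H (ε + √(∑ c, (r • y) c ^ 2)) k ≤ M * (r / r ^ k) := by
    have growth_nonneg : 0 ≤ fieldGrowth H (ε + √(∑ c, (r • y) c ^ 2)) k :=
      Finset.sum_nonneg fun i _ ↦ Finset.sum_nonneg fun j _ ↦ Finset.sum_nonneg fun s _ ↦
        by positivity
    calc C₀ * fieldGrowth H (ε + √(∑ c, (r • y) c ^ 2)) k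
        ≤ |C₀| * (3 ^ (D + 1) * Fintype.card ι ^ 2 * (exponents ι D).card * B * (r / r ^ k)) :=
          mul_le_mul (le_abs_self C₀)
            (fieldGrowth_le hr (by linarith) (by linarith) hD hB k) growth_nonneg (abs_nonneg C₀)
      _ = |C₀| * (3 ^ (D + 1) * Fintype.card ι ^ 2 * (exponents ι D).card * B) * (r / r ^ k) := by
          ring
      _ ≤ M * (r / r ^ k) := by gcongr
  refine ⟨h0, h1, h2, fun b a ↦ ?_, fun c b a ↦ ?_, fun d c b a ↦ ?_⟩
  · rw [partialDeriv_dilateField h.contDiff hr.ne']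
    refine ((h.deriv_one _ normal_nonneg b a).trans (growth_le 1)).trans_eq ?_
    field_simp
  · rw [partialDeriv_partialDeriv_dilateField h.contDiff hr.ne', abs_mul, abs_of_pos hr,
      ← le_div_iff₀' hr]
    refine ((h.deriv_two _ normal_nonneg c b a).trans (growth_le 2)).trans_eq ?_
    field_simp
  · rw [partialDeriv_partialDeriv_partialDeriv_dilateField h.contDiff hr.ne', abs_mul,
      abs_of_pos (by positivity), ← le_div_iff₀' (by positivity)]
    refine ((h.deriv_three _ normal_nonneg d c b a).trans (growth_le 3)).trans_eq ?_
    field_simp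

end GaugeField

section HessianEstimate

variable {m : ℕ}

lemma eval_pderiv_pderiv_dilate {ι : Type*} (r : ℝ) (p : MvPolynomial ι ℝ) (x : ι → ℝ) (c d : ι) :
    eval x (pderiv c (pderiv d (dilate r p))) = r ^ 2 * eval (r • x) (pderiv c (pderiv d p)) := by
  rw [pderiv_dilate, pderiv_C_mul, pderiv_dilate, map_mul, map_mul, eval_C, eval_dilate]
  ring

lemma exists_admissibleTriple_dilate (m D : ℕ) (C₀ : ℝ) :
    ∃ K, ∀ (H : Fin (m + 1) → Fin (m + 1) → MvPolynomial (Fin (m + 1)) ℝ)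
      (V : Fin (m + 1) → (Fin (m + 1) → ℝ) → ℝ) (ε r : ℝ), IsGaugeFixed H →
      (∀ a b, ∀ s ∈ (H a b).support, s.degree ≤ D) → IsGaugeField (Fin.last m) C₀ ε H V →
      0 ≤ ε → ε ≤ r → 0 < r → ∃ q : AdmissibleTriple (gaugeFixedTensor m D) (Fin.last m) K,
        q.ε = ε / r ∧ gaugeFixedTensor m D q.tensor = (fun a b ↦ dilate r (H a b)) ∧
          q.field = dilateField r V := by
  obtain ⟨K, hK⟩ := exists_tensor_deriv_bound
    (isCompact_closedBall (0 : Fin (m + 1) → ℝ) 2) (gaugeFixedTensor m D)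
  let L : ℝ := |C₀| * (3 ^ (D + 1) * Fintype.card (Fin (m + 1)) ^ 2
    * (exponents (Fin (m + 1)) D).card)
  refine ⟨max K L, fun H V ε r hH hD hV hε hεr hr ↦ ?_⟩
  obtain ⟨k, hk⟩ := (hH.dilate hr.ne').exists_eq_gaugeFixedTensor (D := D)
    fun a b s hs ↦ hD a b s (support_dilate_subset _ hs)
  have coeff_le (a b) (s) (hs : s ∈ exponents (Fin (m + 1)) D) :
      |coeff s (dilate r (H a b))| ≤ ‖k‖ := by
    simpa only [hk] using abs_coeff_gaugeFixedTensor_le_norm k a b ⟨s, hs⟩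
  have tensor_le : K * ‖k‖ ≤ max K L * ‖k‖ := by
    gcongr
    exact le_max_left K L
  have field_le : |C₀| * (3 ^ (D + 1) * Fintype.card (Fin (m + 1)) ^ 2
      * (exponents (Fin (m + 1)) D).card * ‖k‖) ≤ max K L * ‖k‖ := by
    rw [← mul_assoc]
    gcongr
    exact le_max_right K L
  refine ⟨⟨ε / r, k, dilateField r V, by positivity, (div_le_one hr).2 hεr,
    contDiff_dilateField hV.contDiff, hV.isBoundaryAdapted.dilateField hV.contDiff hr.ne',
    fun y hy ↦ ?_⟩, rfl, hk, rfl⟩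
  obtain ⟨h0, h1, h2⟩ := hK y (halfAnnulus_subset_closedBall _ hy) k
  rw [hk] at h0 h1 h2 ⊢
  exact hV.isDerivBound_dilate hε hεr hr hD coeff_le field_le hy
    (fun a b ↦ (h0 a b).trans tensor_le) (fun c a b ↦ (h1 c a b).trans tensor_le)
    fun d c a b ↦ (h2 d c a b).trans tensor_le

theorem exists_sq_eval_pderiv_pderiv_le (hm : 3 ≤ m) (D : ℕ) (C₀ : ℝ) :
    ∃ C, 0 ≤ C ∧ ∀ (H : Fin (m + 1) → Fin (m + 1) → MvPolynomial (Fin (m + 1)) ℝ)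
      (V : Fin (m + 1) → (Fin (m + 1) → ℝ) → ℝ) (ε r : ℝ), IsGaugeFixed H →
      (∀ a b, ∀ s ∈ (H a b).support, s.degree ≤ D) → IsGaugeField (Fin.last m) C₀ ε H V →
      0 ≤ ε → ε ≤ r → 0 < r → ∀ x ∈ Metric.closedBall 0 (2 * r), ∀ a b c d,
        r ^ (m + 7) * eval x (pderiv c (pderiv d (H a b))) ^ 2
          ≤ C * ∫ x in scaledHalfAnnulus (Fin.last m) r,
              bubbleDensity (Pi.single (Fin.last m) ε) (gaugeDefect H V) x := by
  obtain ⟨K, hK⟩ := exists_admissibleTriple_dilate m D C₀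
  obtain ⟨B, hB⟩ := exists_tensor_deriv_bound
    (isCompact_closedBall (0 : Fin (m + 1) → ℝ) 2) (gaugeFixedTensor m D)
  obtain ⟨C, hC⟩ := exists_sq_norm_le_bubbleEnergy hm gaugeFixedTensor_injective
    (isGaugeFixed_gaugeFixedTensor (D := D)) K
  refine ⟨B ^ 2 * |C|, by positivity, fun H V ε r hH hD hV hε hεr hr x hx a b c d ↦ ?_⟩
  obtain ⟨q, hqε, hqH, hqV⟩ := hK H V ε r hH hD hV hε hεr hr
  have mem_closedBall : r⁻¹ • x ∈ Metric.closedBall (0 : Fin (m + 1) → ℝ) 2 := by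
    rw [mem_closedBall_zero_iff, norm_smul, norm_inv, Real.norm_of_nonneg hr.le,
      inv_mul_le_iff₀ hr, mul_comm]
    exact mem_closedBall_zero_iff.1 hx
  have hessian_le : |r ^ 2 * eval x (pderiv c (pderiv d (H a b)))| ≤ B * ‖q.tensor‖ := by
    have := (hB _ mem_closedBall q.tensor).2.2 c d a b
    rwa [hqH, eval_pderiv_pderiv_dilate, smul_inv_smul₀ hr.ne'] at this
  have energy_eq : r ^ (m + 3) * q.energy = ∫ x in scaledHalfAnnulus (Fin.last m) r,
      bubbleDensity (Pi.single (Fin.last m) ε) (gaugeDefect H V) x := by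
    rw [AdmissibleTriple.energy, hqε, hqH, hqV, ← bubbleEnergy_dilate hV.contDiff hr,
      Fintype.card_fin]
  calc r ^ (m + 7) * eval x (pderiv c (pderiv d (H a b))) ^ 2
      = r ^ (m + 3) * |r ^ 2 * eval x (pderiv c (pderiv d (H a b)))| ^ 2 := by
        rw [sq_abs]
        ring
    _ ≤ r ^ (m + 3) * (B * ‖q.tensor‖) ^ 2 := by gcongr
    _ = r ^ (m + 3) * (B ^ 2 * ‖q.tensor‖ ^ 2) := by ring
    _ ≤ r ^ (m + 3) * (B ^ 2 * (|C| * q.energy)) := by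
        gcongr
        exact (hC q).trans (mul_le_mul_of_nonneg_right (le_abs_self C) (bubbleEnergy_nonneg ..))
    _ = B ^ 2 * |C| * (r ^ (m + 3) * q.energy) := by ring
    _ = _ := by rw [energy_eq]

end HessianEstimate

section Bubble

variable {ι : Type*} [Fintype ι] {p : ι → ℝ} {ε : ℝ} {x : ι → ℝ}

/-- The bubble `U_ε`, with the center `-p` in place of the paper's `-ε eₙ`. -/
noncomputable def bubble (ε : ℝ) (p : ι → ℝ) (x : ι → ℝ) : ℝ :=
  (ε / poleDistSq p x) ^ (((Fintype.card ι : ℝ) - 2) / 2)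

lemma sq_bubble (hι : 2 ≤ Fintype.card ι) (hε : 0 ≤ ε) :
    bubble ε p x ^ 2 = (ε / poleDistSq p x) ^ (Fintype.card ι - 2) := by
  have hN : 0 ≤ poleDistSq p x := Finset.sum_nonneg fun a _ ↦ sq_nonneg _
  rw [bubble, ← Real.rpow_natCast, ← Real.rpow_mul (by positivity), ← Real.rpow_natCast,
    Nat.cast_sub hι]
  push_cast
  congr 1
  ring

variable [DecidableEq ι]

lemma partialDeriv_bubble (hε : 0 < ε) (hx : 0 < poleDistSq p x) (a : ι) :
    partialDeriv a (bubble ε p) x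
      = -((Fintype.card ι : ℝ) - 2) * ((x a + p a) / poleDistSq p x) * bubble ε p x := by
  have hq : 0 < ε / poleDistSq p x := by positivity
  have hasDerivAt_div : HasDerivAt (fun t ↦ ε / t) (-ε / poleDistSq p x ^ 2) (poleDistSq p x) := by
    simpa using (hasDerivAt_const _ ε).fun_div (hasDerivAt_id' (poleDistSq p x)) hx.ne'
  have hasFDerivAt_distSq : HasFDerivAt (poleDistSq p) (fderiv ℝ (poleDistSq p) x) x :=
    ((contDiff_poleDistSq p).differentiable (by simp) x).hasFDerivAt
  have hasFDerivAt_bubble := (hasDerivAt_div.rpow_const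
    (p := ((Fintype.card ι : ℝ) - 2) / 2) (.inl hq.ne')).comp_hasFDerivAt x hasFDerivAt_distSq
  have fderiv_bubble : fderiv ℝ (bubble ε p) x = _ := hasFDerivAt_bubble.fderiv
  have fderiv_distSq : fderiv ℝ (poleDistSq p) x (Pi.single a 1) = 2 * (x a + p a) :=
    partialDeriv_poleDistSq p a x
  rw [partialDeriv, fderiv_bubble, smul_apply, fderiv_distSq, bubble,
    Real.rpow_sub_one hq.ne', smul_eq_mul]
  field_simp

/-- The tensor `Q_{ab,c}` of the paper, for an arbitrary weight `U`. -/
noncomputable def weightedGradient (U : (ι → ℝ) → ℝ) (T : ι → ι → (ι → ℝ) → ℝ) (a b c : ι)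
    (x : ι → ℝ) : ℝ :=
  U x * partialDeriv c (T a b) x
    - 2 / ((Fintype.card ι : ℝ) - 2) * partialDeriv a U x * T b c x
    - 2 / ((Fintype.card ι : ℝ) - 2) * partialDeriv b U x * T a c x
    + 2 / ((Fintype.card ι : ℝ) - 2) * (∑ d, partialDeriv d U x * T a d x)
        * (if b = c then 1 else 0)
    + 2 / ((Fintype.card ι : ℝ) - 2) * (∑ d, partialDeriv d U x * T b d x)
        * (if a = c then 1 else 0)

variable {T : ι → ι → (ι → ℝ) → ℝ}

lemma weightedGradient_bubble (hι : Fintype.card ι ≠ 2) (hε : 0 < ε) (hx : 0 < poleDistSq p x)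
    (a b c : ι) : weightedGradient (bubble ε p) T a b c x
      = bubble ε p x / poleDistSq p x * bubbleGradient p T a b c x := by
  have card_sub_ne_zero : (Fintype.card ι : ℝ) - 2 ≠ 0 := sub_ne_zero.2 (by exact_mod_cast hι)
  have contract (a : ι) : ∑ d, partialDeriv d (bubble ε p) x * T a d x
      = -((Fintype.card ι : ℝ) - 2) * (bubble ε p x / poleDistSq p x) * poleContract p T a x := by
    simp only [poleContract, Finset.mul_sum, partialDeriv_bubble hε hx]
    exact Finset.sum_congr rfl fun d _ ↦ by ring
  rw [weightedGradient, contract, contract, partialDeriv_bubble hε hx, partialDeriv_bubble hε hx,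
    bubbleGradient]
  field_simp
  ring

lemma sum_sq_weightedGradient_bubble (hι : 2 < Fintype.card ι) (hε : 0 < ε)
    (hx : 0 < poleDistSq p x) : ∑ a, ∑ b, ∑ c, weightedGradient (bubble ε p) T a b c x ^ 2
      = ε ^ (Fintype.card ι - 2) / poleDistSq p x ^ Fintype.card ι * bubbleDensity p T x := by
  have factor : (bubble ε p x / poleDistSq p x) ^ 2
      = ε ^ (Fintype.card ι - 2) / poleDistSq p x ^ Fintype.card ι := by
    rw [div_pow, sq_bubble hι.le hε.le, div_pow, div_div, ← pow_add, Nat.sub_add_cancel hι.le]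
  simp only [weightedGradient_bubble hι.ne' hε hx, mul_pow, factor, bubbleDensity, Finset.mul_sum]

end Bubble

section EnergyComparison

variable {ι : Type*} [Fintype ι] {l : ι} {r ε : ℝ}

lemma scaledHalfAnnulus_subset_closedBall (hr : 0 < r) :
    scaledHalfAnnulus l r ⊆ Metric.closedBall 0 (2 * r) := by
  rw [← smul_halfAnnulus hr]
  rintro _ ⟨y, hy, rfl⟩
  have norm_le : ‖y‖ ≤ 2 := mem_closedBall_zero_iff.1 (halfAnnulus_subset_closedBall l hy)
  rw [mem_closedBall_zero_iff, norm_smul, Real.norm_of_nonneg hr.le, mul_comm]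
  gcongr

lemma measurableSet_scaledHalfAnnulus (hr : 0 < r) : MeasurableSet (scaledHalfAnnulus l r) := by
  rw [← smul_halfAnnulus hr]
  exact (measurableSet_halfAnnulus l).const_smul_of_ne_zero hr.ne'

lemma integrableOn_scaledHalfAnnulus {f : (ι → ℝ) → ℝ} (hf : Continuous f) (hr : 0 < r) :
    IntegrableOn f (scaledHalfAnnulus l r) :=
  (hf.continuousOn.integrableOn_compact (isCompact_closedBall 0 (2 * r))).mono_set
    (scaledHalfAnnulus_subset_closedBall hr)

variable [DecidableEq ι] {T : ι → ι → (ι → ℝ) → ℝ} {x : ι → ℝ}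

lemma poleDistSq_mem_Icc (hε : 0 ≤ ε) (hεr : ε ≤ r) (hr : 0 < r)
    (hx : x ∈ scaledHalfAnnulus l r) :
    poleDistSq (Pi.single l ε) x ∈ Set.Icc (r ^ 2) (9 * r ^ 2) := by
  obtain ⟨normal_nonneg, le_norm, norm_lt⟩ := hx
  rw [Real.le_sqrt' hr] at le_norm
  have normal_le : x l ≤ 2 * r := (le_abs_self _).trans <| (Real.abs_le_sqrt
    (Finset.single_le_sum (fun a _ ↦ sq_nonneg (x a)) (Finset.mem_univ l))).trans norm_lt.le
  rw [Real.sqrt_lt' (by positivity)] at norm_lt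
  rw [poleDistSq_single]
  constructor
  · nlinarith [mul_nonneg hε normal_nonneg]
  · nlinarith [mul_le_mul hεr normal_le normal_nonneg hr.le]

lemma integral_bubbleDensity_le (hι : 2 < Fintype.card ι) (hε : 0 < ε) (hεr : ε ≤ r)
    (hT : ∀ a b, ContDiff ℝ ∞ (T a b)) :
    ε ^ (Fintype.card ι - 2) / (9 * r ^ 2) ^ Fintype.card ι
        * ∫ x in scaledHalfAnnulus l r, bubbleDensity (Pi.single l ε) T x
      ≤ ∫ x in scaledHalfAnnulus l r,
          ∑ a, ∑ b, ∑ c, weightedGradient (bubble ε (Pi.single l ε)) T a b c x ^ 2 := by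
  have hr : 0 < r := hε.trans_le hεr
  have measurableSet := measurableSet_scaledHalfAnnulus (l := l) hr
  have distSq_mem {x : ι → ℝ} (hx : x ∈ scaledHalfAnnulus l r) :=
    poleDistSq_mem_Icc hε.le hεr hr hx
  have distSq_pos {x : ι → ℝ} (hx : x ∈ scaledHalfAnnulus l r) :
      0 < poleDistSq (Pi.single l ε) x := (by positivity : 0 < r ^ 2).trans_le (distSq_mem hx).1
  have integrableOn : IntegrableOn (bubbleDensity (Pi.single l ε) T) (scaledHalfAnnulus l r) :=
    integrableOn_scaledHalfAnnulus (continuous_bubbleDensity hT) hr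
  rw [setIntegral_congr_fun measurableSet
      fun x hx ↦ sum_sq_weightedGradient_bubble hι hε (distSq_pos hx), ← integral_const_mul]
  refine setIntegral_mono_on (integrableOn.const_mul _) ?_ measurableSet fun x hx ↦ ?_
  · refine integrableOn.bdd_mul (c := ε ^ (Fintype.card ι - 2) / (r ^ 2) ^ Fintype.card ι) ?_ ?_
    · have := (contDiff_poleDistSq (Pi.single l ε)).continuous.measurable
      exact Measurable.aestronglyMeasurable (by fun_prop)
    · filter_upwards [ae_restrict_mem measurableSet] with x hx
      have := distSq_pos hx
      rw [Real.norm_of_nonneg (by positivity)]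
      gcongr
      exact (distSq_mem hx).1
  · have := distSq_pos hx
    gcongr
    · exact bubbleDensity_nonneg x
    · exact (distSq_mem hx).2

end EnergyComparison

section Curvature

lemma abs_one_div_intCast_le_one (z : ℤ) : |1 / (z : ℝ)| ≤ 1 := by
  rcases eq_or_ne z 0 with rfl | hz
  · simp
  · have one_le_abs : (1 : ℝ) ≤ |(z : ℝ)| := mod_cast Int.one_le_abs hz
    rw [abs_div, abs_one]
    exact div_le_one_of_le₀ one_le_abs (abs_nonneg _)

variable {ι : Type*} [Fintype ι] [DecidableEq ι]

/-- The tensor `A_{ac}` of the paper: up to sign, twice the linearized Ricci tensor with a multiple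
of the linearized scalar curvature removed. -/
noncomputable def ricciTensor (H : ι → ι → MvPolynomial ι ℝ) (a c : ι) : MvPolynomial ι ℝ :=
  (∑ e, (pderiv c (pderiv e (H a e)) + pderiv a (pderiv e (H c e)) - pderiv e (pderiv e (H a c))))
    - C (1 / ((Fintype.card ι : ℝ) - 1)) * (∑ e, ∑ f, pderiv e (pderiv f (H e f)))
      * (if a = c then 1 else 0)

/-- The tensor `Z_{abcd}` of the paper. The last Kronecker symbol is `δ_{db}`, as printed there;
the linearized Weyl tensor would have `δ_{ad}`. -/
noncomputable def weylTensor (H : ι → ι → MvPolynomial ι ℝ) (a b c d : ι) : MvPolynomial ι ℝ :=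
  pderiv b (pderiv d (H a c)) - pderiv b (pderiv c (H a d))
    + pderiv a (pderiv c (H d b)) - pderiv a (pderiv d (H b c))
    + C (1 / ((Fintype.card ι : ℝ) - 2))
        * ((if b = d then ricciTensor H a c else 0) - (if b = c then ricciTensor H a d else 0)
            + (if a = c then ricciTensor H b d else 0) - (if d = b then ricciTensor H b c else 0))

variable {H : ι → ι → MvPolynomial ι ℝ} {x : ι → ℝ} {B : ℝ}

lemma abs_eval_ricciTensor_le (h : ∀ a b c d, |eval x (pderiv c (pderiv d (H a b)))| ≤ B)
    (a c : ι) : |eval x (ricciTensor H a c)| ≤ (3 * Fintype.card ι + Fintype.card ι ^ 2) * B := by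
  have hB : 0 ≤ B := (abs_nonneg _).trans (h a a a a)
  have single_sum : |∑ e, (eval x (pderiv c (pderiv e (H a e)))
      + eval x (pderiv a (pderiv e (H c e))) - eval x (pderiv e (pderiv e (H a c))))|
      ≤ 3 * Fintype.card ι * B := by
    refine (Finset.abs_sum_le_sum_abs _ _).trans <|
      (Finset.sum_le_card_nsmul _ _ (3 * B) fun e _ ↦ ?_).trans_eq ?_
    · linarith [abs_sub (eval x (pderiv c (pderiv e (H a e)))
        + eval x (pderiv a (pderiv e (H c e)))) (eval x (pderiv e (pderiv e (H a c)))),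
        abs_add_le (eval x (pderiv c (pderiv e (H a e)))) (eval x (pderiv a (pderiv e (H c e)))),
        h a e c e, h c e a e, h a c e e]
    · rw [Finset.card_univ, nsmul_eq_mul]
      ring
  have double_sum : |∑ e, ∑ f, eval x (pderiv e (pderiv f (H e f)))|
      ≤ Fintype.card ι ^ 2 * B := by
    calc _ ≤ ∑ _e : ι, ∑ _f : ι, B := (Finset.abs_sum_le_sum_abs _ _).trans <|
          Finset.sum_le_sum fun e _ ↦ (Finset.abs_sum_le_sum_abs _ _).trans <|
            Finset.sum_le_sum fun f _ ↦ h e f e f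
      _ = Fintype.card ι ^ 2 * B := by simp [sq, mul_assoc]
  have coeff_le : |1 / ((Fintype.card ι : ℝ) - 1)| ≤ 1 := by
    simpa using abs_one_div_intCast_le_one ((Fintype.card ι : ℤ) - 1)
  have delta_le : |(if a = c then 1 else 0 : ℝ)| ≤ 1 := by split_ifs <;> simp
  have trace_term := mul_le_mul (mul_le_mul coeff_le double_sum (abs_nonneg _) zero_le_one)
    delta_le (abs_nonneg _) (by positivity)
  rw [← abs_mul, ← abs_mul] at trace_term
  simp only [ricciTensor, map_sub, map_sum, map_add, map_mul, eval_C, apply_ite (eval x), map_one,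
    map_zero]
  exact (abs_sub _ _).trans (by linarith)

lemma abs_eval_weylTensor_le (h : ∀ a b c d, |eval x (pderiv c (pderiv d (H a b)))| ≤ B)
    (a b c d : ι) : |eval x (weylTensor H a b c d)|
      ≤ (4 + 4 * (3 * Fintype.card ι + Fintype.card ι ^ 2)) * B := by
  have hB : 0 ≤ B := (abs_nonneg _).trans (h a a a a)
  have ricci_term (q : Prop) [Decidable q] (a c : ι) :
      |if q then eval x (ricciTensor H a c) else 0|
        ≤ (3 * Fintype.card ι + Fintype.card ι ^ 2) * B := by
    split_ifs
    · exact abs_eval_ricciTensor_le h a c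
    · rw [abs_zero]
      positivity
  have coeff_le : |1 / ((Fintype.card ι : ℝ) - 2)| ≤ 1 := by
    simpa using abs_one_div_intCast_le_one ((Fintype.card ι : ℤ) - 2)
  have abs_four_le (s t u v : ℝ) : |s - t + u - v| ≤ |s| + |t| + |u| + |v| := by
    linarith [abs_sub (s - t + u) v, abs_add_le (s - t) u, abs_sub s t]
  simp only [weylTensor, map_add, map_sub, map_mul, eval_C, apply_ite (eval x), map_zero]
  refine (abs_add_le _ _).trans ?_
  rw [abs_mul]
  refine (add_le_add (abs_four_le _ _ _ _)
    ((mul_le_of_le_one_left (abs_nonneg _) coeff_le).trans (abs_four_le _ _ _ _))).trans ?_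
  linarith [h a c b d, h a d b c, h d b a c, h b c a d, ricci_term (b = d) a c,
    ricci_term (b = c) a d, ricci_term (a = c) b d, ricci_term (d = b) b c]

lemma sum_sq_eval_weylTensor_le
    (h : ∀ a b c d, eval x (pderiv c (pderiv d (H a b))) ^ 2 ≤ B) :
    ∑ a, ∑ b, ∑ c, ∑ d, eval x (weylTensor H a b c d) ^ 2 ≤ Fintype.card ι ^ 4
      * (4 + 4 * (3 * Fintype.card ι + Fintype.card ι ^ 2)) ^ 2 * B := by
  have sq_le (a b c d : ι) : eval x (weylTensor H a b c d) ^ 2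
      ≤ (4 + 4 * (3 * Fintype.card ι + Fintype.card ι ^ 2)) ^ 2 * B := by
    rw [← Real.sq_sqrt ((sq_nonneg _).trans (h a a a a)), ← mul_pow]
    exact sq_le_sq.2 <| (abs_eval_weylTensor_le (fun a b c d ↦ Real.abs_le_sqrt (h a b c d))
      a b c d).trans (le_abs_self _)
  calc _ ≤ ∑ _a : ι, ∑ _b : ι, ∑ _c : ι, ∑ _d : ι,
          (4 + 4 * (3 * Fintype.card ι + Fintype.card ι ^ 2) : ℝ) ^ 2 * B := by
        gcongr
        exact sq_le _ _ _ _
    _ = _ := by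
        simp only [Finset.sum_const, Finset.card_univ, nsmul_eq_mul]
        ring

lemma setIntegral_sum_sq_eval_weylTensor_le {s : Set (ι → ℝ)} {r : ℝ} (hr : 0 ≤ r)
    (hs : s ⊆ Metric.closedBall 0 (2 * r)) (hB : 0 ≤ B)
    (h : ∀ x ∈ s, ∀ a b c d, eval x (pderiv c (pderiv d (H a b))) ^ 2 ≤ B) :
    ∫ x in s, ∑ a, ∑ b, ∑ c, ∑ d, eval x (weylTensor H a b c d) ^ 2 ≤ Fintype.card ι ^ 4
      * (4 + 4 * (3 * Fintype.card ι + Fintype.card ι ^ 2)) ^ 2 * B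
      * (4 * r) ^ Fintype.card ι := by
  have volume_ball := Real.volume_pi_closedBall (0 : ι → ℝ) (r := 2 * r) (by positivity)
  have volume_lt_top : volume (Metric.closedBall (0 : ι → ℝ) (2 * r)) < ⊤ :=
    volume_ball ▸ ENNReal.ofReal_lt_top
  have norm_le (x : ι → ℝ) (hx : x ∈ s) :
      ‖∑ a, ∑ b, ∑ c, ∑ d, eval x (weylTensor H a b c d) ^ 2‖ ≤ Fintype.card ι ^ 4
        * (4 + 4 * (3 * Fintype.card ι + Fintype.card ι ^ 2)) ^ 2 * B := by
    rw [Real.norm_of_nonneg (by positivity)]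
    exact sum_sq_eval_weylTensor_le (h x hx)
  refine (Real.le_norm_self _).trans <| (norm_setIntegral_le_of_norm_le_const
    ((measure_mono hs).trans_lt volume_lt_top) norm_le).trans ?_
  gcongr
  refine (measureReal_mono hs volume_lt_top.ne).trans_eq ?_
  rw [measureReal_def, volume_ball, ENNReal.toReal_ofReal (by positivity)]
  ring

/-- The interior ball `U_r` of the paper, with `l` the normal coordinate. -/
def interiorBall (l : ι) (r : ℝ) : Set (ι → ℝ) :=
  {x | √(∑ a, (x a - if a = l then 3 * r / 2 else 0) ^ 2) < r / 4}

lemma interiorBall_subset_closedBall (l : ι) {r : ℝ} (hr : 0 < r) :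
    interiorBall l r ⊆ Metric.closedBall 0 (2 * r) := by
  intro x hx
  rw [mem_closedBall_zero_iff, pi_norm_le_iff_of_nonneg (by positivity)]
  intro i
  have abs_sub_lt : |x i - if i = l then 3 * r / 2 else 0| < r / 4 :=
    (Real.abs_le_sqrt (Finset.single_le_sum
      (f := fun a ↦ (x a - if a = l then 3 * r / 2 else 0) ^ 2)
      (fun _ _ ↦ sq_nonneg _) (Finset.mem_univ i))).trans_lt hx
  have center_le : |if i = l then 3 * r / 2 else 0| ≤ 3 * r / 2 := by
    split_ifs
    · rw [abs_of_pos (by positivity)]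
    · rw [abs_zero]
      positivity
  rw [Real.norm_eq_abs]
  linarith [abs_sub_abs_le_abs_sub (x i) (if i = l then 3 * r / 2 else 0)]

end Curvature

section Main

variable {m : ℕ}

theorem exists_setIntegral_sq_weylTensor_le (hm : 3 ≤ m) (D : ℕ) (C₀ : ℝ) :
    ∃ K, 0 < K ∧ ∀ (H : Fin (m + 1) → Fin (m + 1) → MvPolynomial (Fin (m + 1)) ℝ) V ε r,
      IsGaugeFixed H → (∀ a b, ∀ s ∈ (H a b).support, s.degree ≤ D) →
      IsGaugeField (Fin.last m) C₀ ε H V → 0 < ε → ε ≤ r →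
      ε ^ (m + 1 - 2) * r ^ ((6 : ℤ) - 2 * (m + 1 : ℕ))
          * ∫ x in interiorBall (Fin.last m) r,
            ∑ a, ∑ b, ∑ c, ∑ d, eval x (weylTensor H a b c d) ^ 2
        ≤ K * ∫ x in scaledHalfAnnulus (Fin.last m) r, ∑ a, ∑ b, ∑ c,
            weightedGradient (bubble ε (Pi.single (Fin.last m) ε)) (gaugeDefect H V) a b c x ^ 2
    := by
  obtain ⟨K, hK, hessian_le⟩ := exists_sq_eval_pderiv_pderiv_le hm D C₀
  set M : ℝ := ((m + 1 : ℕ) : ℝ) ^ 4 * (4 + 4 * (3 * (m + 1 : ℕ) + ((m + 1 : ℕ) : ℝ) ^ 2)) ^ 2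
  refine ⟨M * 4 ^ (m + 1) * 9 ^ (m + 1) * K + 1, by positivity,
    fun H V ε r hH hdeg hV hε hεr ↦ ?_⟩
  have hr : 0 < r := hε.trans_le hεr
  set J := ∫ x in scaledHalfAnnulus (Fin.last m) r,
    bubbleDensity (Pi.single (Fin.last m) ε) (gaugeDefect H V) x
  have hJ : 0 ≤ J := integral_nonneg bubbleDensity_nonneg
  have energy_le := integral_bubbleDensity_le (l := Fin.last m) (T := gaugeDefect H V)
    (by rw [Fintype.card_fin]; omega) hε hεr (contDiff_gaugeDefect hV.contDiff)
  have curvature_le := setIntegral_sum_sq_eval_weylTensor_le (H := H) (B := K * J / r ^ (m + 7))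
    hr.le (interiorBall_subset_closedBall (Fin.last m) hr) (by positivity) fun x hx a b c d ↦ by
      rw [le_div_iff₀' (by positivity)]
      exact hessian_le H V ε r hH hdeg hV hε.le hεr hr x
        (interiorBall_subset_closedBall _ hr hx) a b c d
  rw [Fintype.card_fin] at energy_le curvature_le
  have scaling : ε ^ (m + 1 - 2) * r ^ ((6 : ℤ) - 2 * (m + 1 : ℕ))
      * (M * (K * J / r ^ (m + 7)) * (4 * r) ^ (m + 1))
      = M * 4 ^ (m + 1) * 9 ^ (m + 1) * K * (ε ^ (m + 1 - 2) / (9 * r ^ 2) ^ (m + 1) * J) := by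
    rw [zpow_sub₀ hr.ne', zpow_mul, zpow_natCast, zpow_ofNat, zpow_ofNat]
    field_simp
    ring
  calc _ ≤ _ := mul_le_mul_of_nonneg_left curvature_le (by positivity)
    _ = _ := scaling
    _ ≤ _ := mul_le_mul (le_add_of_nonneg_right zero_le_one) energy_le (by positivity)
        (by positivity)

end Main

section Coordinates

variable {m : ℕ}

lemma val_lt_iff_ne_last (i : Fin (m + 1)) : (i : ℕ) < m + 1 - 1 ↔ i ≠ Fin.last m :=
  Fin.lt_last_iff_ne_last (n := m)

lemma sq_add_sum_sq_eq_poleDistSq (ε : ℝ) (x : Fin (m + 1) → ℝ) :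
    (ε + x (Fin.last m)) ^ 2 + ∑ i : Fin (m + 1), (if (i : ℕ) < m + 1 - 1 then x i ^ 2 else 0)
      = poleDistSq (Pi.single (Fin.last m) ε) x := by
  simp only [poleDistSq_single, val_lt_iff_ne_last, Fin.sum_univ_castSucc]
  simp only [ne_eq, Fin.castSucc_ne_last, not_false_eq_true, ↓reduceIte, not_true_eq_false,
    add_zero]
  ring

variable {H : Fin (m + 1) → Fin (m + 1) → MvPolynomial (Fin (m + 1)) ℝ}

lemma isGaugeFixed_of_radial_eq_zero (symm : ∀ a b, H a b = H b a) (trace : ∑ a, H a a = 0)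
    (normal : ∀ a, H a (Fin.last m) = 0)
    (radial : ∀ i : Fin (m + 1), (i : ℕ) < m + 1 - 1 → ∀ x : Fin (m + 1) → ℝ,
      x (Fin.last m) = 0 →
      (∑ j : Fin (m + 1), if (j : ℕ) < m + 1 - 1 then x j * eval x (H i j) else 0) = 0) :
    IsGaugeFixed H where
  symm := symm
  trace := trace
  normal := normal
  radial i := MvPolynomial.funext fun x ↦ by
    have radial_snoc := radial i.castSucc (by simp) (Fin.snoc (α := fun _ ↦ ℝ) x 0) (by simp)
    simpa [Fin.sum_univ_castSucc, eval_restrictBoundary] using radial_snoc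

lemma sum_tangential_eq_fieldGrowth (symm : ∀ a b, H a b = H b a)
    (normal : ∀ a, H a (Fin.last m) = 0) (t : ℝ) (k : ℕ) :
    (∑ i : Fin (m + 1), ∑ j : Fin (m + 1),
      if (i : ℕ) < m + 1 - 1 ∧ (j : ℕ) < m + 1 - 1 then
        ∑ s ∈ (H i j).support, |coeff s (H i j)| * t ^ ((s.sum fun _ e ↦ (e : ℤ)) + 1 - (k : ℤ))
      else 0) = fieldGrowth H t k := by
  refine Finset.sum_congr rfl fun i _ ↦ Finset.sum_congr rfl fun j _ ↦ ?_
  simp only [val_lt_iff_ne_last]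
  split_ifs with tangential
  · simp [Finsupp.degree_apply, Finsupp.sum]
  · have vanish : H i j = 0 := by
      rcases not_and_or.1 tangential with hi | hj
      · rw [not_not.1 hi, symm, normal]
      · rw [not_not.1 hj, normal]
    simp [vanish]

end Coordinates

end ConformalGauge

open MvPolynomial ConformalGauge in
theorem stmt_5_general (n : ℕ) (hn : 4 ≤ n) (D : ℕ) (C₀ : ℝ) :
    ∃ K : ℝ, 0 < K ∧
    ∀ ε : ℝ, 0 < ε →
    ∀ U : (Fin n → ℝ) → ℝ,
      (∀ y : Fin n → ℝ, U y =
        (ε / ((ε + y ⟨n - 1, Nat.sub_one_lt_of_lt hn⟩) ^ 2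
          + ∑ i : Fin n, if (i : ℕ) < n - 1 then y i ^ 2 else 0)) ^ (((n : ℝ) - 2) / 2)) →
    ∀ H : Fin n → Fin n → MvPolynomial (Fin n) ℝ,
      (∀ a b : Fin n, ∀ s ∈ (H a b).support, s.degree ≤ D) →
      (∀ a b : Fin n, H a b = H b a) →
      ((∑ a : Fin n, H a a) = 0) →
      (∀ a : Fin n, H a ⟨n - 1, Nat.sub_one_lt_of_lt hn⟩ = 0) →
      (∀ i : Fin n, (i : ℕ) < n - 1 → ∀ x : Fin n → ℝ, x ⟨n - 1, Nat.sub_one_lt_of_lt hn⟩ = 0 →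
        (∑ j : Fin n, if (j : ℕ) < n - 1 then x j * eval x (H i j) else 0) = 0) →
    ∀ A : Fin n → Fin n → MvPolynomial (Fin n) ℝ,
      (∀ a c : Fin n, A a c =
        (∑ e : Fin n, (pderiv c (pderiv e (H a e)) + pderiv a (pderiv e (H c e))
          - pderiv e (pderiv e (H a c))))
        - C (1 / ((n : ℝ) - 1)) * (∑ e : Fin n, ∑ f : Fin n, pderiv e (pderiv f (H e f)))
            * (if a = c then 1 else 0)) →
    ∀ Z : Fin n → Fin n → Fin n → Fin n → MvPolynomial (Fin n) ℝ,
      (∀ a b c d : Fin n, Z a b c d =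
        pderiv b (pderiv d (H a c)) - pderiv b (pderiv c (H a d))
          + pderiv a (pderiv c (H d b)) - pderiv a (pderiv d (H b c))
          + C (1 / ((n : ℝ) - 2))
              * ((if b = d then A a c else 0) - (if b = c then A a d else 0)
                  + (if a = c then A b d else 0) - (if d = b then A b c else 0))) →
    ∀ V : (Fin n → ℝ) → Fin n → ℝ, ContDiff ℝ (⊤ : ℕ∞) V →
      (∀ i : Fin n, (i : ℕ) < n - 1 → ∀ x : Fin n → ℝ, x ⟨n - 1, Nat.sub_one_lt_of_lt hn⟩ = 0 →
        fderiv ℝ (fun w : Fin n → ℝ ↦ V w i) x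
            (Pi.single (⟨n - 1, Nat.sub_one_lt_of_lt hn⟩ : Fin n) 1) = 0
          ∧ V x ⟨n - 1, Nat.sub_one_lt_of_lt hn⟩ = 0) →
      (∀ k : ℕ, k ≤ 3 → ∀ dirs : Fin k → Fin n, ∀ x : Fin n → ℝ,
        0 ≤ x ⟨n - 1, Nat.sub_one_lt_of_lt hn⟩ →
        ‖iteratedFDeriv ℝ k V x (fun m ↦ Pi.single (dirs m) 1)‖
          ≤ C₀ * ∑ i : Fin n, ∑ j : Fin n,
              if (i : ℕ) < n - 1 ∧ (j : ℕ) < n - 1 then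
                ∑ s ∈ (H i j).support, |coeff s (H i j)|
                  * (ε + √(∑ c : Fin n, x c ^ 2))
                      ^ ((s.sum (fun _ e ↦ e) : ℤ) + 1 - (k : ℤ))
              else 0) →
    ∀ S : Fin n → Fin n → (Fin n → ℝ) → ℝ,
      (∀ (a b : Fin n) (x : Fin n → ℝ), S a b x =
        fderiv ℝ (fun w : Fin n → ℝ ↦ V w b) x (Pi.single a 1)
          + fderiv ℝ (fun w : Fin n → ℝ ↦ V w a) x (Pi.single b 1)
          - 2 / (n : ℝ)
              * (∑ c : Fin n, fderiv ℝ (fun w : Fin n → ℝ ↦ V w c) x (Pi.single c 1))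
              * (if a = b then 1 else 0)) →
    ∀ T : Fin n → Fin n → (Fin n → ℝ) → ℝ,
      (∀ (a b : Fin n) (x : Fin n → ℝ), T a b x = eval x (H a b) - S a b x) →
    ∀ Q : Fin n → Fin n → Fin n → (Fin n → ℝ) → ℝ,
      (∀ (a b c : Fin n) (x : Fin n → ℝ), Q a b c x =
        U x * fderiv ℝ (T a b) x (Pi.single c 1)
          - 2 / ((n : ℝ) - 2) * fderiv ℝ U x (Pi.single a 1) * T b c x
          - 2 / ((n : ℝ) - 2) * fderiv ℝ U x (Pi.single b 1) * T a c x
          + 2 / ((n : ℝ) - 2)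
              * (∑ d : Fin n, fderiv ℝ U x (Pi.single d 1) * T a d x)
              * (if b = c then 1 else 0)
          + 2 / ((n : ℝ) - 2)
              * (∑ d : Fin n, fderiv ℝ U x (Pi.single d 1) * T b d x)
              * (if a = c then 1 else 0)) →
    ∀ r : ℝ, ε ≤ r →
      ε ^ (n - 2) * r ^ ((6 : ℤ) - 2 * (n : ℤ))
          * ∫ x in {x : Fin n → ℝ |
              √(∑ a : Fin n, (x a - if (a : ℕ) = n - 1 then 3 * r / 2 else 0) ^ 2) < r / 4},
            ∑ a : Fin n, ∑ b : Fin n, ∑ c : Fin n, ∑ d : Fin n,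
              (eval x (Z a b c d)) ^ 2
        ≤ K * ∫ x in {x : Fin n → ℝ | 0 ≤ x ⟨n - 1, Nat.sub_one_lt_of_lt hn⟩
              ∧ r ≤ √(∑ a : Fin n, x a ^ 2)
              ∧ √(∑ a : Fin n, x a ^ 2) < 2 * r},
            ∑ a : Fin n, ∑ b : Fin n, ∑ c : Fin n, (Q a b c x) ^ 2 := by
  obtain ⟨m, rfl⟩ : ∃ m, n = m + 1 := ⟨n - 1, by omega⟩
  obtain ⟨K, hK, curvature_le⟩ := exists_setIntegral_sq_weylTensor_le (m := m) (by omega) D C₀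
  refine ⟨K, hK, fun ε hε U hU H hdeg symm trace normal radial A hA Z hZ V hV boundary growth
    S hS T hT Q hQ r hεr ↦ ?_⟩
  have gaugeFixed := isGaugeFixed_of_radial_eq_zero symm trace normal radial
  have adapted : IsBoundaryAdapted (Fin.last m) fun a x ↦ V x a :=
    ⟨fun x hx ↦ (boundary 0 (by simp; omega) x hx).2,
      fun i hi x hx ↦ (boundary i ((val_lt_iff_ne_last i).2 hi) x hx).1⟩
  have gaugeField : IsGaugeField (Fin.last m) C₀ ε H fun a x ↦ V x a :=
    isGaugeField_of_norm_iteratedFDeriv_le hV adapted fun k hk dirs x hx ↦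
      (growth k hk dirs x hx).trans_eq <| by rw [sum_tangential_eq_fieldGrowth symm normal]
  obtain rfl : U = bubble ε (Pi.single (Fin.last m) ε) := funext fun y ↦ by
    rw [hU, bubble, ← sq_add_sum_sq_eq_poleDistSq, Fintype.card_fin]
    rfl
  obtain rfl : A = ricciTensor H := by
    funext a c
    rw [hA, ricciTensor, Fintype.card_fin]
  obtain rfl : Z = weylTensor H := by
    funext a b c d
    rw [hZ, weylTensor, Fintype.card_fin]
  obtain rfl : T = gaugeDefect H fun a x ↦ V x a := by
    funext a b x
    rw [hT, hS, gaugeDefect, divFactor, Fintype.card_fin]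
    rfl
  obtain rfl : Q = weightedGradient _ _ := by
    funext a b c x
    rw [hQ, weightedGradient, Fintype.card_fin]
    rfl
  have interiorBall_eq : interiorBall (Fin.last m) r = {x | √(∑ a : Fin (m + 1),
      (x a - if (a : ℕ) = m + 1 - 1 then 3 * r / 2 else 0) ^ 2) < r / 4} := by
    simp [interiorBall, Fin.ext_iff]
  exact interiorBall_eq ▸ curvature_le H _ ε r gaugeFixed hdeg gaugeField hε hεr

/-- with the notation of the paper (bubble `U_ε`, polynomial tensor `H` with
coefficients `h_{ij,α}`, corrector vector field `V`, `S`, `T = H − S`, `Q_{ab,c}`, and the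
algebraic Weyl tensor `Z`), there is `C = C(n, C₀) > 0` such that for all `θ ∈ (0,1)`
and `r ≥ ε`:
`ε^{n−2} r^{6−2n} ∫_{U_r} Σ Z² ≤ (C/θ) ∫_{B⁺_{2r}∖B⁺_r} Σ Q² + θ ε^{n−2} Σ h² r^{2|α|+2−n}`. -/
theorem stmt_5 (n : ℕ) (hn : 4 ≤ n) (C₀ : ℝ) (hC₀ : 0 < C₀) :
    ∃ C : ℝ, 0 < C ∧
    ∀ ε ρ : ℝ, 0 < ε → 0 < ρ →
    ∀ U : (Fin n → ℝ) → ℝ,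
      (∀ y : Fin n → ℝ, U y =
        (ε / ((ε + y ⟨n - 1, by omega⟩) ^ 2
          + ∑ i : Fin n, if (i : ℕ) < n - 1 then y i ^ 2 else 0)) ^ (((n : ℝ) - 2) / 2)) →
    ∀ H : Fin n → Fin n → MvPolynomial (Fin n) ℝ,
      (∀ a b : Fin n, ∀ m ∈ (H a b).support,
        1 ≤ m.sum (fun _ e => e) ∧ m.sum (fun _ e => e) ≤ (n - 2) / 2) →
      (∀ a b : Fin n, H a b = H b a) →
      ((∑ a : Fin n, H a a) = 0) →
      (∀ a : Fin n, H a ⟨n - 1, by omega⟩ = 0) →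
      (∀ i j k : Fin n, (i : ℕ) < n - 1 → (j : ℕ) < n - 1 → (k : ℕ) < n - 1 →
        MvPolynomial.eval (0 : Fin n → ℝ) (MvPolynomial.pderiv k (H i j)) = 0) →
      (∀ i : Fin n, (i : ℕ) < n - 1 → ∀ x : Fin n → ℝ, x ⟨n - 1, by omega⟩ = 0 →
        (∑ j : Fin n, if (j : ℕ) < n - 1 then x j * MvPolynomial.eval x (H i j) else 0) = 0) →
    ∀ A : Fin n → Fin n → MvPolynomial (Fin n) ℝ,
      (∀ a c : Fin n, A a c =
        (∑ e : Fin n,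
          (MvPolynomial.pderiv c (MvPolynomial.pderiv e (H a e))
            + MvPolynomial.pderiv a (MvPolynomial.pderiv e (H c e))
            - MvPolynomial.pderiv e (MvPolynomial.pderiv e (H a c))))
        - MvPolynomial.C (1 / ((n : ℝ) - 1))
            * (∑ e : Fin n, ∑ f : Fin n,
                MvPolynomial.pderiv e (MvPolynomial.pderiv f (H e f)))
            * (if a = c then 1 else 0)) →
    ∀ Z : Fin n → Fin n → Fin n → Fin n → MvPolynomial (Fin n) ℝ,
      (∀ a b c d : Fin n, Z a b c d =
        MvPolynomial.pderiv b (MvPolynomial.pderiv d (H a c))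
          - MvPolynomial.pderiv b (MvPolynomial.pderiv c (H a d))
          + MvPolynomial.pderiv a (MvPolynomial.pderiv c (H d b))
          - MvPolynomial.pderiv a (MvPolynomial.pderiv d (H b c))
          + MvPolynomial.C (1 / ((n : ℝ) - 2))
              * ((if b = d then A a c else 0) - (if b = c then A a d else 0)
                  + (if a = c then A b d else 0) - (if d = b then A b c else 0))) →
    ∀ η : ℝ → ℝ, ContDiff ℝ (⊤ : ℕ∞) η → (∀ t : ℝ, 0 ≤ η t ∧ η t ≤ 1) →
      (∀ t : ℝ, 0 ≤ t → t ≤ 4 / 3 → η t = 1) → (∀ t : ℝ, 5 / 3 ≤ t → η t = 0) →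
    ∀ V : (Fin n → ℝ) → Fin n → ℝ, ContDiff ℝ (⊤ : ℕ∞) V →
      -- (i) the divergence-form equation on ℝⁿ₊
      (∀ a : Fin n, ∀ x : Fin n → ℝ, 0 ≤ x ⟨n - 1, by omega⟩ →
        (∑ b : Fin n, fderiv ℝ (fun z : Fin n → ℝ =>
          U z ^ (2 * (n : ℝ) / ((n : ℝ) - 2))
            * (η (Real.sqrt (∑ c : Fin n, z c ^ 2) / ρ) * MvPolynomial.eval z (H a b)
              - fderiv ℝ (fun w : Fin n → ℝ => V w b) z (Pi.single a 1)
              - fderiv ℝ (fun w : Fin n → ℝ => V w a) z (Pi.single b 1)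
              + 2 / (n : ℝ)
                  * (∑ c : Fin n, fderiv ℝ (fun w : Fin n → ℝ => V w c) z (Pi.single c 1))
                  * (if a = b then 1 else 0))) x (Pi.single b 1)) = 0) →
      -- (ii) the boundary conditions on ∂ℝⁿ₊
      (∀ i : Fin n, (i : ℕ) < n - 1 → ∀ x : Fin n → ℝ, x ⟨n - 1, by omega⟩ = 0 →
        fderiv ℝ (fun w : Fin n → ℝ => V w i) x (Pi.single (⟨n - 1, by omega⟩ : Fin n) 1) = 0
          ∧ V x ⟨n - 1, by omega⟩ = 0) →
      -- (iii) the derivative bounds up to order 3 on ℝⁿ₊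
      (∀ k : ℕ, k ≤ 3 → ∀ dirs : Fin k → Fin n, ∀ x : Fin n → ℝ, 0 ≤ x ⟨n - 1, by omega⟩ →
        ‖iteratedFDeriv ℝ k V x (fun m => Pi.single (dirs m) 1)‖
          ≤ C₀ * ∑ i : Fin n, ∑ j : Fin n,
              if (i : ℕ) < n - 1 ∧ (j : ℕ) < n - 1 then
                ∑ m ∈ (H i j).support, |MvPolynomial.coeff m (H i j)|
                  * (ε + Real.sqrt (∑ c : Fin n, x c ^ 2))
                      ^ ((m.sum (fun _ e => e) : ℤ) + 1 - (k : ℤ))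
              else 0) →
    ∀ S : Fin n → Fin n → (Fin n → ℝ) → ℝ,
      (∀ (a b : Fin n) (x : Fin n → ℝ), S a b x =
        fderiv ℝ (fun w : Fin n → ℝ => V w b) x (Pi.single a 1)
          + fderiv ℝ (fun w : Fin n → ℝ => V w a) x (Pi.single b 1)
          - 2 / (n : ℝ)
              * (∑ c : Fin n, fderiv ℝ (fun w : Fin n → ℝ => V w c) x (Pi.single c 1))
              * (if a = b then 1 else 0)) →
    ∀ T : Fin n → Fin n → (Fin n → ℝ) → ℝ,
      (∀ (a b : Fin n) (x : Fin n → ℝ), T a b x = MvPolynomial.eval x (H a b) - S a b x) →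
    ∀ Q : Fin n → Fin n → Fin n → (Fin n → ℝ) → ℝ,
      (∀ (a b c : Fin n) (x : Fin n → ℝ), Q a b c x =
        U x * fderiv ℝ (T a b) x (Pi.single c 1)
          - 2 / ((n : ℝ) - 2) * fderiv ℝ U x (Pi.single a 1) * T b c x
          - 2 / ((n : ℝ) - 2) * fderiv ℝ U x (Pi.single b 1) * T a c x
          + 2 / ((n : ℝ) - 2)
              * (∑ d : Fin n, fderiv ℝ U x (Pi.single d 1) * T a d x)
              * (if b = c then 1 else 0)
          + 2 / ((n : ℝ) - 2)
              * (∑ d : Fin n, fderiv ℝ U x (Pi.single d 1) * T b d x)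
              * (if a = c then 1 else 0)) →
    ∀ θ : ℝ, 0 < θ → θ < 1 → ∀ r : ℝ, ε ≤ r →
      ε ^ (n - 2) * r ^ ((6 : ℤ) - 2 * (n : ℤ))
          * ∫ x in {x : Fin n → ℝ |
              Real.sqrt (∑ a : Fin n,
                (x a - if (a : ℕ) = n - 1 then 3 * r / 2 else 0) ^ 2) < r / 4},
            ∑ a : Fin n, ∑ b : Fin n, ∑ c : Fin n, ∑ d : Fin n,
              (MvPolynomial.eval x (Z a b c d)) ^ 2
        ≤ C / θ * (∫ x in {x : Fin n → ℝ | 0 ≤ x ⟨n - 1, by omega⟩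
              ∧ r ≤ Real.sqrt (∑ a : Fin n, x a ^ 2)
              ∧ Real.sqrt (∑ a : Fin n, x a ^ 2) < 2 * r},
            ∑ a : Fin n, ∑ b : Fin n, ∑ c : Fin n, (Q a b c x) ^ 2)
          + θ * ε ^ (n - 2) * ∑ i : Fin n, ∑ j : Fin n,
              if (i : ℕ) < n - 1 ∧ (j : ℕ) < n - 1 then
                ∑ m ∈ (H i j).support,
                  (MvPolynomial.coeff m (H i j)) ^ 2
                    * r ^ (2 * (m.sum (fun _ e => e) : ℤ) + 2 - (n : ℤ))
              else 0 := by
  obtain ⟨C, hC, curvature_le⟩ := stmt_5_general n hn ((n - 2) / 2) C₀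
  refine ⟨C, hC, fun ε _ hε _ U hU H hdeg symm trace normal _ radial A hA Z hZ _ _ _ _ _ V hV _
    boundary growth S hS T hT Q hQ θ hθ hθ_lt r hεr ↦ ?_⟩
  have hr : 0 < r := hε.trans_le hεr
  have bound := curvature_le ε hε U hU H (fun a b s hs ↦ (hdeg a b s hs).2) symm trace normal
    radial A hA Z hZ V hV boundary growth S hS T hT Q hQ r hεr
  refine bound.trans <| le_add_of_le_of_nonneg ?_ (by positivity)
  gcongr
  exact le_div_self hC.le hθ hθ_lt.le
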